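/- Let 0 < λ ≤ 1 and 0 < α ≤ 1. Then, as T → ∞, the sum of (β − 1/2) over all nontrivial zeros ρ = β + iγ of L(λ,α,·) with |γ| ≤ T (counted with multiplicity) equals (T/(2π))·log(α/√(λ(1−{λ}))) + O(log T), where {λ} denotes the fractional part of λ (so 1 − {λ} = 1 for λ = 1). -/

import Mathlib

/-- The Dirichlet series of the Lerch zeta-function, convergent for `1 < re s`. -/
noncomputable def lerchSeries (lam alp : ℝ) (s : ℂ) : ℂ :=
  ∑' m : ℕ, Complex.exp (2 * Real.pi * Complex.I * lam * m) / ((m : ℂ) + alp) ^ s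

/-- `F` is the analytic continuation of the Lerch zeta-function with parameters `lam`, `alp`:
it is complex differentiable away from `1` and agrees with the Dirichlet series on `1 < re s`. -/
def IsLerch (lam alp : ℝ) (F : ℂ → ℂ) : Prop :=
  (∀ s : ℂ, s ≠ 1 → DifferentiableAt ℂ F s) ∧
  ∀ s : ℂ, 1 < s.re → F s = lerchSeries lam alp s

open scoped Classical

/-- The multiplicity (order of vanishing) of `F` at `z` (junk value `0` if `F` is not
analytic at `z` or vanishes to infinite order). -/
noncomputable def zeroOrder (F : ℂ → ℂ) (z : ℂ) : ℕ :=
  if h : AnalyticAt ℂ F z then (analyticOrderAt F z).toNat else 0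

namespace LerchAux

lemma factor_one (U : Set ℂ) (f : ℂ → ℂ) (hf : AnalyticOnNhd ℂ f U) (ρ : ℂ)
    (hρ : ρ ∈ U) (ho : analyticOrderAt f ρ ≠ ⊤) :
    ∃ g : ℂ → ℂ, AnalyticOnNhd ℂ g U ∧
      (∀ s, f s = (s - ρ) ^ (analyticOrderAt f ρ).toNat * g s) ∧ g ρ ≠ 0 := by
  obtain ⟨h, hh, hh0, hev⟩ := ((hf ρ hρ).analyticOrderAt_ne_top).1 ho
  set n := (analyticOrderAt f ρ).toNat with hn
  have hn' : analyticOrderNatAt f ρ = n := rfl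
  rw [hn'] at hev
  have hne : ∀ s, s ≠ ρ → (s - ρ) ^ n ≠ 0 := fun s hs => pow_ne_zero _ (sub_ne_zero.2 hs)
  refine ⟨fun s => if s = ρ then h ρ else f s / (s - ρ) ^ n, ?_, ?_, by simpa using hh0⟩
  · intro z hz
    by_cases hzρ : z = ρ
    · subst hzρ
      refine hh.congr ?_
      filter_upwards [hev] with s hs
      by_cases h1 : s = z
      · simp [h1]
      · simp only [h1, if_false]
        rw [hs, smul_eq_mul, mul_div_cancel_left₀ _ (hne s h1)]
    · have : AnalyticAt ℂ (fun s => f s / (s - ρ) ^ n) z :=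
        (hf z hz).div ((analyticAt_id.sub analyticAt_const).pow n) (hne z hzρ)
      refine this.congr ?_
      filter_upwards [isOpen_ne.mem_nhds hzρ] with s hs
      simp [show s ≠ ρ from hs]
  · intro s
    by_cases h1 : s = ρ
    · subst h1
      have := hev.self_of_nhds
      simpa using this
    · simp only [h1, if_false]
      rw [mul_div_cancel₀ _ (hne s h1)]

lemma exists_factor (U : Set ℂ) (f : ℂ → ℂ) (hf : AnalyticOnNhd ℂ f U) (Z : Finset ℂ)
    (hZ : ∀ ρ ∈ Z, ρ ∈ U ∧ analyticOrderAt f ρ ≠ ⊤) :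
    ∃ g : ℂ → ℂ, AnalyticOnNhd ℂ g U ∧
      (∀ s, f s = (∏ ρ ∈ Z, (s - ρ) ^ (analyticOrderAt f ρ).toNat) * g s) ∧
      ∀ ρ ∈ Z, g ρ ≠ 0 := by
  induction Z using Finset.induction_on with
  | empty => exact ⟨f, hf, by simp, by simp⟩
  | insert ρ Z hρZ ih =>
    obtain ⟨g, hg, hfg, hg0⟩ := ih (fun r hr => hZ r (Finset.mem_insert_of_mem hr))
    obtain ⟨hρU, hρo⟩ := hZ ρ (Finset.mem_insert_self _ _)
    have hPan : AnalyticAt ℂ (fun s : ℂ => ∏ r ∈ Z, (s - r) ^ (analyticOrderAt f r).toNat) ρ := by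
      apply Finset.analyticAt_fun_prod
      intro r _
      exact (analyticAt_id.sub analyticAt_const).pow _
    have hP0 : analyticOrderAt (fun s : ℂ => ∏ r ∈ Z, (s - r) ^ (analyticOrderAt f r).toNat) ρ = 0 := by
      rw [hPan.analyticOrderAt_eq_zero]
      refine Finset.prod_ne_zero_iff.2 fun r hr => pow_ne_zero _ (sub_ne_zero.2 ?_)
      rintro rfl; exact hρZ hr
    have hord : analyticOrderAt f ρ = analyticOrderAt g ρ := by
      have : f = (fun s : ℂ => ∏ r ∈ Z, (s - r) ^ (analyticOrderAt f r).toNat) * g := by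
        funext s; exact hfg s
      conv_lhs => rw [this]
      rw [analyticOrderAt_mul hPan (hg ρ hρU), hP0, zero_add]
    obtain ⟨k, hk, hgk, hk0⟩ := factor_one U g hg ρ hρU (hord ▸ hρo)
    refine ⟨k, hk, ?_, ?_⟩
    · intro s
      rw [Finset.prod_insert hρZ, hfg s, hgk s, hord]; ring
    · intro r hr
      rcases Finset.mem_insert.1 hr with rfl | hr
      · exact hk0
      · intro h0; apply hg0 r hr; rw [hgk r, h0, mul_zero]

open Complex MeasureTheory intervalIntegral

/-- boundary integral over the rectangle -/
noncomputable def bdry (a b c d : ℝ) (h : ℂ → ℂ) : ℂ :=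
  (∫ x in a..b, h (x + c * I)) - (∫ x in a..b, h (x + d * I))
    + I * (∫ y in c..d, h (b + y * I)) - I * (∫ y in c..d, h (a + y * I))

/-- The four sides -/
def onBdry (a b c d : ℝ) : Set ℂ :=
  {z | z.re ∈ Set.Icc a b ∧ z.im ∈ Set.Icc c d ∧ (z.re = a ∨ z.re = b ∨ z.im = c ∨ z.im = d)}

lemma bdry_ii {a b c d : ℝ} (hab : a ≤ b) (hcd : c ≤ d) {h : ℂ → ℂ}
    (hh : ContinuousOn h (onBdry a b c d)) :
    IntervalIntegrable (fun x : ℝ => h (x + c * I)) volume a b ∧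
    IntervalIntegrable (fun x : ℝ => h (x + d * I)) volume a b ∧
    IntervalIntegrable (fun y : ℝ => h (b + y * I)) volume c d ∧
    IntervalIntegrable (fun y : ℝ => h (a + y * I)) volume c d := by
  refine ⟨?_, ?_, ?_, ?_⟩
  all_goals
    apply ContinuousOn.intervalIntegrable
    first | rw [Set.uIcc_of_le hab] | rw [Set.uIcc_of_le hcd]
    refine hh.comp (by fun_prop) ?_
    intro x hx
    simp only [onBdry, Set.mem_ofPred_eq, Set.mem_Icc] at hx ⊢
    simp [hx, hab, hcd]

lemma bdry_add {a b c d : ℝ} (hab : a ≤ b) (hcd : c ≤ d) {h k : ℂ → ℂ}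
    (hh : ContinuousOn h (onBdry a b c d)) (hk : ContinuousOn k (onBdry a b c d)) :
    bdry a b c d (fun s => h s + k s) = bdry a b c d h + bdry a b c d k := by
  obtain ⟨h1, h2, h3, h4⟩ := bdry_ii hab hcd hh
  obtain ⟨k1, k2, k3, k4⟩ := bdry_ii hab hcd hk
  unfold bdry
  rw [integral_add h1 k1, integral_add h2 k2, integral_add h3 k3, integral_add h4 k4]
  ring

lemma bdry_const_mul {a b c d : ℝ} (r : ℂ) (h : ℂ → ℂ) :
    bdry a b c d (fun s => r * h s) = r * bdry a b c d h := by
  unfold bdry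
  simp only [intervalIntegral.integral_const_mul]
  ring

lemma bdry_congr {a b c d : ℝ} (hab : a ≤ b) (hcd : c ≤ d) {h k : ℂ → ℂ}
    (hk : Set.EqOn h k (onBdry a b c d)) :
    bdry a b c d h = bdry a b c d k := by
  unfold bdry
  have e1 : ∀ y : ℝ, (y = c ∨ y = d) → (∫ x in a..b, h (x + y * I)) = ∫ x in a..b, k (x + y * I) := by
    intro y hy
    apply integral_congr
    intro x hx
    rw [Set.uIcc_of_le hab] at hx
    apply hk
    simp only [onBdry, Set.mem_ofPred_eq, Set.mem_Icc] at hx ⊢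
    rcases hy with rfl | rfl <;> simp [hx, hcd]
  have e2 : ∀ x : ℝ, (x = a ∨ x = b) → (∫ y in c..d, h (x + y * I)) = ∫ y in c..d, k (x + y * I) := by
    intro x hy
    apply integral_congr
    intro y hx
    rw [Set.uIcc_of_le hcd] at hx
    apply hk
    simp only [onBdry, Set.mem_ofPred_eq, Set.mem_Icc] at hx ⊢
    rcases hy with rfl | rfl <;> simp [hx, hab]
  rw [e1 c (by simp), e1 d (by simp), e2 a (by simp), e2 b (by simp)]

lemma bdry_sum {a b c d : ℝ} (hab : a ≤ b) (hcd : c ≤ d) (Z : Finset ℂ) {h : ℂ → ℂ → ℂ}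
    (hh : ∀ r ∈ Z, ContinuousOn (h r) (onBdry a b c d)) :
    bdry a b c d (fun s => ∑ r ∈ Z, h r s) = ∑ r ∈ Z, bdry a b c d (h r) := by
  induction Z using Finset.induction_on with
  | empty => simp [bdry]
  | insert r Z hr ih =>
    have h1 := hh r (Finset.mem_insert_self _ _)
    have h2 := fun q hq => hh q (Finset.mem_insert_of_mem hq)
    simp only [Finset.sum_insert hr]
    rw [bdry_add hab hcd h1 (continuousOn_finsetSum _ h2), ih h2]

lemma bdry_zero {a b c d : ℝ} (hab : a ≤ b) (hcd : c ≤ d) {h : ℂ → ℂ}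
    (hh : DifferentiableOn ℂ h (Set.Icc a b ×ℂ Set.Icc c d)) : bdry a b c d h = 0 := by
  have := Complex.integral_boundary_rect_eq_zero_of_differentiableOn h (⟨a, c⟩ : ℂ) ⟨b, d⟩
    (by simpa [Set.uIcc_of_le hab, Set.uIcc_of_le hcd] using hh)
  simpa [bdry, smul_eq_mul] using this

lemma int_inv_h {a b y : ℝ} {ρ : ℂ} (h : y ≠ ρ.im) :
    ∫ x in a..b, ((x : ℂ) + y * I - ρ)⁻¹ = log (b + y * I - ρ) - log (a + y * I - ρ) := by
  have him : ∀ x : ℝ, ((x : ℂ) + y * I - ρ).im ≠ 0 := by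
    intro x; simpa using sub_ne_zero.2 h
  have hne : ∀ x : ℝ, ((x : ℂ) + y * I - ρ) ≠ 0 := fun x h0 => him x (by simp [h0])
  apply integral_eq_sub_of_hasDerivAt (f := fun x : ℝ => log ((x : ℂ) + y * I - ρ))
  · intro x _
    have h1 : HasDerivAt (fun x : ℝ => (x : ℂ) + y * I - ρ) 1 x := by
      simpa using (((hasDerivAt_id x).ofReal_comp).add_const (y * I)).sub_const ρ
    simpa using h1.clog_real (Or.inr (him x))
  · apply Continuous.intervalIntegrable
    exact Continuous.inv₀ (by fun_prop) hne

lemma int_inv_v {c d x : ℝ} {ρ : ℂ} (h : ρ.re < x) :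
    I * ∫ y in c..d, ((x : ℂ) + y * I - ρ)⁻¹ = log (x + d * I - ρ) - log (x + c * I - ρ) := by
  have him : ∀ y : ℝ, 0 < ((x : ℂ) + y * I - ρ).re := by
    intro x; simpa using h
  have hne : ∀ y : ℝ, ((x : ℂ) + y * I - ρ) ≠ 0 := fun x h0 => (him x).ne' (by simp [h0])
  rw [← intervalIntegral.integral_const_mul]
  apply integral_eq_sub_of_hasDerivAt (f := fun y : ℝ => log ((x : ℂ) + y * I - ρ))
  · intro y _
    have h1 : HasDerivAt (fun y : ℝ => (x : ℂ) + y * I - ρ) I y := by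
      simpa using ((((hasDerivAt_id y).ofReal_comp).mul_const I).const_add (x : ℂ)).sub_const ρ
    simpa [div_eq_mul_inv] using h1.clog_real (Or.inl (him y))
  · apply Continuous.intervalIntegrable
    exact continuous_const.mul (Continuous.inv₀ (by fun_prop) hne)

lemma int_inv_v' {c d x : ℝ} {ρ : ℂ} (h : x < ρ.re) :
    I * ∫ y in c..d, ((x : ℂ) + y * I - ρ)⁻¹ = log (-(x + d * I - ρ)) - log (-(x + c * I - ρ)) := by
  have him : ∀ y : ℝ, 0 < (-((x : ℂ) + y * I - ρ)).re := by
    intro x; simpa using h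
  have hne : ∀ y : ℝ, ((x : ℂ) + y * I - ρ) ≠ 0 := fun x h0 => (him x).ne' (by simp [h0])
  rw [← intervalIntegral.integral_const_mul]
  apply integral_eq_sub_of_hasDerivAt (f := fun y : ℝ => log (-((x : ℂ) + y * I - ρ)))
  · intro y _
    have h1 : HasDerivAt (fun y : ℝ => -((x : ℂ) + y * I - ρ)) (-I) y := by
      have h0 : HasDerivAt (fun y : ℝ => (x : ℂ) + y * I - ρ) I y := by
        simpa using ((((hasDerivAt_id y).ofReal_comp).mul_const I).const_add (x : ℂ)).sub_const ρ
      exact h0.neg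
    have h2 := h1.clog_real (Or.inl (him y))
    rw [neg_div_neg_eq, div_eq_mul_inv] at h2
    exact h2
  · apply Continuous.intervalIntegrable
    exact continuous_const.mul (Continuous.inv₀ (by fun_prop) hne)

lemma log_neg_of_im_pos {z : ℂ} (h : 0 < z.im) : log (-z) = log z - Real.pi * I := by
  apply Complex.ext
  · simp [log_re]
  · simp [log_im, arg_neg_eq_arg_sub_pi_of_im_pos h]

lemma log_neg_of_im_neg {z : ℂ} (h : z.im < 0) : log (-z) = log z + Real.pi * I := by
  apply Complex.ext
  · simp [log_re]
  · simp [log_im, arg_neg_eq_arg_add_pi_of_im_neg h]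

lemma bdry_inv {a b c d : ℝ} {ρ : ℂ} (h1 : a < ρ.re) (h2 : ρ.re < b) (h3 : c < ρ.im)
    (h4 : ρ.im < d) : bdry a b c d (fun s => (s - ρ)⁻¹) = 2 * Real.pi * I := by
  unfold bdry
  rw [int_inv_h h3.ne, int_inv_h h4.ne', int_inv_v h2, int_inv_v' h1,
    log_neg_of_im_pos (z := a + d * I - ρ) (by simpa using h4),
    log_neg_of_im_neg (z := a + c * I - ρ) (by simpa using h3)]
  ring

/-- Argument principle with a linear weight for rectangles. -/
lemma arg_principle {a b c d : ℝ} (hab : a ≤ b) (hcd : c ≤ d) {U : Set ℂ}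
    (hU : Set.Icc a b ×ℂ Set.Icc c d ⊆ U) {f : ℂ → ℂ} (hf : AnalyticOnNhd ℂ f U)
    (Z : Finset ℂ) (hZ : ∀ ρ ∈ Z, a < ρ.re ∧ ρ.re < b ∧ c < ρ.im ∧ ρ.im < d)
    (hZo : ∀ ρ ∈ Z, analyticOrderAt f ρ ≠ ⊤)
    (hZ0 : ∀ s ∈ Set.Icc a b ×ℂ Set.Icc c d, f s = 0 → s ∈ Z) (κ : ℂ) :
    bdry a b c d (fun s => (s - κ) * logDeriv f s) =
      2 * Real.pi * I * ∑ ρ ∈ Z, ((analyticOrderAt f ρ).toNat : ℂ) * (ρ - κ) := by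
  have hZR : ∀ ρ ∈ Z, ρ ∈ Set.Icc a b ×ℂ Set.Icc c d := fun ρ hρ => by
    obtain ⟨h1, h2, h3, h4⟩ := hZ ρ hρ
    exact ⟨⟨h1.le, h2.le⟩, ⟨h3.le, h4.le⟩⟩
  obtain ⟨g, hg, hfg, hg0⟩ := exists_factor U f hf Z (fun ρ hρ => ⟨hU (hZR ρ hρ), hZo ρ hρ⟩)
  have hgne : ∀ s ∈ Set.Icc a b ×ℂ Set.Icc c d, g s ≠ 0 := by
    intro s hs h0
    have : f s = 0 := by rw [hfg s, h0, mul_zero]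
    exact hg0 s (hZ0 s hs this) h0
  have hbR : onBdry a b c d ⊆ Set.Icc a b ×ℂ Set.Icc c d := fun s hs => ⟨hs.1, hs.2.1⟩
  have hbZ : ∀ s ∈ onBdry a b c d, ∀ ρ ∈ Z, s - ρ ≠ 0 := by
    intro s hs ρ hρ h0
    obtain rfl := sub_eq_zero.1 h0
    obtain ⟨h1, h2, h3, h4⟩ := hZ s hρ
    rcases hs.2.2 with h | h | h | h <;> linarith
  have hdg : DifferentiableOn ℂ (fun s => (s - κ) * logDeriv g s) (Set.Icc a b ×ℂ Set.Icc c d) := by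
    intro s hs
    have h1 := hg s (hU hs)
    have : AnalyticAt ℂ (logDeriv g) s := h1.deriv.div h1 (hgne s hs)
    exact ((differentiableAt_id.sub_const κ).mul this.differentiableAt).differentiableWithinAt
  have hci : ∀ ρ ∈ Z, ContinuousOn (fun s : ℂ => (s - ρ)⁻¹) (onBdry a b c d) := by
    intro ρ hρ
    exact ContinuousOn.inv₀ (by fun_prop) (fun s hs => hbZ s hs ρ hρ)
  have key : Set.EqOn (fun s => (s - κ) * logDeriv f s)
      (fun s => (∑ ρ ∈ Z, (((analyticOrderAt f ρ).toNat : ℂ) +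
        (((analyticOrderAt f ρ).toNat : ℂ) * (ρ - κ)) * (s - ρ)⁻¹)) + (s - κ) * logDeriv g s)
      (onBdry a b c d) := by
    intro s hs
    have hff : f = fun s => (∏ ρ ∈ Z, (s - ρ) ^ (analyticOrderAt f ρ).toNat) * g s := funext hfg
    have hP : (∏ ρ ∈ Z, (s - ρ) ^ (analyticOrderAt f ρ).toNat) ≠ 0 :=
      Finset.prod_ne_zero_iff.2 fun ρ hρ => pow_ne_zero _ (hbZ s hs ρ hρ)
    have hld : logDeriv f s = (∑ ρ ∈ Z, ((analyticOrderAt f ρ).toNat : ℂ) * (s - ρ)⁻¹)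
        + logDeriv g s := by
      conv_lhs => rw [hff]
      rw [logDeriv_mul s hP (hgne s (hbR hs)) (by fun_prop) (hg s (hU (hbR hs))).differentiableAt]
      congr 1
      rw [logDeriv_prod (f := fun ρ s => (s - ρ) ^ (analyticOrderAt f ρ).toNat)
        (fun ρ hρ => pow_ne_zero _ (hbZ s hs ρ hρ)) (fun ρ hρ => by fun_prop)]
      refine Finset.sum_congr rfl fun ρ hρ => ?_
      rw [logDeriv_fun_pow (by fun_prop)]
      congr 1
      simp [logDeriv_apply, deriv_sub_const]
    simp only
    rw [hld, mul_add, Finset.mul_sum]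
    congr 1
    refine Finset.sum_congr rfl fun ρ hρ => ?_
    have := hbZ s hs ρ hρ
    field_simp
    ring
  rw [bdry_congr hab hcd key, bdry_add hab hcd _ (hdg.continuousOn.mono hbR), bdry_zero hab hcd hdg,
    add_zero, bdry_sum hab hcd Z, Finset.mul_sum]
  · refine Finset.sum_congr rfl fun ρ hρ => ?_
    obtain ⟨h1, h2, h3, h4⟩ := hZ ρ hρ
    rw [bdry_add (h := fun _ => ((analyticOrderAt f ρ).toNat : ℂ))
      (k := fun s => ((analyticOrderAt f ρ).toNat : ℂ) * (ρ - κ) * (s - ρ)⁻¹)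
      hab hcd continuousOn_const (continuousOn_const.mul (hci ρ hρ)),
      bdry_const_mul, bdry_inv h1 h2 h3 h4, bdry_zero hab hcd (differentiableOn_const _)]
    ring
  · intro ρ hρ
    exact continuousOn_const.add (continuousOn_const.mul (hci ρ hρ))
  · exact continuousOn_finsetSum _ fun ρ hρ =>
      continuousOn_const.add (continuousOn_const.mul (hci ρ hρ))

end LerchAux

namespace LerchAux
open Complex MeasureTheory intervalIntegral Metric

lemma finite_zeros {K : Set ℂ} (hK : IsCompact K) {f : ℂ → ℂ} (hf : AnalyticOnNhd ℂ f K)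
    (ho : ∀ z ∈ K, analyticOrderAt f z ≠ ⊤) : {z ∈ K | f z = 0}.Finite := by
  by_contra hinf
  obtain ⟨z, hzK, hz⟩ := Set.Infinite.exists_accPt_of_subset_isCompact (K := K) hinf hK
    (fun z hz => hz.1)
  rcases (hf z hzK).eventually_eq_zero_or_eventually_ne_zero with h | h
  · exact ho z hzK (analyticOrderAt_eq_top.2 h)
  · rw [accPt_iff_frequently_nhdsNE] at hz
    obtain ⟨w, hw1, hw2⟩ := (hz.and_eventually h).exists
    exact hw2 hw1.2

lemma logDeriv_bound {g : ℂ → ℂ} {c : ℂ} {Λ : ℝ} (hΛ : 0 < Λ)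
    (hg : AnalyticOnNhd ℂ g (ball c (7/2))) (hg0 : ∀ s ∈ ball c (7/2), g s ≠ 0)
    (hb : ∀ s ∈ ball c (7/2), ‖g s‖ ≤ Real.exp Λ * ‖g c‖) {z : ℂ} (hz : z ∈ closedBall c 3) :
    ‖logDeriv g z‖ ≤ 104 * Λ := by
  have hcc : c ∈ ball c (7/2 : ℝ) := mem_ball_self (by norm_num)
  have hld : DifferentiableOn ℂ (logDeriv g) (ball c (7/2)) := fun s hs =>
    ((hg s hs).deriv.div (hg s hs) (hg0 s hs)).differentiableAt.differentiableWithinAt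
  obtain ⟨h, hh0, hh⟩ := (hld.isExactOn_ball).with_val_at c 0
  have hgh : ∀ s ∈ ball c (7/2 : ℝ), g s = g c * exp (h s) := by
    have hd : ∀ s ∈ ball c (7/2 : ℝ), HasDerivAt (fun s => g s * exp (-h s)) 0 s := by
      intro s hs
      have h1 := ((hg s hs).differentiableAt.hasDerivAt).mul ((hh s hs).neg.cexp)
      have e : deriv g s * exp ((-h) s) + g s * (exp ((-h) s) * -logDeriv g s) = 0 := by
        have := hg0 s hs
        rw [logDeriv_apply]
        field_simp
        ring
      exact e ▸ h1
    intro s hs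
    have := (convex_ball c (7/2 : ℝ)).is_const_of_fderivWithin_eq_zero (𝕜 := ℂ)
      (f := fun s => g s * exp (-h s))
      (fun s hs => (hd s hs).differentiableAt.differentiableWithinAt)
      (fun s hs => by
        rw [fderivWithin_of_isOpen isOpen_ball hs]
        have := (hd s hs).hasFDerivAt.fderiv
        rw [this]; ext; simp) hs hcc
    simp only [hh0, neg_zero, exp_zero, mul_one] at this
    rw [← this, mul_assoc, ← exp_add]; simp
  have hre : ∀ s ∈ ball c (7/2 : ℝ), (h s).re ≤ Λ := by
    intro s hs
    have h1 := hb s hs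
    rw [hgh s hs, norm_mul, norm_exp, mul_comm] at h1
    have h2 : 0 < ‖g c‖ := norm_pos_iff.2 (hg0 c hcc)
    have h3 := le_of_mul_le_mul_right h1 h2
    exact Real.exp_le_exp.1 h3
  have hhb : ∀ s ∈ closedBall c (13/4 : ℝ), ‖h s‖ ≤ 26 * Λ := by
    intro s hs
    rw [mem_closedBall, dist_eq_norm] at hs
    have := Complex.borelCaratheodory_zero (f := fun w => h (c + w)) (R := 7/2) (z := s - c) hΛ
      (by
        intro w hw
        have hw' : c + w ∈ ball c (7/2 : ℝ) := by simpa [mem_ball, dist_eq_norm] using hw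
        have h1 : DifferentiableAt ℂ h (c + w) := (hh _ hw').differentiableAt
        have h2 : DifferentiableAt ℂ (fun w => c + w) w := by fun_prop
        exact (DifferentiableAt.comp (g := h) w h1 h2).differentiableWithinAt)
      (by
        intro w hw
        exact hre _ (by simpa [mem_ball, dist_eq_norm] using hw))
      (by norm_num) (by simp [mem_ball]; linarith) (by simpa using hh0)
    simp only [add_sub_cancel] at this
    refine this.trans ?_
    rw [div_le_iff₀ (by linarith)]
    nlinarith [norm_nonneg (s - c)]
  rw [mem_closedBall, dist_eq_norm] at hz
  have hzb : z ∈ ball c (7/2 : ℝ) := by rw [mem_ball, dist_eq_norm]; linarith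
  have hsub : closedBall z (1/4 : ℝ) ⊆ closedBall c (13/4 : ℝ) :=
    closedBall_subset_closedBall' (by rw [dist_eq_norm]; linarith)
  have hsub2 : closedBall c (13/4 : ℝ) ⊆ ball c (7/2 : ℝ) := closedBall_subset_ball (by norm_num)
  have := norm_deriv_le_of_forall_mem_sphere_norm_le (f := h) (c := z) (R := 1/4) (C := 26 * Λ)
    (by norm_num)
    (DifferentiableOn.diffContOnCl (by
      rw [closure_ball z (by norm_num)]
      exact fun s hs => (hh s (hsub2 (hsub hs))).differentiableAt.differentiableWithinAt))
    (fun s hs => hhb s (hsub (sphere_subset_closedBall hs)))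
  rw [(hh z hzb).deriv] at this
  linarith

lemma int_abs_im_inv {a b y : ℝ} (hab : a ≤ b) {ρ : ℂ} (h : ρ.im ≠ y) :
    IntervalIntegrable (fun x : ℝ => |(((x : ℂ) + y * I - ρ)⁻¹).im|) volume a b ∧
    ∫ x in a..b, |(((x : ℂ) + y * I - ρ)⁻¹).im| ≤ Real.pi := by
  have hne : ∀ x : ℝ, ((x : ℂ) + y * I - ρ) ≠ 0 := fun x h0 => by
    have : ((x : ℂ) + y * I - ρ).im = 0 := by simp [h0]
    simp at this; exact h (by linarith)
  have hc : Continuous (fun x : ℝ => ((x : ℂ) + y * I - ρ)⁻¹) :=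
    Continuous.inv₀ (by fun_prop) hne
  have hc2 : Continuous (fun x : ℝ => (((x : ℂ) + y * I - ρ)⁻¹).im) := continuous_im.comp hc
  refine ⟨hc2.abs.intervalIntegrable _ _, ?_⟩
  have hintg0 : ∫ x in a..b, (((x : ℂ) + y * I - ρ)⁻¹).im =
      (log (b + y * I - ρ)).im - (log (a + y * I - ρ)).im := by
    rw [← sub_im, ← int_inv_h h.symm]
    have := intervalIntegral.intervalIntegral_im (hc.intervalIntegrable (μ := volume) a b)
    simpa using this
  have him : ∀ x : ℝ, (((x : ℂ) + y * I - ρ)⁻¹).im = -(y - ρ.im) / normSq ((x : ℂ) + y * I - ρ) := by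
    intro x; rw [inv_im]; simp
  have hnn : ∀ x : ℝ, 0 < normSq ((x : ℂ) + y * I - ρ) := fun x => normSq_pos.2 (hne x)
  simp only [log_im] at hintg0
  rcases lt_or_gt_of_ne h with hlt | hgt
  · have : ∀ x : ℝ, |(((x : ℂ) + y * I - ρ)⁻¹).im| = -(((x : ℂ) + y * I - ρ)⁻¹).im := fun x =>
      abs_of_nonpos (by rw [him]; exact div_nonpos_of_nonpos_of_nonneg (by linarith) (hnn x).le)
    simp only [this, intervalIntegral.integral_neg, hintg0]
    have h1 := arg_le_pi (↑a + ↑y * I - ρ)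
    have h2 : 0 ≤ arg (↑b + ↑y * I - ρ) := arg_nonneg_iff.2 (by simp; linarith)
    linarith
  · have : ∀ x : ℝ, |(((x : ℂ) + y * I - ρ)⁻¹).im| = (((x : ℂ) + y * I - ρ)⁻¹).im := fun x =>
      abs_of_nonneg (by rw [him]; exact div_nonneg (by linarith) (hnn x).le)
    simp only [this, hintg0]
    have h1 := neg_pi_lt_arg (↑a + ↑y * I - ρ)
    have h2 : arg (↑b + ↑y * I - ρ) < 0 := arg_neg_iff.2 (by simp; linarith)
    linarith

/-- Bound for the horizontal integral. -/
lemma horiz_bound {f : ℂ → ℂ} {c : ℂ} {M δ κ : ℝ} (hδ : 0 < δ)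
    (hf : AnalyticOnNhd ℂ f (closedBall c 11)) (hM : ∀ s ∈ closedBall c 11, ‖f s‖ ≤ M)
    (hc : δ ≤ ‖f c‖) (hz : ∀ s ∈ closedBall c (7/2), f s = 0 → s.im ≠ c.im)
    (hκ : ∀ σ ∈ Set.Icc (c.re - 3) c.re, |σ - κ| ≤ 3/2) :
    |∫ σ in (c.re - 3)..c.re, (σ - κ) * (logDeriv f (σ + c.im * I)).im|
      ≤ 500 * (Real.log (M / δ) + 1) := by
  have hc11 : c ∈ closedBall c (11 : ℝ) := mem_closedBall_self (by norm_num)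
  have hsub : closedBall c (7/2 : ℝ) ⊆ closedBall c 11 := closedBall_subset_closedBall (by norm_num)
  have hfc : f c ≠ 0 := fun h => by rw [h, norm_zero] at hc; linarith
  have ho : ∀ z ∈ closedBall c (11 : ℝ), analyticOrderAt f z ≠ ⊤ := by
    intro z hz
    refine hf.analyticOrderAt_ne_top_of_isPreconnected (convex_closedBall c 11).isPreconnected
      hc11 hz ?_
    rw [((hf c hc11).analyticOrderAt_eq_zero).2 hfc]; simp
  have hfin := finite_zeros (isCompact_closedBall c (7/2 : ℝ)) (fun z hz => hf z (hsub hz))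
    (fun z hz => ho z (hsub hz))
  set Z := hfin.toFinset with hZdef
  have hZmem : ∀ ρ, ρ ∈ Z ↔ ρ ∈ closedBall c (7/2 : ℝ) ∧ f ρ = 0 := fun ρ => by
    rw [hZdef, Set.Finite.mem_toFinset]; rfl
  obtain ⟨g, hg, hfg, hg0⟩ := exists_factor _ f hf Z
    (fun ρ hρ => ⟨hsub ((hZmem ρ).1 hρ).1, ho ρ (hsub ((hZmem ρ).1 hρ).1)⟩)
  set m : ℂ → ℕ := fun ρ => (analyticOrderAt f ρ).toNat with hm
  set n := ∑ ρ ∈ Z, m ρ with hn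
  have hMpos : 0 < M := hδ.trans_le (hc.trans (hM c hc11))
  -- bound of g
  have hgsph : ∀ s ∈ sphere c (11 : ℝ), ‖g s‖ ≤ M / 7 ^ n := by
    intro s hs
    rw [le_div_iff₀ (by positivity)]
    refine le_trans ?_ (hM s (sphere_subset_closedBall hs))
    rw [hfg s, norm_mul, mul_comm]
    refine mul_le_mul_of_nonneg_right ?_ (norm_nonneg _)
    rw [norm_prod, hn, ← Finset.prod_pow_eq_pow_sum]
    refine Finset.prod_le_prod (fun _ _ => by positivity) fun ρ hρ => ?_
    rw [norm_pow]
    refine pow_le_pow_left₀ (by norm_num) ?_ _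
    have h1 := ((hZmem ρ).1 hρ).1
    rw [mem_closedBall, dist_eq_norm] at h1
    rw [mem_sphere, dist_eq_norm] at hs
    have h2 : s - ρ = (s - c) - (ρ - c) := by ring
    have h3 := norm_sub_norm_le (s - c) (ρ - c)
    rw [← h2, hs] at h3
    linarith
  have hgb : ∀ s ∈ closedBall c (11 : ℝ), ‖g s‖ ≤ M / 7 ^ n := by
    intro s hs
    refine norm_le_of_forall_mem_frontier_norm_le (U := ball c 11) isBounded_ball
      (DifferentiableOn.diffContOnCl ?_) ?_ ?_
    · rw [closure_ball c (by norm_num)]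
      exact fun s hs => (hg s hs).differentiableAt.differentiableWithinAt
    · rw [frontier_ball c (by norm_num)]; exact hgsph
    · rw [closure_ball c (by norm_num)]; exact hs
  have hgc : δ / (7/2) ^ n ≤ ‖g c‖ := by
    rw [div_le_iff₀ (by positivity)]
    refine hc.trans ?_
    rw [hfg c, norm_mul, mul_comm]
    refine mul_le_mul_of_nonneg_left ?_ (norm_nonneg _)
    rw [norm_prod, hn, ← Finset.prod_pow_eq_pow_sum]
    refine Finset.prod_le_prod (fun _ _ => by positivity) fun ρ hρ => ?_
    rw [norm_pow]
    refine pow_le_pow_left₀ (by positivity) ?_ _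
    have h1 := ((hZmem ρ).1 hρ).1
    rw [mem_closedBall, dist_comm, dist_eq_norm] at h1
    exact h1
  have hpow : (7:ℝ) ^ n = 2 ^ n * (7/2) ^ n := by rw [← mul_pow]; norm_num
  have h2n : (2:ℝ) ^ n ≤ M / δ := by
    have h1 := hgc.trans (hgb c hc11)
    rw [div_le_div_iff₀ (by positivity) (by positivity), hpow] at h1
    rw [le_div_iff₀ hδ]
    have : (0:ℝ) < (7/2) ^ n := by positivity
    nlinarith
  have hMδ : 1 ≤ M / δ := le_trans (one_le_pow₀ (by norm_num)) h2n
  have hlog0 : 0 ≤ Real.log (M / δ) := Real.log_nonneg hMδ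
  set Λ := Real.log (M / δ) + 1 with hΛ
  have hΛpos : 0 < Λ := by linarith
  have hnΛ : (n : ℝ) ≤ 2 * Λ := by
    have h1 := Real.log_le_log (by positivity) h2n
    rw [Real.log_pow] at h1
    have := Real.log_two_gt_d9
    have hn0 : (0:ℝ) ≤ n := Nat.cast_nonneg n
    nlinarith
  have hgne : ∀ s ∈ closedBall c (7/2 : ℝ), g s ≠ 0 := by
    intro s hs h0
    have : f s = 0 := by rw [hfg s, h0, mul_zero]
    exact hg0 s ((hZmem s).2 ⟨hs, this⟩) h0
  have hb7 : ball c (7/2 : ℝ) ⊆ closedBall c (7/2) := ball_subset_closedBall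
  have hldg : ∀ z ∈ closedBall c (3:ℝ), ‖logDeriv g z‖ ≤ 104 * Λ := by
    intro z hz
    refine logDeriv_bound hΛpos (fun s hs => hg s (hsub (hb7 hs))) (fun s hs => hgne s (hb7 hs)) ?_ hz
    intro s hs
    refine (hgb s (hsub (hb7 hs))).trans ?_
    have h1 : M / δ ≤ Real.exp Λ := by
      rw [hΛ, Real.exp_add, Real.exp_log (by positivity)]
      have := Real.add_one_le_exp (1:ℝ)
      nlinarith
    calc M / 7 ^ n ≤ M / (7/2) ^ n := by
            apply div_le_div_of_nonneg_left hMpos.le (by positivity)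
            exact pow_le_pow_left₀ (by norm_num) (by norm_num) _
      _ = (M / δ) * (δ / (7/2)^n) := by field_simp
      _ ≤ Real.exp Λ * ‖g c‖ := by gcongr
  have hseg : ∀ σ ∈ Set.Icc (c.re - 3) c.re, ((σ : ℂ) + c.im * I) ∈ closedBall c (3:ℝ) := by
    intro σ hσ
    rw [mem_closedBall, dist_eq_norm]
    have : (σ : ℂ) + c.im * I - c = ((σ - c.re : ℝ) : ℂ) := by
      apply Complex.ext <;> simp
    rw [this, norm_real, Real.norm_eq_abs, abs_le]
    constructor <;> linarith [hσ.1, hσ.2]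
  have h37 : closedBall c (3:ℝ) ⊆ closedBall c (7/2) := closedBall_subset_closedBall (by norm_num)
  have hpt : ∀ σ ∈ Set.Icc (c.re - 3) c.re,
      ‖(σ - κ) * (logDeriv f (σ + c.im * I)).im‖ ≤
        3/2 * ((∑ ρ ∈ Z, (m ρ : ℝ) * |(((σ : ℂ) + c.im * I - ρ)⁻¹).im|) + 104 * Λ) := by
    intro σ hσ
    set s : ℂ := (σ : ℂ) + c.im * I with hs
    have hs3 := hseg σ hσ
    have hsZ : ∀ ρ ∈ Z, s - ρ ≠ 0 := by
      intro ρ hρ h0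
      have h1 := (hZmem ρ).1 hρ
      apply hz ρ h1.1 h1.2
      rw [← sub_eq_zero.1 h0]; simp [hs]
    have hP : (∏ ρ ∈ Z, (s - ρ) ^ (analyticOrderAt f ρ).toNat) ≠ 0 :=
      Finset.prod_ne_zero_iff.2 fun ρ hρ => pow_ne_zero _ (hsZ ρ hρ)
    have hff : f = fun s => (∏ ρ ∈ Z, (s - ρ) ^ (analyticOrderAt f ρ).toNat) * g s := funext hfg
    have hld : logDeriv f s = (∑ ρ ∈ Z, (m ρ : ℂ) * (s - ρ)⁻¹) + logDeriv g s := by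
      conv_lhs => rw [hff]
      rw [logDeriv_mul s hP (hgne s (h37 hs3)) (by fun_prop)
        (hg s (hsub (h37 hs3))).differentiableAt]
      congr 1
      rw [logDeriv_prod (f := fun ρ s => (s - ρ) ^ (analyticOrderAt f ρ).toNat)
        (fun ρ hρ => pow_ne_zero _ (hsZ ρ hρ)) (fun ρ hρ => by fun_prop)]
      refine Finset.sum_congr rfl fun ρ hρ => ?_
      rw [logDeriv_fun_pow (by fun_prop)]
      congr 1
      simp [logDeriv_apply]
    rw [norm_mul, Real.norm_eq_abs, Real.norm_eq_abs]
    refine mul_le_mul (hκ σ hσ) ?_ (abs_nonneg _) (by norm_num)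
    rw [hld, add_im, im_sum]
    refine (abs_add_le _ _).trans (add_le_add ?_ ((abs_im_le_norm _).trans (hldg s hs3)))
    refine (Finset.abs_sum_le_sum_abs _ _).trans (Finset.sum_le_sum fun ρ _ => ?_)
    have : ((m ρ : ℂ) * (s - ρ)⁻¹).im = (m ρ : ℝ) * ((s - ρ)⁻¹).im := by
      simp [mul_im]
    rw [this, abs_mul, Nat.abs_cast]
  have hle : c.re - 3 ≤ c.re := by linarith
  have hII : ∀ ρ ∈ Z, IntervalIntegrable
      (fun σ : ℝ => (m ρ : ℝ) * |(((σ : ℂ) + c.im * I - ρ)⁻¹).im|) volume (c.re - 3) c.re :=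
    fun ρ hρ => (int_abs_im_inv hle (hz ρ ((hZmem ρ).1 hρ).1 ((hZmem ρ).1 hρ).2)).1.const_mul _
  have hIS : IntervalIntegrable (fun σ : ℝ => ∑ ρ ∈ Z, (m ρ : ℝ) * |(((σ : ℂ) + c.im * I - ρ)⁻¹).im|)
      volume (c.re - 3) c.re := by
    have := IntervalIntegrable.sum Z hII
    have e : (∑ ρ ∈ Z, fun σ : ℝ => (m ρ : ℝ) * |(((σ : ℂ) + c.im * I - ρ)⁻¹).im|) =
        (fun σ : ℝ => ∑ ρ ∈ Z, (m ρ : ℝ) * |(((σ : ℂ) + c.im * I - ρ)⁻¹).im|) := by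
      funext σ; simp
    rwa [e] at this
  have hmain := intervalIntegral.norm_integral_le_of_norm_le (μ := volume) hle
    (f := fun σ : ℝ => (σ - κ) * (logDeriv f (σ + c.im * I)).im)
    (g := fun σ : ℝ => 3/2 * ((∑ ρ ∈ Z, (m ρ : ℝ) * |(((σ : ℂ) + c.im * I - ρ)⁻¹).im|) + 104 * Λ))
    (Filter.Eventually.of_forall fun σ hσ => hpt σ ⟨hσ.1.le, hσ.2⟩)
    ((hIS.add (_root_.intervalIntegrable_const (c := 104 * Λ))).const_mul _)
  rw [Real.norm_eq_abs] at hmain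
  refine hmain.trans ?_
  rw [intervalIntegral.integral_const_mul, intervalIntegral.integral_add hIS (_root_.intervalIntegrable_const),
    intervalIntegral.integral_finsetSum hII, intervalIntegral.integral_const]
  have hsum : ∑ ρ ∈ Z, ∫ σ in (c.re - 3)..c.re, (m ρ : ℝ) * |(((σ : ℂ) + c.im * I - ρ)⁻¹).im|
      ≤ n * Real.pi := by
    rw [hn]; push_cast; rw [Finset.sum_mul]
    refine Finset.sum_le_sum fun ρ hρ => ?_
    rw [intervalIntegral.integral_const_mul]
    exact mul_le_mul_of_nonneg_left
      (int_abs_im_inv hle (hz ρ ((hZmem ρ).1 hρ).1 ((hZmem ρ).1 hρ).2)).2 (Nat.cast_nonneg _)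
  have hpi := Real.pi_lt_d2
  have hn0 : (0:ℝ) ≤ n := Nat.cast_nonneg n
  have : (n:ℝ) * Real.pi ≤ 7 * Λ := by nlinarith
  simp only [smul_eq_mul]
  nlinarith

end LerchAux

namespace LerchAux
open Complex MeasureTheory intervalIntegral Metric

/-- ratio `a/(m+1+a)` -/
noncomputable def rr (a : ℝ) (m : ℕ) : ℝ := a / (m + 1 + a)

lemma rr_pos {a : ℝ} (ha : 0 < a) (m : ℕ) : 0 < rr a m := by unfold rr; positivity

lemma rr_lt_one {a : ℝ} (ha : 0 < a) (m : ℕ) : rr a m < 1 := by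
  unfold rr; rw [div_lt_one (by positivity)]
  have : (0:ℝ) ≤ m := Nat.cast_nonneg m
  linarith

lemma rr_le {a : ℝ} (ha : 0 < a) (m : ℕ) : rr a m ≤ rr a 0 := by
  unfold rr
  apply div_le_div_of_nonneg_left ha.le (by positivity)
  push_cast
  have : (0:ℝ) ≤ m := Nat.cast_nonneg m
  linarith

lemma summable_rr {a x : ℝ} (ha : 0 < a) (hx : 1 < x) : Summable fun m => rr a m ^ x := by
  have h1 : Summable fun m : ℕ => a ^ x * (1 / ((m + 1 : ℕ) : ℝ) ^ x) :=
    ((summable_nat_add_iff 1).2 (Real.summable_one_div_nat_rpow.2 hx)).mul_left _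
  refine Summable.of_nonneg_of_le (fun m => (Real.rpow_pos_of_pos (rr_pos ha m) _).le) (fun m => ?_) h1
  unfold rr
  rw [Real.div_rpow ha.le (by positivity), div_eq_mul_one_div]
  gcongr
  push_cast; linarith

lemma tsum_rr_lt {a : ℝ} (ha : 0 < a) : ∑' m, rr a m ^ (1 + a) < 1 := by
  set g : ℕ → ℝ := fun m => (a / (m + a)) ^ a with hg
  have hstep : ∀ m : ℕ, rr a m ^ (1 + a) < g m - g (m + 1) := by
    intro m
    have hm : (0:ℝ) ≤ m := Nat.cast_nonneg m
    have hd : ∀ x : ℝ, 0 ≤ x → HasDerivAt (fun x : ℝ => a ^ a * (x + a) ^ (-a))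
        (a ^ a * (-a * (x + a) ^ (-a - 1))) x := by
      intro x hx
      have := ((hasDerivAt_id x).add_const a).rpow_const (p := -a) (Or.inl (by simp; linarith))
      exact (this.const_mul (a ^ a)).congr_deriv (by simp only [id]; ring)
    obtain ⟨ξ, hξ, he⟩ := exists_hasDerivAt_eq_slope (fun x : ℝ => a ^ a * (x + a) ^ (-a)) _
      (show (m:ℝ) < m + 1 by linarith)
      (fun x hx => (hd x (hm.trans hx.1)).continuousAt.continuousWithinAt)
      (fun x hx => hd x (hm.trans hx.1.le))
    have hG : ∀ x : ℝ, 0 ≤ x → a ^ a * (x + a) ^ (-a) = (a / (x + a)) ^ a := by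
      intro x hx
      rw [Real.div_rpow ha.le (by linarith), Real.rpow_neg (by linarith), div_eq_mul_inv]
    simp only [hG m hm, hG (m+1) (by linarith)] at he
    have : g m - g (m+1) = a ^ (1 + a) * (ξ + a) ^ (-(1 + a)) := by
      simp only [hg]; push_cast
      have h3 : (-(1+a)) = -a - 1 := by ring
      have h4 : a ^ (1 + a) = a * a ^ a := by rw [Real.rpow_add ha, Real.rpow_one]
      rw [h3, h4]
      simp only [add_sub_cancel_left, div_one] at he
      linarith
    rw [this]
    unfold rr
    rw [Real.div_rpow ha.le (by positivity), div_eq_mul_inv, ← Real.rpow_neg (by positivity)]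
    apply mul_lt_mul_of_pos_left _ (by positivity)
    apply Real.rpow_lt_rpow_of_neg (by linarith [hξ.1]) (by linarith [hξ.2]) (by linarith)
  have hlim : Filter.Tendsto g Filter.atTop (nhds 0) := by
    have h1 : Filter.Tendsto (fun m : ℕ => a / ((m:ℝ) + a)) Filter.atTop (nhds 0) :=
      Filter.Tendsto.const_div_atTop
        (Filter.tendsto_atTop_add_const_right _ _ tendsto_natCast_atTop_atTop) _
    have := h1.rpow_const (p := a) (Or.inr ha.le)
    rwa [Real.zero_rpow ha.ne'] at this
  have hsum : HasSum (fun m => g m - g (m+1)) 1 := by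
    rw [hasSum_iff_tendsto_nat_of_nonneg]
    · simp only [Finset.sum_range_sub']
      have : g 0 = 1 := by simp [hg, ha.ne']
      rw [this]
      simpa using hlim.const_sub 1
    · intro m; exact ((Real.rpow_pos_of_pos (rr_pos ha m) _).trans (hstep m)).le
  refine lt_of_lt_of_eq ?_ hsum.tsum_eq
  exact Summable.tsum_lt_tsum (i := 0) (fun m => (hstep m).le) (hstep 0)
    (summable_rr ha (by linarith)) hsum.summable

/-- The tail Dirichlet series. -/
noncomputable def DD (μ a : ℝ) (s : ℂ) : ℂ :=
  ∑' m : ℕ, exp (2 * Real.pi * I * μ * (m + 1 : ℕ)) * (rr a m : ℂ) ^ s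

lemma norm_exp_aux (μ : ℝ) (m : ℕ) : ‖exp (2 * Real.pi * I * μ * m)‖ = 1 := by
  have : (2 * Real.pi * I * μ * m : ℂ) = ((2 * Real.pi * μ * m : ℝ) : ℂ) * I := by push_cast; ring
  rw [this, norm_exp_ofReal_mul_I]

lemma norm_DDterm {a : ℝ} (ha : 0 < a) (μ : ℝ) (s : ℂ) (m : ℕ) :
    ‖exp (2 * Real.pi * I * μ * (m + 1 : ℕ)) * (rr a m : ℂ) ^ s‖ = rr a m ^ s.re := by
  rw [norm_mul, norm_exp_aux, one_mul, norm_cpow_eq_rpow_re_of_pos (rr_pos ha m)]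

lemma DD_summable {a : ℝ} (ha : 0 < a) (μ : ℝ) {s : ℂ} (hs : 1 < s.re) :
    Summable fun m : ℕ => exp (2 * Real.pi * I * μ * (m + 1 : ℕ)) * (rr a m : ℂ) ^ s := by
  refine Summable.of_norm ?_
  simp only [norm_DDterm ha]
  exact summable_rr ha hs

lemma lerchSeries_eq {a : ℝ} (ha : 0 < a) (μ : ℝ) {s : ℂ} (hs : 1 < s.re) :
    lerchSeries μ a s = (a : ℂ) ^ (-s) * (1 + DD μ a s) := by
  have key : ∀ m : ℕ, exp (2 * Real.pi * I * μ * (m + 1 : ℕ)) / (((m + 1 : ℕ) : ℂ) + a) ^ s =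
      (a : ℂ) ^ (-s) * (exp (2 * Real.pi * I * μ * (m + 1 : ℕ)) * (rr a m : ℂ) ^ s) := by
    intro m
    have h1 : (rr a m : ℂ) ^ s = (a : ℂ) ^ s / (((m + 1 : ℕ) : ℂ) + a) ^ s := by
      have : (((m + 1 : ℕ) : ℂ) + a) = (((m + 1 : ℝ) + a : ℝ) : ℂ) := by push_cast; ring
      rw [this]; unfold rr
      rw [ofReal_div, div_cpow_ofReal_nonneg ha.le (by positivity)]
    have h2 : (a : ℂ) ^ s ≠ 0 := by
      rw [Ne, cpow_eq_zero_iff]; simp [ha.ne']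
    rw [h1, cpow_neg]
    field_simp
  have hsum := DD_summable ha μ hs
  unfold lerchSeries
  rw [Summable.tsum_eq_zero_add]
  · simp only [key, tsum_mul_left]
    simp only [Nat.cast_zero, mul_zero, exp_zero, zero_add, cpow_neg]
    unfold DD; ring
  · rw [← summable_nat_add_iff 1]
    simp only [key]
    exact hsum.mul_left _

lemma lerchSeries_summable {a : ℝ} (ha : 0 < a) (μ : ℝ) {s : ℂ} (hs : 1 < s.re) :
    Summable fun m : ℕ => exp (2 * Real.pi * I * μ * m) / ((m : ℂ) + a) ^ s := by
  rw [← summable_nat_add_iff 1]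
  refine Summable.of_norm_bounded ((summable_rr ha hs).mul_left (a ^ (-s.re))) fun m => ?_
  have : (((m + 1 : ℕ) : ℂ) + a) = (((m + 1 : ℝ) + a : ℝ) : ℂ) := by push_cast; ring
  rw [norm_div, norm_exp_aux, this, norm_cpow_eq_rpow_re_of_pos (by positivity)]
  unfold rr
  rw [Real.div_rpow ha.le (by positivity), Real.rpow_neg ha.le]
  have := Real.rpow_pos_of_pos ha s.re
  apply le_of_eq
  field_simp

lemma norm_DD_le {a : ℝ} (ha : 0 < a) (μ : ℝ) {s : ℂ} (hs : 1 + a ≤ s.re) :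
    ‖DD μ a s‖ ≤ (∑' m, rr a m ^ (1 + a)) * rr a 0 ^ (s.re - (1 + a)) := by
  have h1 : ‖DD μ a s‖ ≤ ∑' m, rr a m ^ s.re := by
    unfold DD
    refine (norm_tsum_le_tsum_norm ?_).trans (le_of_eq ?_)
    · exact (DD_summable ha μ (by linarith)).norm
    · simp only [norm_DDterm ha]
  refine h1.trans ?_
  rw [← tsum_mul_right]
  refine Summable.tsum_le_tsum (fun m => ?_) (summable_rr ha (by linarith))
    ((summable_rr ha (by linarith)).mul_right _)
  have : s.re = (1 + a) + (s.re - (1 + a)) := by ring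
  conv_lhs => rw [this, Real.rpow_add (rr_pos ha m)]
  gcongr
  · exact (Real.rpow_pos_of_pos (rr_pos ha m) _).le
  · exact (rr_pos ha m).le
  · exact rr_le ha m

lemma tsum_rr_nonneg {a : ℝ} (ha : 0 < a) : 0 ≤ ∑' m, rr a m ^ (1 + a) :=
  tsum_nonneg fun m => (Real.rpow_pos_of_pos (rr_pos ha m) _).le

lemma norm_DD_le' {a : ℝ} (ha : 0 < a) (μ : ℝ) {s : ℂ} (hs : 1 + a ≤ s.re) :
    ‖DD μ a s‖ ≤ (∑' m, rr a m ^ (1 + a)) := by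
  refine (norm_DD_le ha μ hs).trans ?_
  refine mul_le_of_le_one_right (tsum_rr_nonneg ha) ?_
  exact Real.rpow_le_one (rr_pos ha 0).le (rr_lt_one ha 0).le (by linarith)

lemma norm_DD_lt {a : ℝ} (ha : 0 < a) (μ : ℝ) {s : ℂ} (hs : 1 + a ≤ s.re) :
    ‖DD μ a s‖ < 1 := (norm_DD_le' ha μ hs).trans_lt (tsum_rr_lt ha)

lemma DD_diff {a : ℝ} (ha : 0 < a) (μ : ℝ) {s : ℂ} (hs : 1 < s.re) :
    DifferentiableAt ℂ (DD μ a) s := by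
  obtain ⟨x, hx1, hx2⟩ := exists_between hs
  have ho : IsOpen {s : ℂ | x < s.re} := isOpen_lt continuous_const continuous_re
  have : DifferentiableOn ℂ (DD μ a) {s : ℂ | x < s.re} := by
    unfold DD
    refine differentiableOn_tsum_of_summable_norm (summable_rr ha hx1) (fun m s _ => ?_) ho
      (fun m s hs => ?_)
    · have : (rr a m : ℂ) ≠ 0 := by exact_mod_cast (rr_pos ha m).ne'
      refine DifferentiableAt.differentiableWithinAt ?_
      exact ((differentiableAt_id).const_cpow (Or.inl this)).const_mul _
    · rw [norm_DDterm ha]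
      exact Real.rpow_le_rpow_of_exponent_ge (rr_pos ha m) (rr_lt_one ha m).le (le_of_lt hs)
  exact this.differentiableAt (ho.mem_nhds hx2)

lemma one_add_mem {z : ℂ} (hz : ‖z‖ < 1) : 1 + z ∈ slitPlane := by
  left
  have := abs_re_le_norm z
  simp only [add_re, one_re]
  have := neg_abs_le z.re
  linarith

lemma log_DD_integral {a : ℝ} (ha : 0 < a) (ha1 : a ≤ 1) (μ : ℝ) : ∃ C, ∀ y1 y2 : ℝ,
    ‖∫ y in y1..y2, log (1 + DD μ a (2 + y * I))‖ ≤ C := by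
  set q := ∑' m, rr a m ^ (1 + a) with hq
  have hq0 : 0 ≤ q := tsum_rr_nonneg ha
  have hq1 : q < 1 := tsum_rr_lt ha
  set c := -Real.log (rr a 0) with hc
  have hc0 : 0 < c := by rw [hc]; linarith [Real.log_neg (rr_pos ha 0) (rr_lt_one ha 0)]
  set K := (1 - q)⁻¹ + 1 with hK
  have hK0 : 0 < K := by have : 0 < 1 - q := by linarith
                         positivity
  have hlog : ∀ s : ℂ, 2 ≤ s.re → ‖log (1 + DD μ a s)‖ ≤ K * Real.exp (-c * (s.re - 2)) := by
    intro s hs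
    have h1 := norm_DD_le ha μ (s := s) (by linarith)
    have h2 := norm_DD_le' ha μ (s := s) (by linarith)
    have h3 : ‖DD μ a s‖ ≤ Real.exp (-c * (s.re - 2)) := by
      refine h1.trans ((mul_le_of_le_one_left (Real.rpow_nonneg (rr_pos ha 0).le _) hq1.le).trans ?_)
      rw [Real.rpow_def_of_pos (rr_pos ha 0), hc]
      apply Real.exp_le_exp.2
      nlinarith
    have h4 := norm_log_one_add_le (z := DD μ a s) (by linarith)
    refine h4.trans ?_
    have h5 : (1 - ‖DD μ a s‖)⁻¹ ≤ (1 - q)⁻¹ := inv_anti₀ (by linarith) (by linarith)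
    have h6 : 0 ≤ ‖DD μ a s‖ := norm_nonneg _
    have h7 : 0 < (1 - ‖DD μ a s‖)⁻¹ := by apply inv_pos.2; linarith
    have h8 : ‖DD μ a s‖ ^ 2 * (1 - ‖DD μ a s‖)⁻¹ / 2 + ‖DD μ a s‖ ≤ K * ‖DD μ a s‖ := by
      have : ‖DD μ a s‖ ^ 2 * (1 - ‖DD μ a s‖)⁻¹ ≤ ‖DD μ a s‖ * (1 - q)⁻¹ := by
        apply mul_le_mul _ h5 h7.le h6
        nlinarith
      rw [hK]
      have : 0 ≤ ‖DD μ a s‖ * (1 - q)⁻¹ := mul_nonneg h6 (h7.le.trans h5)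
      nlinarith
    exact h8.trans (mul_le_mul_of_nonneg_left h3 hK0.le)
  have hdiff : ∀ s : ℂ, 2 ≤ s.re → DifferentiableAt ℂ (fun s => log (1 + DD μ a s)) s := by
    intro s hs
    exact ((DD_diff ha μ (by linarith)).const_add 1).clog
      (one_add_mem (norm_DD_lt ha μ (by linarith)))
  have hhor : ∀ X y : ℝ, 2 ≤ X → ‖∫ x in (2:ℝ)..X, log (1 + DD μ a (x + y * I))‖ ≤ K / c := by
    intro X y hX
    have hintg0 : ∫ x in (2:ℝ)..X, K * Real.exp (-c * (x - 2)) =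
        (-K / c) * Real.exp (-c * (X - 2)) - (-K / c) * Real.exp (-c * (2 - 2)) := by
      refine integral_eq_sub_of_hasDerivAt (f := fun x => (-K / c) * Real.exp (-c * (x - 2))) (fun x _ => ?_) ?_
      · have := ((((hasDerivAt_id x).sub_const 2).const_mul (-c)).exp).const_mul (-K / c)
        exact this.congr_deriv (by simp only [id]; field_simp)
      · exact Continuous.intervalIntegrable (by fun_prop) _ _
    have := norm_integral_le_of_norm_le (μ := volume) hX
      (f := fun x : ℝ => log (1 + DD μ a (x + y * I)))
      (g := fun x => K * Real.exp (-c * (x - 2)))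
      (Filter.Eventually.of_forall fun x hx => by
        have := hlog (x + y * I) (by simpa using hx.1.le)
        simpa using this) (Continuous.intervalIntegrable (by fun_prop) _ _)
    refine this.trans ?_
    rw [hintg0]
    have : 0 < Real.exp (-c * (X - 2)) := Real.exp_pos _
    have h2 : 0 < K / c := by positivity
    simp only [sub_self, mul_zero, Real.exp_zero, neg_div]
    nlinarith
  refine ⟨2 * (K / c), fun y1 y2 => ?_⟩
  have hX : ∀ X : ℝ, 2 ≤ X → ‖∫ y in y1..y2, log (1 + DD μ a (2 + y * I))‖ ≤
      2 * (K / c) + K * Real.exp (-c * (X - 2)) * |y2 - y1| := by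
    intro X hX
    have hr := integral_boundary_rect_eq_zero_of_differentiableOn
      (fun s => log (1 + DD μ a s)) (2 + y1 * I) (X + y2 * I)
      (fun s hs => (hdiff s (by
        have := hs.1
        simp [Set.uIcc_of_le hX] at this
        exact this.1)).differentiableWithinAt)
    simp at hr
    have hv : ‖∫ y in y1..y2, log (1 + DD μ a (X + y * I))‖ ≤
        K * Real.exp (-c * (X - 2)) * |y2 - y1| := by
      refine norm_integral_le_of_norm_le_const fun y _ => ?_
      have := hlog (X + y * I) (by simpa using hX)
      simpa using this
    have he : I * ∫ y in y1..y2, log (1 + DD μ a (2 + y * I)) =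
        (∫ x in (2:ℝ)..X, log (1 + DD μ a (x + y1 * I))) - (∫ x in (2:ℝ)..X, log (1 + DD μ a (x + y2 * I)))
        + I * ∫ y in y1..y2, log (1 + DD μ a (X + y * I)) := by
      linear_combination -hr
    have h1 : ‖∫ y in y1..y2, log (1 + DD μ a (2 + y * I))‖ =
      ‖I * ∫ y in y1..y2, log (1 + DD μ a (2 + y * I))‖ := by simp
    rw [h1, he]
    refine (norm_add_le _ _).trans (add_le_add ((norm_sub_le _ _).trans ?_) ?_)
    · have := hhor X y1 hX
      have := hhor X y2 hX
      linarith
    · rw [norm_mul, norm_I, one_mul]; exact hv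
  have hlim : Filter.Tendsto (fun X : ℝ => 2 * (K / c) + K * Real.exp (-c * (X - 2)) * |y2 - y1|)
      Filter.atTop (nhds (2 * (K / c) + K * 0 * |y2 - y1|)) := by
    refine Filter.Tendsto.const_add _ (Filter.Tendsto.mul_const _ (Filter.Tendsto.const_mul _ ?_))
    refine Real.tendsto_exp_atBot.comp ?_
    refine Filter.Tendsto.const_mul_atTop_of_neg (by linarith) ?_
    exact Filter.tendsto_atTop_add_const_right _ (-2) Filter.tendsto_id
  have := ge_of_tendsto hlim (Filter.eventually_atTop.2 ⟨2, hX⟩)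
  simpa using this

end LerchAux

namespace LerchAux
open Complex MeasureTheory intervalIntegral Metric

/-- Stirling main factor. -/
noncomputable def St (s : ℂ) : ℂ := exp ((s - 1/2) * log s - s)
/-- Stirling increment. -/
noncomputable def ee (s : ℂ) : ℂ := (s + 1/2) * (log (s + 1) - log s) - 1

lemma ne_zero_of_re_pos' {s : ℂ} (hs : 0 < s.re) : s ≠ 0 := by
  rintro rfl; simp at hs

lemma St_succ {s : ℂ} (hs : 0 < s.re) : St (s + 1) = St s * s * exp (ee s) := by
  have h0 := ne_zero_of_re_pos' hs
  have : St s * s = exp ((s + 1/2) * log s - s) := by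
    unfold St
    have e : (s + 1/2) * log s - s = ((s - 1/2) * log s - s) + log s := by ring
    rw [e, exp_add _ (log s), exp_log h0]
  rw [this]
  unfold St ee
  rw [← exp_add]
  congr 1; ring

lemma log_add_one_sub {s : ℂ} (hs : 0 < s.re) : log (s + 1) - log s = log (1 + s⁻¹) := by
  have h0 := ne_zero_of_re_pos' hs
  have h1 : s + 1 = s * (1 + s⁻¹) := by field_simp
  have h2 : 0 < (1 + s⁻¹).re := by
    simp only [add_re, one_re, inv_re]
    have : 0 ≤ s.re / normSq s := div_nonneg hs.le (normSq_nonneg _)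
    linarith
  have h3 := abs_lt.1 (abs_arg_lt_pi_div_two_iff.2 (Or.inl hs))
  have h4 := abs_lt.1 (abs_arg_lt_pi_div_two_iff.2 (Or.inl h2))
  rw [h1, log_mul h0 (ne_zero_of_re_pos' h2) ⟨by linarith [h3.1, h4.1], by linarith [h3.2, h4.2]⟩]
  ring

lemma ee_bound {s : ℂ} (hs : 0 < s.re) (h2 : 2 ≤ ‖s‖) : ‖ee s‖ ≤ 2 / ‖s‖ ^ 2 := by
  have h0 := ne_zero_of_re_pos' hs
  have hz : ‖s⁻¹‖ ≤ 1/2 := by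
    rw [norm_inv, one_div]; exact inv_anti₀ (by norm_num) h2
  have h3 := norm_log_sub_logTaylor_le 2 (z := s⁻¹) (by linarith)
  set R := log (1 + s⁻¹) - logTaylor (2 + 1) s⁻¹ with hR
  have hRe : log (1 + s⁻¹) = s⁻¹ - s⁻¹ ^ 2 / 2 + R := by
    rw [hR]; simp [logTaylor_succ, logTaylor_zero]; ring
  have hRb : ‖R‖ ≤ 2/3 * ‖s⁻¹‖ ^ 3 := by
    refine h3.trans ?_
    have : (1 - ‖s⁻¹‖)⁻¹ ≤ 2 := by
      rw [inv_le_comm₀ (by linarith) (by norm_num)]; linarith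
    have h5 : 0 ≤ ‖s⁻¹‖ ^ 3 := by positivity
    have : ‖s⁻¹‖ ^ (2+1) * (1 - ‖s⁻¹‖)⁻¹ ≤ ‖s⁻¹‖ ^ 3 * 2 := mul_le_mul_of_nonneg_left this h5
    push_cast
    linarith
  have he : ee s = -(s⁻¹ ^ 2 / 4) + s * R + R / 2 := by
    unfold ee
    rw [log_add_one_sub hs, hRe]
    field_simp
    ring
  have hn : 0 < ‖s‖ := norm_pos_iff.2 h0
  have hz2 : 2 / ‖s‖^2 = 2 * ‖s⁻¹‖ ^ 2 := by rw [norm_inv]; field_simp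
  have hz3 : ‖s * R‖ ≤ 2/3 * ‖s⁻¹‖ ^ 2 := by
    rw [norm_mul]
    refine (mul_le_mul_of_nonneg_left hRb hn.le).trans (le_of_eq ?_)
    rw [norm_inv]; field_simp
  have hz4 : ‖R / 2‖ ≤ 1/6 * ‖s⁻¹‖ ^ 2 := by
    rw [norm_div]; simp only [norm_ofNat]
    have : ‖s⁻¹‖^3 ≤ 1/2 * ‖s⁻¹‖^2 := by
      have : 0 ≤ ‖s⁻¹‖^2 := by positivity
      nlinarith
    linarith
  have hz5 : ‖-(s⁻¹ ^ 2 / 4)‖ = 1/4 * ‖s⁻¹‖^2 := by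
    rw [norm_neg, norm_div, norm_pow]; simp only [norm_ofNat]; ring
  rw [hz2, he]
  have := norm_add_le (-(s⁻¹ ^ 2 / 4) + s * R) (R / 2)
  have := norm_add_le (-(s⁻¹ ^ 2 / 4)) (s * R)
  have : 0 ≤ ‖s⁻¹‖^2 := by positivity
  linarith

lemma norm_add_nat {s : ℂ} (hs : 0 < s.re) (k : ℕ) : ‖s‖ ^ 2 + (k:ℝ) ^ 2 ≤ ‖s + k‖ ^ 2 := by
  rw [← normSq_eq_norm_sq, ← normSq_eq_norm_sq, normSq_apply, normSq_apply]
  simp only [add_re, natCast_re, add_im, natCast_im]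
  have : (0:ℝ) ≤ k := Nat.cast_nonneg k
  nlinarith

lemma ee_nat_bound {s : ℂ} (hs : 0 < s.re) (h2 : 2 ≤ ‖s‖) (k : ℕ) :
    ‖ee (s + k)‖ ≤ 4 * (1 / (‖s‖ - 1 + k) - 1 / (‖s‖ - 1 + (k + 1 : ℕ))) := by
  have hk : (0:ℝ) ≤ k := Nat.cast_nonneg k
  have h1 := norm_add_nat hs k
  have h3 : 2 ≤ ‖s + k‖ := by
    have := sq_nonneg (k:ℝ)
    have : ‖s‖ ≤ ‖s + k‖ := by
      apply le_of_sq_le_sq _ (norm_nonneg _); linarith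
    linarith
  refine (ee_bound (s := s + k) (by simp; linarith) h3).trans ?_
  have h4 : 4 * (1 / (‖s‖ - 1 + k) - 1 / (‖s‖ - 1 + (k + 1 : ℕ))) =
      4 / ((‖s‖ - 1 + k) * (‖s‖ + k)) := by
    have : ‖s‖ - 1 + k ≠ 0 := by linarith
    have : ‖s‖ + k ≠ 0 := by linarith
    have h9 : ‖s‖ - 1 + (k + 1 : ℕ) = ‖s‖ + k := by push_cast; ring
    rw [h9]
    field_simp; ring
  rw [h4, div_le_div_iff₀ (by positivity) (by apply mul_pos <;> linarith)]
  nlinarith [sq_nonneg (‖s‖ - k)]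

lemma tele_hasSum {x : ℝ} (hx : 0 < x) : HasSum (fun k : ℕ => 1 / (x + k) - 1 / (x + (k + 1 : ℕ))) (1 / x) := by
  rw [hasSum_iff_tendsto_nat_of_nonneg]
  · simp only [Finset.sum_range_sub' (fun k : ℕ => 1 / (x + k))]
    have : Filter.Tendsto (fun n : ℕ => 1 / (x + n)) Filter.atTop (nhds 0) :=
      Filter.Tendsto.const_div_atTop
        (Filter.tendsto_atTop_add_const_left _ _ tendsto_natCast_atTop_atTop) _
    simpa using this.const_sub (1 / (x + (0:ℕ)))
  · intro k
    rw [sub_nonneg]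
    apply one_div_le_one_div_of_le (by positivity)
    push_cast; linarith

lemma ee_summable {s : ℂ} (hs : 0 < s.re) (h2 : 2 ≤ ‖s‖) : Summable (fun k : ℕ => ee (s + k)) :=
  Summable.of_norm_bounded ((tele_hasSum (x := ‖s‖ - 1) (by linarith)).summable.mul_left 4)
    (ee_nat_bound hs h2)

lemma ee_tsum_bound {s : ℂ} (hs : 0 < s.re) (h2 : 2 ≤ ‖s‖) :
    ‖∑' k : ℕ, ee (s + k)‖ ≤ 8 / ‖s‖ := by
  refine (tsum_of_norm_bounded ((tele_hasSum (x := ‖s‖ - 1) (by linarith)).mul_left 4)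
    (ee_nat_bound hs h2)).trans ?_
  rw [mul_one_div, div_le_div_iff₀ (by linarith) (by linarith)]
  linarith

lemma St_prod {s : ℂ} (hs : 0 < s.re) (n : ℕ) :
    St (s + n) = St s * (∏ j ∈ Finset.range n, (s + j)) * exp (∑ j ∈ Finset.range n, ee (s + j)) := by
  induction n with
  | zero => simp
  | succ n ih =>
    have : s + (n + 1 : ℕ) = (s + n) + 1 := by push_cast; ring
    rw [this, St_succ (by simp; positivity), ih, Finset.prod_range_succ, Finset.sum_range_succ, exp_add]
    ring

lemma St_ne (s : ℂ) : St s ≠ 0 := exp_ne_zero _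

lemma St_limit {s : ℂ} (hs : 0 < s.re) : Filter.Tendsto
    (fun n : ℕ => (n : ℂ) ^ s * n.factorial / St (s + (n + 1 : ℕ))) Filter.atTop
    (nhds (Real.sqrt (2 * Real.pi))) := by
  have hst : Filter.Tendsto (fun n : ℕ => ((Stirling.stirlingSeq n * Real.sqrt 2 : ℝ) : ℂ)) Filter.atTop
      (nhds (Real.sqrt (2 * Real.pi))) := by
    have h1 := Stirling.tendsto_stirlingSeq_sqrt_pi.mul_const (Real.sqrt 2)
    have h2 : Real.sqrt Real.pi * Real.sqrt 2 = Real.sqrt (2 * Real.pi) := by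
      rw [mul_comm, ← Real.sqrt_mul (by norm_num)]
    rw [h2] at h1
    exact (continuous_ofReal.tendsto _).comp h1
  have hlim0 : Filter.Tendsto (fun n : ℕ => (s + 1) / (n : ℂ)) Filter.atTop (nhds 0) := by
    have := tendsto_inv_atTop_nhds_zero_nat (𝕜 := ℂ)
    simpa [div_eq_mul_inv] using this.const_mul (s + 1)
  have hl0 : Filter.Tendsto (fun n : ℕ => log (1 + (s + 1) / (n : ℂ))) Filter.atTop (nhds 0) := by
    have h1 : Filter.Tendsto (fun n : ℕ => 1 + (s + 1) / (n : ℂ)) Filter.atTop (nhds 1) := by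
      simpa using hlim0.const_add 1
    have h2 := (continuousAt_clog (x := 1) (by simp)).tendsto.comp h1
    simpa [Function.comp_def] using h2
  have hl1 : Filter.Tendsto (fun n : ℕ => n * log (1 + (s + 1) / (n : ℂ))) Filter.atTop (nhds (s + 1)) := by
    apply tendsto_nat_mul_log_one_add_of_tendsto
    apply Filter.Tendsto.congr' _ tendsto_const_nhds
    filter_upwards [Filter.eventually_gt_atTop 0] with n hn
    have : (n:ℂ) ≠ 0 := by exact_mod_cast hn.ne'
    field_simp
  have hl2 : Filter.Tendsto (fun n : ℕ => exp (s + 1 -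
      ((s + 1/2) * log (1 + (s + 1) / (n : ℂ)) + n * log (1 + (s + 1) / (n : ℂ)))))
      Filter.atTop (nhds 1) := by
    have := (continuous_exp.tendsto _).comp (((hl0.const_mul (s + 1/2)).add hl1).const_sub (s + 1))
    simpa [Function.comp_def] using this
  have := hst.mul hl2
  rw [mul_one] at this
  refine Filter.Tendsto.congr' ?_ this
  filter_upwards [Filter.eventually_gt_atTop 0] with n hn
  have hn' : (0:ℝ) < n := by exact_mod_cast hn
  have hnc : (n:ℂ) ≠ 0 := by exact_mod_cast hn.ne'
  have hne : 1 + (s + 1) / (n:ℂ) ≠ 0 := by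
    apply ne_zero_of_re_pos'
    have : (s + 1) / (n:ℂ) = ((1/n : ℝ) : ℂ) * (s + 1) := by push_cast; field_simp
    rw [this]
    simp only [add_re, one_re, re_ofReal_mul]
    positivity
  have hlog : log (s + (n + 1 : ℕ)) = Real.log n + log (1 + (s + 1) / (n : ℂ)) := by
    rw [← log_ofReal_mul hn' hne]
    congr 1
    push_cast
    field_simp
    ring
  have hfac : (n.factorial : ℂ) = ((Stirling.stirlingSeq n * Real.sqrt 2 : ℝ) : ℂ) *
      exp ((n + 1/2) * Real.log n - n) := by
    have h1 : (n.factorial : ℝ) = Stirling.stirlingSeq n * Real.sqrt 2 *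
        Real.exp ((n + 1/2) * Real.log n - n) := by
      have h2 : Real.exp ((n + 1/2) * Real.log n - n) = Real.sqrt n * (n / Real.exp 1) ^ n := by
        rw [Real.sqrt_eq_rpow, Real.rpow_def_of_pos hn', div_pow, ← Real.exp_nat_mul, mul_one]
        conv_rhs => enter [2, 1, 1]; rw [← Real.exp_log hn']
        rw [← Real.exp_nat_mul, ← Real.exp_sub, ← Real.exp_add]
        congr 1; ring
      rw [h2]
      unfold Stirling.stirlingSeq
      rw [Real.sqrt_mul (by norm_num)]
      have : Real.sqrt n ≠ 0 := (Real.sqrt_pos.2 hn').ne'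
      field_simp
    have := congrArg (fun x : ℝ => (x : ℂ)) h1
    push_cast at this ⊢
    exact this
  rw [hfac]
  unfold St
  rw [hlog, cpow_def_of_ne_zero hnc, ← natCast_log, mul_comm (exp _) (_ * exp _), mul_assoc, mul_div_assoc,
    ← exp_add, ← exp_sub]
  congr 2
  push_cast
  ring

theorem stirling {s : ℂ} (hs : 0 < s.re) (h2 : 2 ≤ ‖s‖) :
    ∃ E : ℂ, ‖E‖ ≤ 8 / ‖s‖ ∧ Gamma s = Real.sqrt (2 * Real.pi) * exp ((s - 1/2) * log s - s + E) := by
  refine ⟨∑' k : ℕ, ee (s + k), ee_tsum_bound hs h2, ?_⟩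
  have h1 := (St_limit hs).mul ((continuous_exp.tendsto _).comp
    ((Filter.tendsto_add_atTop_iff_nat 1).2 (ee_summable hs h2).hasSum.tendsto_sum_nat))
  have h3 := h1.mul_const (St s)
  refine tendsto_nhds_unique (GammaSeq_tendsto_Gamma s) ?_
  rw [exp_add, ← mul_assoc]
  have h4 : (Real.sqrt (2 * Real.pi) : ℂ) * exp ((s - 1/2) * log s - s) * exp (∑' k : ℕ, ee (s + k)) =
      Real.sqrt (2 * Real.pi) * exp (∑' k : ℕ, ee (s + k)) * St s := by unfold St; ring
  rw [h4]
  refine Filter.Tendsto.congr (fun n => ?_) h3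
  have hp : ∏ j ∈ Finset.range (n + 1), (s + j) ≠ 0 := by
    refine Finset.prod_ne_zero_iff.2 fun j _ => ne_zero_of_re_pos' (by simp; positivity)
  simp only [Function.comp]
  rw [St_prod hs (n+1)]
  unfold GammaSeq
  have := St_ne s
  have := exp_ne_zero (∑ j ∈ Finset.range (n+1), ee (s + j))
  field_simp

end LerchAux

namespace LerchAux
open Complex MeasureTheory intervalIntegral Metric

lemma taylor2 {f f' f'' : ℝ → ℂ} {h M : ℝ} (hh : 0 ≤ h)
    (h1 : ∀ x ∈ Set.Icc 0 h, HasDerivAt f (f' x) x)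
    (h2 : ∀ x ∈ Set.Icc 0 h, HasDerivAt f' (f'' x) x)
    (hM : ∀ x ∈ Set.Icc 0 h, ‖f'' x‖ ≤ M) : ‖f h - f 0 - h * f' 0‖ ≤ M * h ^ 2 := by
  have hM0 : 0 ≤ M := (norm_nonneg _).trans (hM 0 ⟨le_rfl, hh⟩)
  have hb : ∀ x ∈ Set.Icc 0 h, ‖f' x - f' 0‖ ≤ M * h := by
    intro x hx
    have := norm_image_sub_le_of_norm_deriv_le_segment' (f := f') (f' := f'') (C := M) (a := 0) (b := h)
      (fun x hx => (h2 x hx).hasDerivWithinAt) (fun x hx => hM x ⟨hx.1, hx.2.le⟩) x hx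
    refine this.trans ?_
    simp only [sub_zero]
    exact mul_le_mul_of_nonneg_left hx.2 hM0
  have := norm_image_sub_le_of_norm_deriv_le_segment' (f := fun x => f x - x * f' 0)
    (f' := fun x => f' x - f' 0) (C := M * h) (a := 0) (b := h)
    (fun x hx => by
      have h3 := (h1 x hx).sub (((hasDerivAt_id x).ofReal_comp).mul_const (f' 0))
      simp only [ofReal_one, one_mul] at h3
      exact h3.hasDerivWithinAt)
    (fun x hx => hb x ⟨hx.1, hx.2.le⟩) h ⟨hh, le_rfl⟩
  simp only [ofReal_zero, zero_mul, sub_zero] at this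
  calc ‖f h - f 0 - h * f' 0‖ = ‖f h - h * f' 0 - f 0‖ := by congr 1; ring
    _ ≤ M * h * h := this
    _ = M * h ^ 2 := by ring

/-- derivative of `x ↦ x^{-s}` along the reals -/
lemma hasDerivAt_pw (s : ℂ) {x : ℝ} (hx : 0 < x) :
    HasDerivAt (fun x : ℝ => (x : ℂ) ^ (-s)) (-s * (x : ℂ) ^ (-s - 1)) x := by
  have h : HasDerivAt (fun z : ℂ => z ^ (-s)) (-s * (x : ℂ) ^ (-s - 1)) (x : ℂ) := by
    have := (hasDerivAt_id (x : ℂ)).cpow_const (c := -s) (Or.inl (by simpa using hx))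
    simpa using this
  exact h.comp_ofReal

lemma hasDerivAt_pw_shift (s : ℂ) {x u : ℝ} (hx : 0 < u + x) :
    HasDerivAt (fun x : ℝ => ((u + x : ℝ) : ℂ) ^ (-s)) (-s * ((u + x : ℝ) : ℂ) ^ (-(s + 1))) x := by
  have := HasDerivAt.comp_const_add (f := fun x : ℝ => (x : ℂ) ^ (-s)) u x (hasDerivAt_pw s hx)
  have e : -(s+1) = -s - 1 := by ring
  rw [e]; exact this

lemma norm_pw (s : ℂ) {x : ℝ} (hx : 0 < x) : ‖(x : ℂ) ^ (-s)‖ = x ^ (-s.re) := by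
  rw [norm_cpow_eq_rpow_re_of_pos hx]; simp

/-- Second derivative bound -/
lemma pw2_bound {s : ℂ} (hs : -2 ≤ s.re) {u x : ℝ} (hu : 0 < u) (hx : 0 ≤ x) :
    ‖-s * (-(s + 1) * ((u + x : ℝ) : ℂ) ^ (-(s + 1 + 1)))‖ ≤ ‖s‖ * ‖s + 1‖ * u ^ (-(s.re + 2)) := by
  rw [norm_mul, norm_mul, norm_neg, norm_neg, norm_pw _ (by linarith), mul_assoc]
  gcongr
  have : (s + 1 + 1).re = s.re + 2 := by simp; ring
  rw [this]
  exact Real.rpow_le_rpow_of_nonpos hu (by linarith) (by linarith)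

/-- second difference -/
noncomputable def D2 (s : ℂ) (u : ℝ) : ℂ :=
  ((u + 2 : ℝ) : ℂ) ^ (-s) - 2 * ((u + 1 : ℝ) : ℂ) ^ (-s) + (u : ℂ) ^ (-s)

lemma D2_bound {s : ℂ} (hs : -2 ≤ s.re) {u : ℝ} (hu : 0 < u) :
    ‖D2 s u‖ ≤ 6 * (‖s‖ * ‖s + 1‖ * u ^ (-(s.re + 2))) := by
  set M := ‖s‖ * ‖s + 1‖ * u ^ (-(s.re + 2)) with hM
  have key : ∀ h : ℝ, 0 ≤ h → ‖((u + h : ℝ) : ℂ) ^ (-s) - ((u + 0 : ℝ) : ℂ) ^ (-s)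
      - h * (-s * ((u + 0 : ℝ) : ℂ) ^ (-(s + 1)))‖ ≤ M * h ^ 2 := by
    intro h hh
    exact taylor2 (f := fun x => ((u + x : ℝ) : ℂ) ^ (-s)) hh
      (fun x hx => hasDerivAt_pw_shift s (by linarith [hx.1]))
      (fun x hx => (hasDerivAt_pw_shift (s + 1) (by linarith [hx.1])).const_mul (-s))
      (fun x hx => pw2_bound hs hu hx.1)
  have k1 := key 1 (by norm_num)
  have k2 := key 2 (by norm_num)
  have e : D2 s u = (((u + 2 : ℝ) : ℂ) ^ (-s) - ((u + 0 : ℝ) : ℂ) ^ (-s)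
      - (2 : ℝ) * (-s * ((u + 0 : ℝ) : ℂ) ^ (-(s + 1)))) - 2 * (((u + 1 : ℝ) : ℂ) ^ (-s) - ((u + 0 : ℝ) : ℂ) ^ (-s)
      - (1 : ℝ) * (-s * ((u + 0 : ℝ) : ℂ) ^ (-(s + 1)))) := by
    unfold D2; push_cast; simp only [add_zero]; ring
  rw [e]
  refine (norm_sub_le _ _).trans ?_
  rw [norm_mul]
  simp only [norm_ofNat]
  linarith

/-- trapezoid error -/
noncomputable def TE (s : ℂ) (u : ℝ) : ℂ :=
  (1/2) * ((u : ℂ) ^ (-s) + ((u + 1 : ℝ) : ℂ) ^ (-s)) -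
    (((u + 1 : ℝ) : ℂ) ^ (1 - s) - (u : ℂ) ^ (1 - s)) / (1 - s)

lemma TE_bound {s : ℂ} (hs : -2 ≤ s.re) (hs1 : s ≠ 1) {u : ℝ} (hu : 0 < u) :
    ‖TE s u‖ ≤ ‖s‖ * ‖s + 1‖ * u ^ (-(s.re + 2)) := by
  set M := ‖s‖ * ‖s + 1‖ * u ^ (-(s.re + 2)) with hM
  have hM0 : 0 ≤ M := by positivity
  have h1s : (1 - s) ≠ 0 := sub_ne_zero.2 hs1.symm
  set f : ℝ → ℂ := fun x => ((u + x : ℝ) : ℂ) ^ (-s) with hf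
  set f1 : ℝ → ℂ := fun x => -s * ((u + x : ℝ) : ℂ) ^ (-(s + 1)) with hf1
  set f2 : ℝ → ℂ := fun x => -s * (-(s + 1) * ((u + x : ℝ) : ℂ) ^ (-(s + 1 + 1))) with hf2
  have d0 : ∀ x : ℝ, 0 ≤ x → HasDerivAt f (f1 x) x := fun x hx => hasDerivAt_pw_shift s (by linarith)
  have d1 : ∀ x : ℝ, 0 ≤ x → HasDerivAt f1 (f2 x) x := fun x hx =>
    (hasDerivAt_pw_shift (s + 1) (by linarith)).const_mul (-s)
  have dP : ∀ x : ℝ, 0 ≤ x → HasDerivAt (fun x : ℝ => ((u + x : ℝ) : ℂ) ^ (1 - s) / (1 - s)) (f x) x := by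
    intro x hx
    have := (hasDerivAt_pw_shift (s - 1) (u := u) (x := x) (by linarith)).div_const (1 - s)
    have e1 : -(s - 1) = 1 - s := by ring
    have e2 : -(s - 1 + 1) = -s := by ring
    rw [e2] at this
    simp only [e1] at this
    exact this.congr_deriv (by rw [mul_div_assoc, mul_div_cancel₀ _ h1s])
  have hid : ∀ x : ℝ, HasDerivAt (fun x : ℝ => (1/2 : ℂ) * x) (1/2) x := by
    intro x
    have := ((hasDerivAt_id x).ofReal_comp).const_mul (1/2 : ℂ)
    simpa using this
  have := taylor2 (f := fun h => (1/2) * h * (f 0 + f h) - (((u + h : ℝ) : ℂ) ^ (1 - s) / (1 - s)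
      - ((u + 0 : ℝ) : ℂ) ^ (1 - s) / (1 - s)))
    (f' := fun h => (1/2) * (f 0 - f h) + (1/2) * h * f1 h)
    (f'' := fun h => (1/2) * h * f2 h) (h := 1) (M := M) (by norm_num)
    (fun x hx => by
      have a1 := ((hid x).mul ((d0 x hx.1).const_add (f 0))).sub ((dP x hx.1).sub_const
        (((u + 0 : ℝ) : ℂ) ^ (1 - s) / (1 - s)))
      exact a1.congr_deriv (by ring))
    (fun x hx => by
      have a1 := (((d0 x hx.1).const_sub (f 0)).const_mul (1/2 : ℂ)).add ((hid x).mul (d1 x hx.1))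
      exact a1.congr_deriv (by ring))
    (fun x hx => by
      have b := pw2_bound hs hu hx.1
      rw [norm_mul]
      have : ‖(1/2 : ℂ) * x‖ ≤ 1 := by
        rw [norm_mul, norm_real, Real.norm_of_nonneg hx.1]
        norm_num
        linarith [hx.2]
      calc _ ≤ 1 * M := mul_le_mul this b (norm_nonneg _) (by norm_num)
        _ = M := one_mul _)
  simp only [ofReal_one, ofReal_zero, mul_zero, zero_mul, sub_self, mul_one, add_zero, sub_zero, hf,
    one_pow] at this
  have e : TE s u = (1/2) * ((u : ℂ) ^ (-s) + ((u + 1 : ℝ) : ℂ) ^ (-s)) -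
    (((u + 1 : ℝ) : ℂ) ^ (1 - s) / (1 - s) - (u : ℂ) ^ (1 - s) / (1 - s)) := by
    unfold TE; ring
  rw [e]
  exact this

lemma summable_add_rpow {a x : ℝ} (ha : 0 < a) (hx : 1 < x) :
    Summable fun m : ℕ => ((m : ℝ) + a) ^ (-x) := by
  rw [← summable_nat_add_iff 1]
  refine ((summable_rr ha hx).mul_left (a ^ (-x))).congr fun m => ?_
  have h0 : (0:ℝ) < m + 1 + a := by positivity
  unfold rr
  rw [Real.div_rpow ha.le h0.le, Real.rpow_neg ha.le, Real.rpow_neg (by positivity)]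
  have := Real.rpow_pos_of_pos ha x
  push_cast
  field_simp

/-- sum of an analytic family with quadratic bounds -/
lemma series_diff {a : ℝ} (ha : 0 < a) {E : ℂ → ℝ → ℂ} {c : ℕ → ℂ} (hc : ∀ m, ‖c m‖ ≤ 1) {K : ℝ} {U : Set ℂ}
    (hU : IsOpen U) (hK : 0 ≤ K)
    (hE : ∀ s ∈ U, ∀ u : ℝ, 0 < u → -2 ≤ s.re → ‖E s u‖ ≤ K * (‖s‖ * ‖s + 1‖ * u ^ (-(s.re + 2))))
    (hd : ∀ s ∈ U, ∀ u : ℝ, 0 < u → DifferentiableAt ℂ (fun s => E s u) s) {s : ℂ} (hs : -1 < s.re)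
    (hsU : s ∈ U) :
    DifferentiableAt ℂ (fun s => ∑' m : ℕ, c m * E s (m + a)) s := by
  obtain ⟨y, hy1, hy2⟩ := exists_between hs
  set V : Set ℂ := U ∩ {z | y < z.re} ∩ ball 0 (‖s‖ + 1) with hV
  have hVo : IsOpen V := (hU.inter (isOpen_lt continuous_const continuous_re)).inter isOpen_ball
  have hsV : s ∈ V := ⟨⟨hsU, hy2⟩, by simp⟩
  set R := ‖s‖ + 1 with hR
  -- dominate
  have hsum : Summable fun m : ℕ => K * (R * (R + 1) * (((m:ℝ) + a) ^ (-(y + 2)) +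
      ((m:ℝ) + a) ^ (-(R + 2)))) :=
    (((summable_add_rpow ha (by linarith)).add (summable_add_rpow ha (by
      have := norm_nonneg s; linarith))).mul_left _).mul_left _
  have : DifferentiableOn ℂ (fun s => ∑' m : ℕ, c m * E s (m + a)) V := by
    refine differentiableOn_tsum_of_summable_norm hsum (fun m z hz => ?_) hVo (fun m z hz => ?_)
    · exact ((hd z hz.1.1 _ (by positivity)).const_mul _).differentiableWithinAt
    · have hz1 : y < z.re := hz.1.2
      have hz2 : ‖z‖ < R := by simpa using hz.2
      have hu : (0:ℝ) < m + a := by positivity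
      rw [norm_mul]
      refine (mul_le_of_le_one_left (norm_nonneg _) (hc m)).trans
        ((hE z hz.1.1 (m + a) hu (by linarith)).trans ?_)
      have h1 : ‖z + 1‖ ≤ R + 1 := (norm_add_le _ _).trans (by simp; linarith)
      have h2 : ((m:ℝ) + a) ^ (-(z.re + 2)) ≤ ((m:ℝ) + a) ^ (-(y + 2)) + ((m:ℝ) + a) ^ (-(R + 2)) := by
        have p1 : 0 < ((m:ℝ) + a) ^ (-(y + 2)) := Real.rpow_pos_of_pos hu _
        have p2 : 0 < ((m:ℝ) + a) ^ (-(R + 2)) := Real.rpow_pos_of_pos hu _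
        rcases le_total 1 ((m:ℝ) + a) with h | h
        · have : ((m:ℝ) + a) ^ (-(z.re + 2)) ≤ ((m:ℝ) + a) ^ (-(y + 2)) :=
            Real.rpow_le_rpow_of_exponent_le h (by linarith)
          linarith
        · have hzr : z.re ≤ R := (re_le_norm z).trans hz2.le
          have : ((m:ℝ) + a) ^ (-(z.re + 2)) ≤ ((m:ℝ) + a) ^ (-(R + 2)) :=
            Real.rpow_le_rpow_of_exponent_ge hu h (by linarith)
          linarith
      gcongr
  exact this.differentiableAt (hVo.mem_nhds hsV)

lemma pw_diff {u : ℝ} (hu : 0 < u) (s : ℂ) : DifferentiableAt ℂ (fun s => (u : ℂ) ^ (-s)) s := by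
  have : (u : ℂ) ≠ 0 := by exact_mod_cast hu.ne'
  exact differentiableAt_id.neg.const_cpow (Or.inl this)

lemma D2_diff {u : ℝ} (hu : 0 < u) (s : ℂ) : DifferentiableAt ℂ (fun s => D2 s u) s := by
  unfold D2
  exact ((pw_diff (by linarith) s).sub ((pw_diff (by linarith) s).const_mul 2)).add (pw_diff hu s)

lemma TE_diff {u : ℝ} (hu : 0 < u) {s : ℂ} (hs : s ≠ 1) : DifferentiableAt ℂ (fun s => TE s u) s := by
  unfold TE
  have h : (1 - s) ≠ 0 := sub_ne_zero.2 hs.symm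
  have k : ∀ u : ℝ, 0 < u → DifferentiableAt ℂ (fun s => (u : ℂ) ^ (1 - s)) s := by
    intro u hu
    have : (u : ℂ) ≠ 0 := by exact_mod_cast hu.ne'
    exact ((differentiableAt_const 1).sub differentiableAt_id).const_cpow (Or.inl this)
  exact (((pw_diff hu s).add (pw_diff (by linarith) s)).const_mul _).sub
    (((k _ (by linarith)).sub (k _ hu)).div (by fun_prop) h)

/-- continuation for `lam < 1`, with `z = exp (2 π i lam)` -/
noncomputable def GG (z : ℂ) (a : ℝ) (s : ℂ) : ℂ :=
  (a : ℂ) ^ (-s) / (1 - z) + z * (((a + 1 : ℝ) : ℂ) ^ (-s) - (a : ℂ) ^ (-s)) / (1 - z) ^ 2 +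
    z ^ 2 / (1 - z) ^ 2 * ∑' m : ℕ, z ^ m * D2 s (m + a)

/-- continuation for `lam = 1` -/
noncomputable def HH (a : ℝ) (s : ℂ) : ℂ :=
  (1/2) * (a : ℂ) ^ (-s) + (a : ℂ) ^ (1 - s) / (s - 1) + ∑' m : ℕ, 1 * TE s (m + a)

lemma GG_diff {z : ℂ} (hz1 : ‖z‖ = 1) {a : ℝ} (ha : 0 < a) {s : ℂ} (hs : -1 < s.re) :
    DifferentiableAt ℂ (GG z a) s := by
  have hA : DifferentiableAt ℂ (fun s => (a : ℂ) ^ (-s) / (1 - z)) s := (pw_diff ha s).div_const _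
  have hB : DifferentiableAt ℂ (fun s => z * (((a + 1 : ℝ) : ℂ) ^ (-s) - (a : ℂ) ^ (-s)) / (1 - z) ^ 2) s :=
    (((pw_diff (by linarith) s).sub (pw_diff ha s)).const_mul z).div_const _
  have hC : DifferentiableAt ℂ (fun s => ∑' m : ℕ, z ^ m * D2 s (m + a)) s :=
    series_diff ha (K := 6) (U := Set.univ) (c := fun m => z ^ m) (E := D2)
      (fun m => by rw [norm_pow, hz1, one_pow]) isOpen_univ (by norm_num)
      (fun s _ u hu h => D2_bound h hu) (fun s _ u hu => D2_diff hu s) hs trivial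
  have hD := hC.const_mul (z ^ 2 / (1 - z) ^ 2)
  exact (hA.fun_add hB).fun_add hD

lemma HH_diff {a : ℝ} (ha : 0 < a) {s : ℂ} (hs : -1 < s.re) (hs1 : s ≠ 1) :
    DifferentiableAt ℂ (HH a) s := by
  have h0 : (a : ℂ) ≠ 0 := by exact_mod_cast ha.ne'
  have hA : DifferentiableAt ℂ (fun s => (1/2 : ℂ) * (a : ℂ) ^ (-s)) s := (pw_diff ha s).const_mul _
  have hB1 : DifferentiableAt ℂ (fun s => (a : ℂ) ^ (1 - s)) s :=
    ((differentiableAt_const 1).sub differentiableAt_id).const_cpow (Or.inl h0)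
  have hB2 : DifferentiableAt ℂ (fun s : ℂ => s - 1) s := by fun_prop
  have hB : DifferentiableAt ℂ (fun s => (a : ℂ) ^ (1 - s) / (s - 1)) s :=
    hB1.fun_div hB2 (sub_ne_zero.2 hs1)
  have hC : DifferentiableAt ℂ (fun s => ∑' m : ℕ, (1:ℂ) * TE s (m + a)) s :=
    series_diff ha (K := 1) (U := {1}ᶜ) (c := fun m => (1:ℂ)) (E := TE)
      (fun m => by simp) isOpen_compl_singleton (by norm_num)
      (fun s hs u hu h => by rw [one_mul]; exact TE_bound h hs hu)
      (fun s hs u hu => TE_diff hu hs) hs hs1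
  exact (hA.fun_add hB).fun_add hC

end LerchAux

namespace LerchAux
open Complex MeasureTheory intervalIntegral Metric

lemma ident {f g : ℂ → ℂ} {V W : Set ℂ} (hV : IsOpen V) (hVc : Convex ℝ V) (hW : IsOpen W)
    (hne : W.Nonempty) (hWV : W ⊆ V) (hf : ∀ s ∈ V, DifferentiableAt ℂ f s)
    (hg : ∀ s ∈ V, DifferentiableAt ℂ g s) (h : ∀ s ∈ W, f s = g s) : ∀ s ∈ V, f s = g s := by
  obtain ⟨w, hw⟩ := hne
  have h1 : AnalyticOnNhd ℂ f V :=
    DifferentiableOn.analyticOnNhd (fun s hs => (hf s hs).differentiableWithinAt) hV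
  have h2 : AnalyticOnNhd ℂ g V :=
    DifferentiableOn.analyticOnNhd (fun s hs => (hg s hs).differentiableWithinAt) hV
  exact h1.eqOn_of_preconnected_of_eventuallyEq h2 hVc.isPreconnected (hWV hw)
    (Filter.eventually_of_mem (hW.mem_nhds hw) h)

lemma convex_im_pos : Convex ℝ {s : ℂ | 0 < s.im} := convex_halfSpace_im_gt 0
lemma isOpen_im_pos : IsOpen {s : ℂ | 0 < s.im} := isOpen_lt continuous_const continuous_im
lemma convex_re_gt (r : ℝ) : Convex ℝ {s : ℂ | r < s.re} := convex_halfSpace_re_gt r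
lemma isOpen_re_gt (r : ℝ) : IsOpen {s : ℂ | r < s.re} := isOpen_lt continuous_const continuous_re

/-- identity theorem for the upper half plane, from `1 < re s`. -/
lemma ident_up {f g : ℂ → ℂ} {r : ℝ}
    (hf : ∀ s : ℂ, 0 < s.im → r < s.re → DifferentiableAt ℂ f s)
    (hg : ∀ s : ℂ, 0 < s.im → r < s.re → DifferentiableAt ℂ g s)
    (h : ∀ s : ℂ, 0 < s.im → 1 < s.re → f s = g s) :
    ∀ s : ℂ, 0 < s.im → r < s.re → f s = g s := by
  intro s hs1 hs2
  refine ident (V := {s : ℂ | 0 < s.im} ∩ {s : ℂ | r < s.re})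
    (W := {s : ℂ | 0 < s.im} ∩ {s : ℂ | max r 1 < s.re}) (isOpen_im_pos.inter (isOpen_re_gt r))
    (convex_im_pos.inter (convex_re_gt r)) (isOpen_im_pos.inter (isOpen_re_gt _))
    ⟨((max r 1 + 1 : ℝ) : ℂ) + I, by simp, by
      simp only [Set.mem_ofPred_eq, add_re, ofReal_re, I_re, add_zero]; linarith⟩
    (fun s hs => ⟨hs.1, lt_of_le_of_lt (le_max_left r 1) hs.2⟩)
    (fun s hs => hf s hs.1 hs.2) (fun s hs => hg s hs.1 hs.2)
    (fun s hs => h s hs.1 (lt_of_le_of_lt (le_max_right r 1) hs.2)) s ⟨hs1, hs2⟩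

lemma sum_by_parts {z : ℂ} {b : ℕ → ℂ} (hb : Summable fun m => z ^ m * b m) (hz : z ≠ 0) :
    (1 - z) * ∑' m, z ^ m * b m = b 0 + z * ∑' m, z ^ m * (b (m + 1) - b m) ∧
    Summable fun m => z ^ m * (b (m + 1) - b m) := by
  have h1 : Summable fun m => z ^ m * b (m + 1) := by
    have := ((summable_nat_add_iff 1).2 hb).mul_left z⁻¹
    refine this.congr fun m => ?_
    rw [pow_succ]; field_simp
  have h2 : ∑' m, z ^ m * b m = b 0 + z * ∑' m, z ^ m * b (m + 1) := by
    rw [hb.tsum_eq_zero_add, pow_zero, one_mul, ← tsum_mul_left]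
    congr 1
    refine tsum_congr fun m => ?_
    rw [pow_succ]; ring
  simp only [mul_sub]
  refine ⟨?_, h1.sub hb⟩
  rw [h1.tsum_sub hb]
  linear_combination h2

lemma term_eq (μ a : ℝ) (s : ℂ) (m : ℕ) : exp (2 * Real.pi * I * μ * m) / ((m : ℂ) + a) ^ s =
    exp (2 * Real.pi * I * μ) ^ m * (((m + a : ℝ) : ℂ) ^ (-s)) := by
  rw [← exp_nat_mul, cpow_neg, div_eq_mul_inv]
  push_cast
  congr 2; ring

lemma GG_eq {μ a : ℝ} (ha : 0 < a) (hz : exp (2 * Real.pi * I * μ) ≠ 1) {s : ℂ} (hs : 1 < s.re) :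
    lerchSeries μ a s = GG (exp (2 * Real.pi * I * μ)) a s := by
  have hsum := lerchSeries_summable ha μ hs
  unfold lerchSeries
  simp only [term_eq] at hsum ⊢
  set z := exp (2 * Real.pi * I * μ) with hzdef
  have hz0 : z ≠ 0 := exp_ne_zero _
  have h1z : 1 - z ≠ 0 := sub_ne_zero.2 hz.symm
  obtain ⟨h1, h2⟩ := sum_by_parts hsum hz0
  obtain ⟨h3, -⟩ := sum_by_parts (b := fun m => ((((m + 1 : ℕ) + a : ℝ) : ℂ) ^ (-s)) - (((m + a : ℝ) : ℂ) ^ (-s))) h2 hz0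
  unfold GG
  have e : ∀ m : ℕ, D2 s (m + a) = ((((m + 1 + 1 : ℕ) + a : ℝ) : ℂ) ^ (-s)) - ((((m + 1 : ℕ) + a : ℝ) : ℂ) ^ (-s))
      - (((((m + 1 : ℕ) + a : ℝ) : ℂ) ^ (-s)) - (((m + a : ℝ) : ℂ) ^ (-s))) := by
    intro m
    unfold D2
    have e1 : (m:ℝ) + a + 2 = (m + 1 + 1 : ℕ) + a := by push_cast; ring
    have e2 : (m:ℝ) + a + 1 = (m + 1 : ℕ) + a := by push_cast; ring
    rw [e1, e2]; ring
  simp only [e]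
  have e3 : ((0 + 1 : ℕ) : ℝ) + a = a + 1 := by push_cast; ring
  have e4 : ((0 : ℕ) : ℝ) + a = a := by push_cast; ring
  simp only [e3, e4] at h1 h3
  field_simp
  linear_combination (1 - z) * h1 + z * h3

lemma HH_eq {a : ℝ} (ha : 0 < a) {s : ℂ} (hs : 1 < s.re) :
    lerchSeries 1 a s = HH a s := by
  have hsum := lerchSeries_summable ha 1 hs
  unfold lerchSeries
  have hz : exp (2 * Real.pi * I * (1:ℝ)) = 1 := by simp
  simp only [term_eq, hz, one_pow, one_mul] at hsum ⊢
  have hs1 : s - 1 ≠ 0 := by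
    intro h
    have := congrArg re h
    simp at this; linarith
  have h1s : 1 - s ≠ 0 := by intro h; apply hs1; linear_combination -h
  have hsum1 := (summable_nat_add_iff 1).2 hsum
  have h0 := hsum.tsum_eq_zero_add
  -- telescoping
  have htel : HasSum (fun m : ℕ => ((((m + 1 : ℕ) + a : ℝ) : ℂ) ^ (1 - s) - ((m + a : ℝ) : ℂ) ^ (1 - s)) / (1 - s))
      ((0 - (a : ℂ) ^ (1 - s)) / (1 - s)) := by
    have hlim : Filter.Tendsto (fun n : ℕ => ((((n : ℕ) + a : ℝ) : ℂ) ^ (1 - s) - ((0 : ℕ) + a : ℝ) ^ (1 - s)) / (1 - s))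
        Filter.atTop (nhds ((0 - (a : ℂ) ^ (1 - s)) / (1 - s))) := by
      have h1 : Filter.Tendsto (fun n : ℕ => (((n : ℕ) + a : ℝ) : ℂ) ^ (1 - s)) Filter.atTop (nhds 0) := by
        rw [tendsto_zero_iff_norm_tendsto_zero]
        have h2 : Filter.Tendsto (fun n : ℕ => ((n:ℝ) + a) ^ (-(s.re - 1))) Filter.atTop (nhds 0) :=
          (tendsto_rpow_neg_atTop (by linarith)).comp
            (Filter.tendsto_atTop_add_const_right _ _ tendsto_natCast_atTop_atTop)
        refine h2.congr fun n => ?_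
        rw [norm_cpow_eq_rpow_re_of_pos (by positivity)]
        simp
      have := (h1.sub_const ((a : ℂ) ^ (1 - s))).div_const (1 - s)
      simpa using this
    have hterm : ∀ m : ℕ, ((((m + 1 : ℕ) + a : ℝ) : ℂ) ^ (1 - s) - ((m + a : ℝ) : ℂ) ^ (1 - s)) / (1 - s) =
        (1/2) * (((m + a : ℝ) : ℂ) ^ (-s) + (((m + 1 : ℕ) + a : ℝ) : ℂ) ^ (-s)) - TE s (m + a) := by
      intro m
      unfold TE
      have e2 : (m:ℝ) + a + 1 = (m + 1 : ℕ) + a := by push_cast; ring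
      rw [e2]; ring
    have hTE : Summable fun m : ℕ => TE s (m + a) :=
      Summable.of_norm_bounded ((summable_add_rpow ha (x := s.re + 2) (by linarith)).mul_left (‖s‖ * ‖s + 1‖))
        (fun m => TE_bound (by linarith) (sub_ne_zero.1 hs1) (by positivity))
    have hS : Summable (fun m : ℕ => ((((m + 1 : ℕ) + a : ℝ) : ℂ) ^ (1 - s) - ((m + a : ℝ) : ℂ) ^ (1 - s)) / (1 - s)) := by
      simp only [hterm]
      exact ((hsum.add hsum1).mul_left _).sub hTE
    rw [hS.hasSum_iff_tendsto_nat]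
    refine hlim.congr fun n => ?_
    rw [← Finset.sum_div, Finset.sum_range_sub (fun m : ℕ => ((m + a : ℝ) : ℂ) ^ (1 - s))]
  have hTEsum : HasSum (fun m : ℕ => TE s (m + a))
      ((1/2) * ((∑' m : ℕ, ((m + a : ℝ) : ℂ) ^ (-s)) + ∑' m : ℕ, (((m + 1 : ℕ) + a : ℝ) : ℂ) ^ (-s))
        - (0 - (a : ℂ) ^ (1 - s)) / (1 - s)) := by
    have := ((hsum.hasSum.add hsum1.hasSum).mul_left (1/2 : ℂ)).sub htel
    refine this.congr_fun fun m => ?_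
    unfold TE
    have e2 : (m:ℝ) + a + 1 = (m + 1 : ℕ) + a := by push_cast; ring
    rw [e2]
  unfold HH
  simp only [one_mul]
  rw [hTEsum.tsum_eq]
  simp only [Nat.cast_zero, zero_add] at h0
  have e5 : (a : ℂ) ^ (1 - s) / (s - 1) = (0 - (a : ℂ) ^ (1 - s)) / (1 - s) := by
    field_simp; ring
  rw [e5]
  linear_combination (1/2 : ℂ) * h0

lemma rpow_between {u p q x : ℝ} (hu : 0 < u) (h1 : p ≤ x) (h2 : x ≤ q) : u ^ x ≤ u ^ p + u ^ q := by
  have p1 := Real.rpow_pos_of_pos hu p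
  have p2 := Real.rpow_pos_of_pos hu q
  rcases le_total 1 u with h | h
  · have := Real.rpow_le_rpow_of_exponent_le h h2; linarith
  · have := Real.rpow_le_rpow_of_exponent_ge hu h h1; linarith

lemma tsum_quad_bound {a : ℝ} (ha : 0 < a) : ∃ C, 0 ≤ C ∧ ∀ (t : ℕ → ℂ) (s : ℂ), -1/2 ≤ s.re → s.re ≤ 14 →
    1 ≤ ‖s‖ → (∀ m, ‖t m‖ ≤ 6 * (‖s‖ * ‖s + 1‖ * ((m:ℝ) + a) ^ (-(s.re + 2)))) →
    ‖∑' m, t m‖ ≤ C * ‖s‖ ^ 2 := by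
  set S := ∑' m : ℕ, (((m:ℝ) + a) ^ (-(16:ℝ)) + ((m:ℝ) + a) ^ (-(3/2:ℝ))) with hS
  have hsum : Summable fun m : ℕ => (((m:ℝ) + a) ^ (-(16:ℝ)) + ((m:ℝ) + a) ^ (-(3/2:ℝ))) :=
    (summable_add_rpow ha (by norm_num)).add (summable_add_rpow ha (by norm_num))
  have hS0 : 0 ≤ S := tsum_nonneg fun m => by positivity
  refine ⟨12 * S, by positivity, fun t s h1 h2 h3 ht => ?_⟩
  have h4 : ‖s + 1‖ ≤ 2 * ‖s‖ := (norm_add_le _ _).trans (by simp; linarith)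
  have := tsum_of_norm_bounded (f := t) ((hsum.hasSum).mul_left (12 * ‖s‖ ^ 2)) (fun m => by
    refine (ht m).trans ?_
    have hu : (0:ℝ) < m + a := by positivity
    have := rpow_between (u := m + a) (x := -(s.re + 2)) hu (p := -(16:ℝ)) (q := -(3/2:ℝ)) (by linarith) (by linarith)
    calc 6 * (‖s‖ * ‖s + 1‖ * ((m:ℝ) + a) ^ (-(s.re + 2)))
        ≤ 6 * (‖s‖ * (2 * ‖s‖) * (((m:ℝ) + a) ^ (-(16:ℝ)) + ((m:ℝ) + a) ^ (-(3/2:ℝ)))) := by gcongr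
      _ = _ := by ring)
  calc ‖∑' m, t m‖ ≤ 12 * ‖s‖ ^ 2 * S := this
    _ = _ := by ring

lemma pw_bound {u : ℝ} (hu : 0 < u) : ∃ C, 0 ≤ C ∧ ∀ s : ℂ, -1/2 ≤ s.re → s.re ≤ 14 → 1 ≤ ‖s‖ →
    ‖(u : ℂ) ^ (-s)‖ ≤ C * ‖s‖ ^ 2 := by
  refine ⟨u ^ (-(14:ℝ)) + u ^ (1/2:ℝ), by positivity, fun s h1 h2 h3 => ?_⟩
  rw [norm_pw s hu]
  refine (rpow_between hu (p := -(14:ℝ)) (q := 1/2) (by linarith) (by linarith)).trans ?_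
  have : 1 ≤ ‖s‖ ^ 2 := one_le_pow₀ h3
  exact le_mul_of_one_le_right (by positivity) this

lemma GG_growth {z : ℂ} (hz1 : ‖z‖ = 1) {a : ℝ} (ha : 0 < a) : ∃ C, ∀ s : ℂ, -1/2 ≤ s.re →
    s.re ≤ 14 → 1 ≤ |s.im| → ‖GG z a s‖ ≤ C * ‖s‖ ^ 2 := by
  obtain ⟨C1, hC1, h1⟩ := tsum_quad_bound ha
  obtain ⟨C2, hC2, h2⟩ := pw_bound ha
  obtain ⟨C3, hC3, h3⟩ := pw_bound (u := a + 1) (by linarith)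
  refine ⟨C2 / ‖1 - z‖ + (C3 + C2) / ‖1 - z‖ ^ 2 + 1 / ‖1 - z‖ ^ 2 * C1, fun s hs hs' hi => ?_⟩
  have hn : 1 ≤ ‖s‖ := hi.trans (abs_im_le_norm s)
  have b1 := h1 (fun m => z ^ m * D2 s (m + a)) s hs hs' hn (fun m => by
    rw [norm_mul, norm_pow, hz1, one_pow, one_mul]
    exact D2_bound (by linarith) (by positivity))
  have b2 := h2 s hs hs' hn
  have b3 := h3 s hs hs' hn
  unfold GG
  refine (norm_add₃_le).trans ?_
  simp only [norm_div, norm_mul, norm_pow, hz1, one_mul, one_pow]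
  have b4 := (norm_sub_le (((a + 1 : ℝ) : ℂ) ^ (-s)) ((a : ℂ) ^ (-s))).trans (add_le_add b3 b2)
  calc _ ≤ C2 * ‖s‖ ^ 2 / ‖1 - z‖ + (C3 * ‖s‖ ^ 2 + C2 * ‖s‖ ^ 2) / ‖1 - z‖ ^ 2 +
      1 / ‖1 - z‖ ^ 2 * (C1 * ‖s‖ ^ 2) := by gcongr
    _ = _ := by ring

lemma HH_growth {a : ℝ} (ha : 0 < a) : ∃ C, ∀ s : ℂ, -1/2 ≤ s.re →
    s.re ≤ 14 → 1 ≤ |s.im| → ‖HH a s‖ ≤ C * ‖s‖ ^ 2 := by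
  obtain ⟨C1, hC1, h1⟩ := tsum_quad_bound ha
  obtain ⟨C2, hC2, h2⟩ := pw_bound ha
  refine ⟨(1/2) * C2 + a * C2 + C1, fun s hs hs' hi => ?_⟩
  have hn : 1 ≤ ‖s‖ := hi.trans (abs_im_le_norm s)
  have hn1 : 1 ≤ ‖s - 1‖ := hi.trans ((abs_im_le_norm (s - 1)).trans' (by simp))
  have hne : s ≠ 1 := by rintro rfl; simp at hn1; linarith
  have b1 := h1 (fun m => 1 * TE s (m + a)) s hs hs' hn (fun m => by
    rw [one_mul]
    refine (TE_bound (by linarith) hne (by positivity)).trans ?_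
    have : 0 ≤ ‖s‖ * ‖s + 1‖ * ((m:ℝ) + a) ^ (-(s.re + 2)) := by positivity
    linarith)
  have b2 := h2 s hs hs' hn
  unfold HH
  refine (norm_add₃_le).trans ?_
  have hac : (a : ℂ) ≠ 0 := by exact_mod_cast ha.ne'
  have e : (a : ℂ) ^ (1 - s) = a * (a : ℂ) ^ (-s) := by
    rw [sub_eq_add_neg, cpow_add _ _ hac, cpow_one]
  rw [e]
  simp only [norm_div, norm_mul, norm_real, Real.norm_of_nonneg ha.le] at b1 ⊢
  have b3 : a * ‖(a : ℂ) ^ (-s)‖ / ‖s - 1‖ ≤ a * (C2 * ‖s‖ ^ 2) := by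
    rw [div_le_iff₀ (by linarith)]
    have : a * ‖(a : ℂ) ^ (-s)‖ ≤ a * (C2 * ‖s‖ ^ 2) := by gcongr
    refine this.trans (le_mul_of_one_le_right (by positivity) hn1)
  have : ‖(1:ℂ)‖ / ‖(2:ℂ)‖ = 1/2 := by norm_num
  rw [this]
  linarith

end LerchAux

namespace LerchAux
open Complex MeasureTheory intervalIntegral Metric

lemma zmod_sum (q : ℕ) [NeZero q] (f : ℕ → ℂ) : ∑ j : ZMod q, f j.val = ∑ r ∈ Finset.range q, f r := by
  obtain ⟨n, rfl⟩ := Nat.exists_eq_succ_of_ne_zero (NeZero.ne q)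
  exact (Finset.sum_range f).symm

lemma char_sum (q : ℕ) [NeZero q] (d : ℤ) :
    ∑ j : ZMod q, exp (2 * Real.pi * I * ((j.val : ℂ) * d / q)) = if (q : ℤ) ∣ d then (q : ℂ) else 0 := by
  have hq : (q : ℂ) ≠ 0 := by exact_mod_cast NeZero.ne q
  rw [zmod_sum q (fun r => exp (2 * Real.pi * I * ((r : ℂ) * d / q)))]
  set x := exp (2 * Real.pi * I * (d / q)) with hx
  have h1 : ∀ r : ℕ, exp (2 * Real.pi * I * ((r : ℂ) * d / q)) = x ^ r := by
    intro r
    rw [hx, ← exp_nat_mul]; congr 1; ring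
  simp only [h1]
  have hxq : x ^ q = 1 := by
    rw [hx, ← exp_nat_mul, exp_eq_one_iff]
    exact ⟨d, by field_simp⟩
  split_ifs with h
  · obtain ⟨k, rfl⟩ := h
    have : x = 1 := by
      rw [hx, exp_eq_one_iff]
      exact ⟨k, by push_cast; field_simp⟩
    simp [this]
  · have hx1 : x ≠ 1 := by
      intro h1
      rw [hx, exp_eq_one_iff] at h1
      obtain ⟨n, hn⟩ := h1
      apply h
      refine ⟨n, ?_⟩
      have h2 : (2 * Real.pi * I : ℂ) ≠ 0 := by simp [Real.pi_ne_zero]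
      have h3 : (d : ℂ) / q = n := by
        have : (2 * Real.pi * I : ℂ) * (d / q) = (2 * Real.pi * I) * n := by rw [hn]; ring
        exact mul_left_cancel₀ h2 this
      rw [div_eq_iff hq] at h3
      have : (d : ℂ) = ((q * n : ℤ) : ℂ) := by push_cast; rw [h3]; ring
      exact_mod_cast this
    rw [geom_sum_eq hx1, hxq, sub_self, zero_div]

lemma pick_sum {q p : ℕ} (hp : 1 ≤ p) (hpq : p ≤ q) {f : ℕ → ℂ} (hf : f 0 = 0) :
    ∑' n : ℕ, (if (q : ℤ) ∣ (n : ℤ) - p then f n else 0) = ∑' k : ℕ, f (q * k + p) := by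
  have hinj : Function.Injective (fun k : ℕ => q * k + p) := by
    intro a b h
    simp only [add_left_inj] at h
    exact Nat.eq_of_mul_eq_mul_left (by omega) h
  rw [← hinj.tsum_eq]
  · refine tsum_congr fun k => ?_
    rw [if_pos]
    exact ⟨k, by push_cast; ring⟩
  · intro n hn
    rw [Function.mem_support] at hn
    have h1 : (q : ℤ) ∣ (n : ℤ) - p := by
      by_contra h; exact hn (if_neg h)
    rw [if_pos h1] at hn
    have hn0 : n ≠ 0 := by rintro rfl; exact hn hf
    obtain ⟨k, hk⟩ := h1
    have hk0 : 0 ≤ k := by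
      by_contra h
      push Not at h
      have : (q : ℤ) * k ≤ -q := by nlinarith
      omega
    lift k to ℕ using hk0
    refine ⟨k, ?_⟩
    simp only
    zify; linarith

lemma exp_part {q p p0 : ℕ} [NeZero q] (hp0 : 1 ≤ p0) (hp0q : p0 ≤ q) (ε : ℤ) (hε : ε = 1 ∨ ε = -1)
    (hdiv : (q : ℤ) ∣ p + ε * p0) (β : ℝ) {w : ℂ} (hw : 1 < w.re) :
    ∑ j : ZMod q, exp (2 * Real.pi * I * ((j.val : ℂ) * p / q)) *
      HurwitzZeta.expZeta (((β + ε * j.val) / q : ℝ) : UnitAddCircle) w =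
    (q : ℂ) ^ (1 - w) * exp (2 * Real.pi * I * (β * (p0 / q : ℝ))) * lerchSeries β (p0 / q : ℝ) w := by
  have hqn : (0:ℝ) < q := by exact_mod_cast Nat.pos_of_ne_zero (NeZero.ne q)
  have hq : (q : ℂ) ≠ 0 := by exact_mod_cast NeZero.ne q
  have hw0 : w ≠ 0 := by rintro rfl; simp at hw; linarith
  set f : ℕ → ℂ := fun n => q * (exp (2 * Real.pi * I * (β / q) * n) / (n : ℂ) ^ w) with hf
  have hS : HasSum (fun n : ℕ => ∑ j : ZMod q, exp (2 * Real.pi * I * ((j.val : ℂ) * p / q)) *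
      (exp (2 * Real.pi * I * ((β + ε * j.val) / q : ℝ) * n) / (n : ℂ) ^ w))
      (∑ j : ZMod q, exp (2 * Real.pi * I * ((j.val : ℂ) * p / q)) *
      HurwitzZeta.expZeta (((β + ε * j.val) / q : ℝ) : UnitAddCircle) w) :=
    hasSum_sum fun j _ => (HurwitzZeta.hasSum_expZeta_of_one_lt_re _ hw).mul_left _
  rw [← hS.tsum_eq]
  have key : ∀ n : ℕ, ∑ j : ZMod q, exp (2 * Real.pi * I * ((j.val : ℂ) * p / q)) *
      (exp (2 * Real.pi * I * ((β + ε * j.val) / q : ℝ) * n) / (n : ℂ) ^ w) =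
      if (q : ℤ) ∣ (n : ℤ) - p0 then f n else 0 := by
    intro n
    have h1 : ∀ j : ZMod q, exp (2 * Real.pi * I * ((j.val : ℂ) * p / q)) *
      (exp (2 * Real.pi * I * ((β + ε * j.val) / q : ℝ) * n) / (n : ℂ) ^ w) =
      exp (2 * Real.pi * I * ((j.val : ℂ) * ((p + ε * n : ℤ) : ℂ) / q)) *
      (exp (2 * Real.pi * I * (β / q) * n) / (n : ℂ) ^ w) := by
      intro j
      have e : exp (2 * Real.pi * I * ((j.val : ℂ) * p / q)) *
          exp (2 * Real.pi * I * ((β + ε * j.val) / q : ℝ) * n) =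
          exp (2 * Real.pi * I * ((j.val : ℂ) * ((p + ε * n : ℤ) : ℂ) / q)) *
          exp (2 * Real.pi * I * (β / q) * n) := by
        rw [← exp_add, ← exp_add]
        congr 1
        push_cast; field_simp; ring
      rw [← mul_div_assoc (exp _) (exp _), ← mul_div_assoc (exp _) (exp _), e]
    simp only [h1]
    rw [← Finset.sum_mul, char_sum]
    have hiff : (q : ℤ) ∣ p + ε * n ↔ (q : ℤ) ∣ (n : ℤ) - p0 := by
      have e : (p : ℤ) + ε * n = (p + ε * p0) + ε * (n - p0) := by ring
      rw [e, dvd_add_right hdiv]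
      rcases hε with rfl | rfl <;> simp
      · rw [← dvd_neg]; ring_nf
    simp only [hiff, hf]
    split_ifs <;> simp
  simp only [key]
  rw [pick_sum hp0 hp0q (by simp [hf, hw0])]
  unfold lerchSeries
  rw [← tsum_mul_left]
  refine tsum_congr fun k => ?_
  simp only [hf]
  have e1 : ((q * k + p0 : ℕ) : ℂ) = (q : ℂ) * ((k : ℂ) + (p0 / q : ℝ)) := by
    push_cast; field_simp
  have e2 : ((q * k + p0 : ℕ) : ℂ) ^ w = (q : ℂ) ^ w * ((k : ℂ) + (p0 / q : ℝ)) ^ w := by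
    rw [e1]
    have : ((k : ℂ) + (p0 / q : ℝ)) = ((k + p0 / q : ℝ) : ℂ) := by push_cast; ring
    rw [this]
    exact mul_cpow_ofReal_nonneg (a := (q:ℝ)) hqn.le (by positivity) w
  rw [e2, e1, cpow_sub _ _ hq, cpow_one]
  have hqw : (q : ℂ) ^ w ≠ 0 := by rw [Ne, cpow_eq_zero_iff]; simp [hq]
  have e3 : exp (2 * Real.pi * I * (β / q) * ((q : ℂ) * ((k : ℂ) + (p0 / q : ℝ)))) =
      exp (2 * Real.pi * I * (β * (p0 / q : ℝ))) * exp (2 * Real.pi * I * β * k) := by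
    rw [← exp_add]; congr 1; push_cast; field_simp; ring
  rw [e3]
  field_simp

/-- right side of the functional equation -/
noncomputable def FE (lam lam' alp : ℝ) (w : ℂ) : ℂ :=
  (2 * Real.pi) ^ (-w) * Gamma w *
    (exp (Real.pi * I * w / 2) * (exp (2 * Real.pi * I * (-alp * lam)) * lerchSeries (-alp) lam w) +
     exp (-Real.pi * I * w / 2) * (exp (2 * Real.pi * I * (alp * lam')) * lerchSeries alp lam' w))

/-- rational combination of Hurwitz zeta functions -/
noncomputable def RR (q p : ℕ) [NeZero q] (alp : ℝ) (s : ℂ) : ℂ :=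
  (q : ℂ) ^ (-s) * ∑ j : ZMod q, exp (2 * Real.pi * I * ((j.val : ℂ) * p / q)) *
    HurwitzZeta.hurwitzZeta (((alp + j.val) / q : ℝ) : UnitAddCircle) s

lemma RR_diff (q p : ℕ) [NeZero q] (alp : ℝ) {s : ℂ} (hs : s ≠ 1) :
    DifferentiableAt ℂ (RR q p alp) s := by
  have hq : (q : ℂ) ≠ 0 := by exact_mod_cast NeZero.ne q
  have h1 : DifferentiableAt ℂ (fun s => (q : ℂ) ^ (-s)) s :=
    differentiableAt_id.neg.const_cpow (Or.inl hq)
  have h2 : DifferentiableAt ℂ (fun s => ∑ j : ZMod q, exp (2 * Real.pi * I * ((j.val : ℂ) * p / q)) *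
    HurwitzZeta.hurwitzZeta (((alp + j.val) / q : ℝ) : UnitAddCircle) s) s :=
    DifferentiableAt.fun_sum fun j _ => (HurwitzZeta.differentiableAt_hurwitzZeta _ hs).const_mul _
  exact h1.fun_mul h2

lemma RR_FE {q p p' : ℕ} [NeZero q] (hp : 1 ≤ p) (hpq : p ≤ q) (hp' : 1 ≤ p') (hpq' : p' ≤ q)
    (hdiv : q ∣ p + p') (alp : ℝ) {w : ℂ} (hw : 1 < w.re) :
    RR q p alp (1 - w) = FE (p / q : ℝ) (p' / q : ℝ) alp w := by
  have hq : (q : ℂ) ≠ 0 := by exact_mod_cast NeZero.ne q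
  unfold RR FE
  have h1 : ∀ j : ZMod q, HurwitzZeta.hurwitzZeta (((alp + j.val) / q : ℝ) : UnitAddCircle) (1 - w) =
      (2 * Real.pi) ^ (-w) * Gamma w *
    (exp (-Real.pi * I * w / 2) * HurwitzZeta.expZeta (((alp + (1 : ℤ) * j.val) / q : ℝ) : UnitAddCircle) w
     + exp (Real.pi * I * w / 2) * HurwitzZeta.expZeta (((-alp + (-1 : ℤ) * j.val) / q : ℝ) : UnitAddCircle) w) := by
    intro j
    rw [HurwitzZeta.hurwitzZeta_one_sub]
    · have e1 : (alp + (1 : ℤ) * j.val) / q = (alp + j.val) / q := by push_cast; ring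
      have e2 : (((-alp + (-1 : ℤ) * j.val) / q : ℝ) : UnitAddCircle) =
          -(((alp + j.val) / q : ℝ) : UnitAddCircle) := by
        rw [← AddCircle.coe_neg]; congr 1; push_cast; ring
      rw [e1, e2]
    · intro n h
      have := congrArg re h
      simp at this
      have : (0:ℝ) ≤ n := Nat.cast_nonneg n
      linarith
    · right; rintro rfl; simp at hw
  simp only [h1]
  have hA := exp_part (q := q) (p := p) hp' hpq' 1 (Or.inl rfl) (by rw [one_mul]; exact_mod_cast hdiv) alp hw
  have hB := exp_part (q := q) (p := p) hp hpq (-1) (Or.inr rfl) (by simp) (-alp) hw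
  have e : ∀ j : ZMod q, exp (2 * Real.pi * I * ((j.val : ℂ) * p / q)) * ((2 * Real.pi) ^ (-w) * Gamma w *
    (exp (-Real.pi * I * w / 2) * HurwitzZeta.expZeta (((alp + (1 : ℤ) * j.val) / q : ℝ) : UnitAddCircle) w
     + exp (Real.pi * I * w / 2) * HurwitzZeta.expZeta (((-alp + (-1 : ℤ) * j.val) / q : ℝ) : UnitAddCircle) w)) =
     (2 * Real.pi) ^ (-w) * Gamma w * exp (-Real.pi * I * w / 2) * (exp (2 * Real.pi * I * ((j.val : ℂ) * p / q)) * HurwitzZeta.expZeta (((alp + (1 : ℤ) * j.val) / q : ℝ) : UnitAddCircle) w) +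
     (2 * Real.pi) ^ (-w) * Gamma w * exp (Real.pi * I * w / 2) * (exp (2 * Real.pi * I * ((j.val : ℂ) * p / q)) * HurwitzZeta.expZeta (((-alp + (-1 : ℤ) * j.val) / q : ℝ) : UnitAddCircle) w) := by
    intro j; ring
  simp only [e]
  rw [Finset.sum_add_distrib, ← Finset.mul_sum, ← Finset.mul_sum, hA, hB]
  have e3 : (q : ℂ) ^ (-(1 - w)) * (q : ℂ) ^ (1 - w) = 1 := by
    rw [← cpow_add _ _ hq]; simp
  push_cast
  linear_combination ((2 * Real.pi) ^ (-w) * Gamma w *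
    (exp (Real.pi * I * w / 2) * (exp (2 * Real.pi * I * (-alp * (p / q))) * lerchSeries (-alp) (p / q) w) +
     exp (-Real.pi * I * w / 2) * (exp (2 * Real.pi * I * (alp * (p' / q))) * lerchSeries alp (p' / q) w))) * e3

lemma RR_series {q p : ℕ} [NeZero q] {alp : ℝ} (h0 : 0 < alp) (h1 : alp ≤ 1) {s : ℂ} (hs : 1 < s.re) :
    lerchSeries (p / q : ℝ) alp s = RR q p alp s := by
  have hqn : (0:ℝ) < q := by exact_mod_cast Nat.pos_of_ne_zero (NeZero.ne q)
  have hq : (q : ℂ) ≠ 0 := by exact_mod_cast NeZero.ne q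
  have hsum := lerchSeries_summable h0 (p / q) hs
  unfold lerchSeries RR
  rw [Nat.sumByResidueClasses hsum q, Finset.mul_sum]
  refine Finset.sum_congr rfl fun j _ => ?_
  have hj : (j.val : ℝ) + 1 ≤ q := by exact_mod_cast j.val_lt
  have hmem : (alp + j.val) / q ∈ Set.Icc (0:ℝ) 1 := by
    constructor
    · positivity
    · rw [div_le_one hqn]; linarith
  rw [← (HurwitzZeta.hasSum_hurwitzZeta_of_one_lt_re hmem hs).tsum_eq, ← mul_assoc, ← tsum_mul_left]
  refine tsum_congr fun m => ?_
  have e1 : (((j.val + q * m : ℕ) : ℂ) + alp) ^ s = (q : ℂ) ^ s * ((m : ℂ) + ((alp + j.val) / q : ℝ)) ^ s := by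
    have e2 : (((j.val + q * m : ℕ) : ℂ) + alp) = ((q : ℝ) : ℂ) * ((m + (alp + j.val) / q : ℝ) : ℂ) := by
      push_cast; field_simp; ring
    rw [e2, mul_cpow_ofReal_nonneg hqn.le (by positivity)]
    push_cast; rfl
  have e3 : exp (2 * Real.pi * I * (p / q : ℝ) * (j.val + q * m : ℕ)) =
      exp (2 * Real.pi * I * ((j.val : ℂ) * p / q)) := by
    rw [exp_eq_exp_iff_exists_int]
    refine ⟨p * m, ?_⟩
    push_cast; field_simp
  rw [e1, e3, cpow_neg]
  rw [div_eq_mul_inv, mul_inv, one_div]; ring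

end LerchAux

namespace LerchAux
open Complex MeasureTheory intervalIntegral Metric

lemma exp_ne_one {μ : ℝ} (h0 : 0 < μ) (h1 : μ < 1) : exp (2 * Real.pi * I * μ) ≠ 1 := by
  intro h
  rw [exp_eq_one_iff] at h
  obtain ⟨n, hn⟩ := h
  have hpi : (2 * Real.pi * I : ℂ) ≠ 0 := by simp [Real.pi_ne_zero]
  have h2 : (2 * Real.pi * I : ℂ) * μ = (2 * Real.pi * I) * n := by rw [hn]; ring
  have h3 : (μ : ℂ) = n := mul_left_cancel₀ hpi h2
  have h4 : μ = n := by exact_mod_cast h3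
  rw [h4] at h0 h1
  have a1 : 0 < n := by exact_mod_cast h0
  have a2 : n < 1 := by exact_mod_cast h1
  omega

lemma norm_exp_one (μ : ℝ) : ‖exp (2 * Real.pi * I * μ)‖ = 1 := by
  have := norm_exp_aux μ 1
  simpa using this

lemma GG_cont {a : ℝ} (ha : 0 < a) {s : ℂ} (hs : -1 < s.re) :
    ContinuousOn (fun μ : ℝ => GG (exp (2 * Real.pi * I * μ)) a s) (Set.Ioo 0 1) := by
  have he : ContinuousOn (fun μ : ℝ => exp (2 * Real.pi * I * μ)) (Set.Ioo 0 1) := by fun_prop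
  have hne : ∀ μ ∈ Set.Ioo (0:ℝ) 1, (1 - exp (2 * Real.pi * I * μ)) ≠ 0 := fun μ hμ h =>
    exp_ne_one hμ.1 hμ.2 (sub_eq_zero.1 h).symm
  have ht : ContinuousOn (fun μ : ℝ => ∑' m : ℕ, exp (2 * Real.pi * I * μ) ^ m * D2 s (m + a)) (Set.Ioo 0 1) := by
    refine continuousOn_tsum (u := fun m : ℕ => 6 * (‖s‖ * ‖s + 1‖ * ((m:ℝ) + a) ^ (-(s.re + 2))))
      (fun m => (he.pow m).mul continuousOn_const) ?_ ?_
    · exact ((summable_add_rpow ha (by linarith)).mul_left _).mul_left _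
    · intro m μ _
      rw [norm_mul, norm_pow, norm_exp_one, one_pow, one_mul]
      exact D2_bound (by linarith) (by positivity)
  unfold GG
  have h1 : ContinuousOn (fun μ : ℝ => 1 - exp (2 * Real.pi * I * μ)) (Set.Ioo 0 1) := continuousOn_const.sub he
  have hne2 : ∀ μ ∈ Set.Ioo (0:ℝ) 1, (1 - exp (2 * Real.pi * I * μ)) ^ 2 ≠ 0 := fun μ hμ => pow_ne_zero _ (hne μ hμ)
  exact ((continuousOn_const.div h1 hne).add ((he.mul continuousOn_const).div (h1.pow 2) hne2)).add
    (((he.pow 2).div (h1.pow 2) hne2).mul ht)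

lemma series_cont (μ : ℝ) {w : ℂ} (hw : 1 < w.re) :
    ContinuousOn (fun a : ℝ => lerchSeries μ a w) (Set.Ioo 0 1) := by
  have h1 : ContinuousOn (fun a : ℝ => (a : ℂ) ^ (-w) * (1 + DD μ a w)) (Set.Ioo 0 1) := by
    have hp : ContinuousOn (fun a : ℝ => (a : ℂ) ^ (-w)) (Set.Ioo 0 1) := by
      intro a ha
      exact (continuousAt_ofReal_cpow_const a _ (Or.inr ha.1.ne')).continuousWithinAt
    refine hp.mul (continuousOn_const.add ?_)
    unfold DD
    refine continuousOn_tsum (u := fun m : ℕ => 1 / ((m + 1 : ℕ) : ℝ) ^ w.re) ?_ 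
      ((summable_nat_add_iff 1).2 (Real.summable_one_div_nat_rpow.2 hw)) ?_
    · intro m
      refine continuousOn_const.mul ?_
      intro a ha
      have h2 : ContinuousAt (fun a : ℝ => rr a m) a := by
        unfold rr
        have : (m : ℝ) + 1 + a ≠ 0 := by have := ha.1; positivity
        fun_prop (disch := assumption)
      exact (ContinuousAt.comp (f := fun a : ℝ => rr a m) (g := fun x : ℝ => (x : ℂ) ^ w)
        (continuousAt_ofReal_cpow_const _ _ (Or.inr (rr_pos ha.1 m).ne')) h2).continuousWithinAt
    · intro m a ha
      have ha0 := ha.1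
      rw [norm_DDterm ha.1, one_div, ← Real.inv_rpow (by positivity)]
      refine Real.rpow_le_rpow (rr_pos ha.1 m).le ?_ (by linarith)
      unfold rr
      rw [inv_eq_one_div, div_le_div_iff₀ (by positivity) (by positivity)]
      push_cast
      nlinarith [ha.2, Nat.cast_nonneg (α := ℝ) m]
  exact h1.congr fun a ha => lerchSeries_eq ha.1 μ hw

lemma FE_cont (alp : ℝ) {w : ℂ} (hw : 1 < w.re) :
    ContinuousOn (fun μ : ℝ => FE μ (1 - μ) alp w) (Set.Ioo 0 1) := by
  have h1 := series_cont (-alp) hw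
  have h2 : ContinuousOn (fun a : ℝ => lerchSeries alp (1 - a) w) (Set.Ioo 0 1) :=
    (series_cont alp hw).comp (f := fun a : ℝ => 1 - a) (by fun_prop)
      (fun a ha => ⟨by linarith [ha.2], by linarith [ha.1]⟩)
  unfold FE
  refine continuousOn_const.mul ((continuousOn_const.mul (ContinuousOn.mul ?_ h1)).add
    (continuousOn_const.mul (ContinuousOn.mul ?_ h2)))
  · fun_prop
  · fun_prop

lemma GG_FE_rat {q p : ℕ} (hp : 1 ≤ p) (hpq : p < q) {alp : ℝ} (h0 : 0 < alp) (h1 : alp ≤ 1) {w : ℂ}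
    (hw : 1 < w.re) (hw2 : w.re < 2) (hwi : w.im < 0) :
    GG (exp (2 * Real.pi * I * (p / q : ℝ))) alp (1 - w) = FE (p / q : ℝ) (1 - p / q : ℝ) alp w := by
  have : NeZero q := ⟨by omega⟩
  have hq0 : (0:ℝ) < q := by exact_mod_cast (by omega : 0 < q)
  have hp0 : (0:ℝ) < p := by exact_mod_cast (by omega : 0 < p)
  have hne := exp_ne_one (μ := (p / q : ℝ)) (by positivity)
    (by rw [div_lt_one hq0]; exact_mod_cast hpq)
  have e := ident_up (r := -1) (f := RR q p alp) (g := GG (exp (2 * Real.pi * I * (p / q : ℝ))) alp)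
    (fun s hs _ => RR_diff q p alp (by rintro rfl; simp at hs))
    (fun s _ hs => GG_diff (norm_exp_one _) h0 hs)
    (fun s _ hs => by rw [← RR_series h0 h1 hs, GG_eq h0 hne hs])
  rw [← e (1 - w) (by simp; linarith) (by simp; linarith),
    RR_FE (p' := q - p) hp hpq.le (by omega) (by omega) (by rw [Nat.add_sub_cancel' hpq.le]) alp hw]
  congr 1
  rw [Nat.cast_sub hpq.le]; field_simp

lemma GG_FE {lam : ℝ} (hl0 : 0 < lam) (hl1 : lam < 1) {alp : ℝ} (h0 : 0 < alp) (h1 : alp ≤ 1) {w : ℂ}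
    (hw : 1 < w.re) (hw2 : w.re < 2) (hwi : w.im < 0) :
    GG (exp (2 * Real.pi * I * lam)) alp (1 - w) = FE lam (1 - lam) alp w := by
  have hd : Dense (Set.range ((↑) : ℚ → ℝ)) := Rat.denseRange_cast
  have key : Set.EqOn (fun μ : ℝ => GG (exp (2 * Real.pi * I * μ)) alp (1 - w))
      (fun μ : ℝ => FE μ (1 - μ) alp w) (Set.Ioo 0 1 ∩ Set.range ((↑) : ℚ → ℝ)) := by
    rintro _ ⟨⟨a1, a2⟩, r, rfl⟩
    have b1 : 0 < r := by exact_mod_cast a1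
    have b2 : r < 1 := by exact_mod_cast a2
    have c1 : 0 < r.num := Rat.num_pos.2 b1
    have c2 : r.num < r.den := by
      have := Rat.lt_iff r 1
      simp at this; exact this.1 b2
    obtain ⟨p, hp⟩ : ∃ p : ℕ, r.num = p := ⟨r.num.toNat, by omega⟩
    have e : ((r : ℚ) : ℝ) = (p : ℝ) / (r.den : ℝ) := by
      have := Rat.cast_def (K := ℝ) r
      rw [this, hp]; simp
    simp only [e]
    exact GG_FE_rat (q := r.den) (p := p) (by omega) (by omega) h0 h1 hw hw2 hwi
  exact key.of_subset_closure (GG_cont h0 (by simp; linarith)) (FE_cont alp hw)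
    Set.inter_subset_left (hd.open_subset_closure_inter isOpen_Ioo) ⟨hl0, hl1⟩

lemma FE_diff {lam lam' : ℝ} (h0 : 0 < lam) (h0' : 0 < lam') (alp : ℝ) {w : ℂ} (hw : 1 < w.re) :
    DifferentiableAt ℂ (FE lam lam' alp) w := by
  have hser : ∀ (μ : ℝ) {a : ℝ}, 0 < a → DifferentiableAt ℂ (lerchSeries μ a) w := by
    intro μ a ha
    have h1 : DifferentiableAt ℂ (fun w : ℂ => (a : ℂ) ^ (-w) * (1 + DD μ a w)) w :=
      (pw_diff ha w).fun_mul ((DD_diff ha μ hw).const_add 1)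
    refine h1.congr_of_eventuallyEq ?_
    filter_upwards [(isOpen_re_gt 1).mem_nhds hw] with z hz
    exact lerchSeries_eq ha μ hz
  have hG : DifferentiableAt ℂ Gamma w := differentiableAt_Gamma w (fun m h => by
    rw [h] at hw; simp at hw
    have : (0:ℝ) ≤ m := Nat.cast_nonneg m
    linarith)
  have hP : DifferentiableAt ℂ (fun w : ℂ => (2 * Real.pi : ℂ) ^ (-w)) w :=
    differentiableAt_id.neg.const_cpow (Or.inl (by simp [Real.pi_ne_zero]))
  have hE1 : DifferentiableAt ℂ (fun w : ℂ => exp (Real.pi * I * w / 2)) w := by fun_prop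
  have hE2 : DifferentiableAt ℂ (fun w : ℂ => exp (-Real.pi * I * w / 2)) w := by fun_prop
  unfold FE
  exact (hP.fun_mul hG).fun_mul ((hE1.fun_mul ((hser (-alp) h0).const_mul _)).fun_add
    (hE2.fun_mul ((hser alp h0').const_mul _)))

/-- The continuation on the upper half plane, `re > -1`. -/
lemma lerch_rep {lam alp : ℝ} (hl0 : 0 < lam) (hl1 : lam ≤ 1) (h0 : 0 < alp) {F : ℂ → ℂ}
    (hF : IsLerch lam alp F) :
    (lam = 1 ∧ ∀ s : ℂ, 0 < s.im → -1 < s.re → F s = HH alp s) ∨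
    (lam < 1 ∧ ∀ s : ℂ, 0 < s.im → -1 < s.re → F s = GG (exp (2 * Real.pi * I * lam)) alp s) := by
  have hd : ∀ s : ℂ, 0 < s.im → -1 < s.re → DifferentiableAt ℂ F s := fun s hs _ =>
    hF.1 s (by rintro rfl; simp at hs)
  rcases eq_or_lt_of_le hl1 with rfl | h
  · left
    refine ⟨rfl, ident_up hd (fun s hs h => HH_diff h0 h (by rintro rfl; simp at hs)) fun s _ hs => ?_⟩
    rw [hF.2 s hs, HH_eq h0 hs]
  · right
    refine ⟨h, ident_up hd (fun s hs h => GG_diff (norm_exp_one _) h0 h) fun s _ hs => ?_⟩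
    rw [hF.2 s hs, GG_eq h0 (exp_ne_one hl0 h) hs]

lemma lerch_FE {lam alp : ℝ} (hl0 : 0 < lam) (hl1 : lam ≤ 1) (h0 : 0 < alp) (h1 : alp ≤ 1) {F : ℂ → ℂ}
    (hF : IsLerch lam alp F) {w : ℂ} (hw : 1 < w.re) (hwi : w.im < 0) :
    F (1 - w) = FE lam (1 - Int.fract lam) alp w := by
  have hfr : 0 < 1 - Int.fract lam := by linarith [Int.fract_lt_one lam]
  have hV : IsOpen {w : ℂ | 1 < w.re ∧ w.im < 0} :=
    (isOpen_re_gt 1).inter (isOpen_lt continuous_im continuous_const)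
  have hVc : Convex ℝ {w : ℂ | 1 < w.re ∧ w.im < 0} :=
    (convex_re_gt 1).inter (convex_halfSpace_im_lt 0)
  have hW : IsOpen {w : ℂ | (1 < w.re ∧ w.im < 0) ∧ w.re < 2} :=
    hV.inter (isOpen_lt continuous_re continuous_const)
  have hd1 : ∀ w ∈ {w : ℂ | 1 < w.re ∧ w.im < 0}, DifferentiableAt ℂ (fun w => F (1 - w)) w := by
    intro w hw
    have : DifferentiableAt ℂ F (1 - w) := hF.1 _ (by
      intro h
      have := congrArg im h
      simp at this; linarith [hw.2])
    exact DifferentiableAt.comp w this (differentiableAt_id.const_sub 1)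
  refine ident hV hVc hW ⟨3/2 - I, by simp; norm_num⟩ (fun w hw => hw.1) hd1
    (fun w hw => FE_diff hl0 hfr alp hw.1) ?_ w ⟨hw, hwi⟩
  rintro w ⟨⟨a1, a2⟩, a3⟩
  rcases lerch_rep hl0 hl1 h0 hF with ⟨rfl, h⟩ | ⟨hl, h⟩
  · have e := ident_up (r := -1) (f := RR 1 1 alp) (g := F)
      (fun s hs _ => RR_diff 1 1 alp (by rintro rfl; simp at hs))
      (fun s hs _ => hF.1 s (by rintro rfl; simp at hs))
      (fun s _ hs => by rw [← RR_series h0 h1 hs, hF.2 s hs]; simp)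
    rw [← e (1 - w) (by simp; linarith) (by simp; linarith),
      RR_FE (q := 1) (p := 1) (p' := 1) le_rfl le_rfl le_rfl le_rfl (by norm_num) alp a1]
    simp
  · rw [h (1 - w) (by simp; linarith) (by simp; linarith), GG_FE hl0 hl h0 h1 a1 a3 a2,
      Int.fract_eq_self.2 ⟨hl0.le, hl⟩]

end LerchAux

namespace LerchAux
open Complex MeasureTheory intervalIntegral Metric

lemma log_w {σ t : ℝ} (hσ : 0 < σ) (ht : 0 < t) :
    log ((σ : ℂ) - t * I) = Real.log t - Real.pi / 2 * I + log (1 + (σ / t : ℝ) * I) := by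
  have h1 : ((σ : ℂ) - t * I) = (t : ℂ) * (-I * (1 + (σ / t : ℝ) * I)) := by
    push_cast
    have : (t : ℂ) ≠ 0 := by exact_mod_cast ht.ne'
    field_simp
    linear_combination (σ : ℂ) * I_sq
  have h2 : (1 + (σ / t : ℝ) * I) ≠ 0 := by
    intro h; have := congrArg re h; simp at this
  have ha : 0 ≤ arg (1 + (σ / t : ℝ) * I) := by
    rw [arg_nonneg_iff]; simp; positivity
  have ha2 : arg (1 + (σ / t : ℝ) * I) ≤ Real.pi := arg_le_pi _
  have h3 : log (-I * (1 + (σ / t : ℝ) * I)) = log (-I) + log (1 + (σ / t : ℝ) * I) := by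
    apply log_mul (by simp) h2
    rw [arg_neg_I]
    constructor <;> linarith [Real.pi_pos]
  rw [h1, log_ofReal_mul ht (mul_ne_zero (by simp) h2), h3, log_neg_I]
  ring

lemma gamma_asym {σ t : ℝ} (hσ : 1 ≤ σ) (hσ2 : σ ≤ 12) (ht : 40 ≤ t) : ∃ E : ℂ, ‖E‖ ≤ 400 / t ∧
    Gamma ((σ : ℂ) - t * I) * exp (Real.pi * I * ((σ : ℂ) - t * I) / 2) =
    Real.sqrt (2 * Real.pi) * exp (((σ - 1/2) * Real.log t : ℝ) +
      (t - t * Real.log t + Real.pi / 4 : ℝ) * I + E) := by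
  set w : ℂ := (σ : ℂ) - t * I with hw
  have ht0 : 0 < t := by linarith
  have hwre : w.re = σ := by simp [hw]
  have hwim : w.im = -t := by simp [hw]
  have hwn : t ≤ ‖w‖ := by
    have := abs_im_le_norm w
    rw [hwim, abs_neg, abs_of_pos ht0] at this; exact this
  obtain ⟨E, hE, hG⟩ := stirling (s := w) (by rw [hwre]; linarith) (by linarith)
  set z : ℂ := (σ / t : ℝ) * I with hz
  have hzn : ‖z‖ = σ / t := by
    rw [hz, norm_mul, norm_I, mul_one, norm_real, Real.norm_of_nonneg (by positivity)]
  have hz2 : ‖z‖ ≤ 1/2 := by rw [hzn, div_le_iff₀ ht0]; linarith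
  set l := log (1 + z) with hl
  have hl1 : ‖l‖ ≤ 3/2 * ‖z‖ := norm_log_one_add_half_le_self hz2
  have hl2 : ‖l - z‖ ≤ ‖z‖ ^ 2 * (1 - ‖z‖)⁻¹ / 2 := norm_log_one_add_sub_self_le (by linarith)
  have hl3 : ‖l - z‖ ≤ ‖z‖ ^ 2 := by
    refine hl2.trans ?_
    have : (1 - ‖z‖)⁻¹ ≤ 2 := by
      rw [inv_le_comm₀ (by linarith) (by norm_num)]; linarith
    nlinarith [sq_nonneg ‖z‖]
  have hlog := log_w (σ := σ) (t := t) (by linarith) ht0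
  refine ⟨E + ((σ - 1/2 : ℝ) : ℂ) * l - t * I * (l - z), ?_, ?_⟩
  · have n1 : ‖((σ - 1/2 : ℝ) : ℂ) * l‖ ≤ 216 / t := by
      rw [norm_mul, norm_real, Real.norm_of_nonneg (by linarith)]
      calc (σ - 1/2) * ‖l‖ ≤ 12 * (3/2 * (12 / t)) := by
            refine mul_le_mul (by linarith) (hl1.trans ?_) (norm_nonneg _) (by norm_num)
            rw [hzn]; gcongr
        _ = 216 / t := by ring
    have n2 : ‖(t : ℂ) * I * (l - z)‖ ≤ 144 / t := by
      rw [norm_mul, norm_mul, norm_I, mul_one, norm_real, Real.norm_of_nonneg ht0.le]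
      calc t * ‖l - z‖ ≤ t * (12 / t) ^ 2 := by
            refine mul_le_mul_of_nonneg_left (hl3.trans ?_) ht0.le
            rw [hzn]; gcongr
        _ = 144 / t := by field_simp; norm_num
    have n3 : ‖E‖ ≤ 8 / t := hE.trans (by gcongr)
    calc _ ≤ ‖E‖ + ‖((σ - 1/2 : ℝ) : ℂ) * l‖ + ‖(t : ℂ) * I * (l - z)‖ :=
          (norm_sub_le _ _).trans (by gcongr; exact norm_add_le _ _)
      _ ≤ 8 / t + 216 / t + 144 / t := by gcongr
      _ ≤ 400 / t := by
        rw [← add_div, ← add_div]; gcongr; norm_num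
  · rw [hG, mul_assoc, ← exp_add]
    congr 2
    rw [← hw] at hlog
    rw [hlog, ← hz, ← hl, hw]
    have htz : (t : ℂ) * z = σ * I := by
      rw [hz]; push_cast
      have : (t : ℂ) ≠ 0 := by exact_mod_cast ht0.ne'
      field_simp
    push_cast
    linear_combination - I * htz - (σ:ℂ) * I_sq

lemma series_bound {a : ℝ} (ha : 0 < a) (μ : ℝ) : ∃ C, 0 ≤ C ∧ ∀ w : ℂ, 3/2 ≤ w.re → w.re ≤ 12 →
    ‖lerchSeries μ a w‖ ≤ C := by
  have hs : Summable fun m : ℕ => ((m:ℝ) + a) ^ (-(12:ℝ)) + ((m:ℝ) + a) ^ (-(3/2:ℝ)) :=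
    (summable_add_rpow ha (by norm_num)).add (summable_add_rpow ha (by norm_num))
  refine ⟨∑' m : ℕ, (((m:ℝ) + a) ^ (-(12:ℝ)) + ((m:ℝ) + a) ^ (-(3/2:ℝ))),
    tsum_nonneg fun m => by positivity, fun w h1 h2 => ?_⟩
  unfold lerchSeries
  refine tsum_of_norm_bounded hs.hasSum fun m => ?_
  rw [term_eq, norm_mul, norm_pow, norm_exp_one, one_pow, one_mul, norm_pw w (by positivity)]
  exact rpow_between (by positivity) (by linarith) (by linarith)

lemma norm_exp_ofReal_mul' (x : ℝ) {c : ℂ} (hc : c = (x : ℂ) * I) : ‖exp c‖ = 1 := by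
  rw [hc, norm_exp_ofReal_mul_I]

lemma FE_growth {lam lam' : ℝ} (h0 : 0 < lam) (h0' : 0 < lam') (alp : ℝ) : ∃ C, 0 ≤ C ∧
    ∀ σ t : ℝ, 3/2 ≤ σ → σ ≤ 12 → 40 ≤ t → ‖FE lam lam' alp ((σ : ℂ) - t * I)‖ ≤ C * t ^ 12 := by
  obtain ⟨C1, hC1, h1⟩ := series_bound h0 (-alp)
  obtain ⟨C2, hC2, h2⟩ := series_bound h0' alp
  refine ⟨Real.sqrt (2 * Real.pi) * Real.exp 10 * (C1 + C2), by positivity, fun σ t hs1 hs2 ht => ?_⟩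
  obtain ⟨E, hE, hG⟩ := gamma_asym (σ := σ) (t := t) (by linarith) hs2 ht
  set w : ℂ := (σ : ℂ) - t * I with hw
  have ht0 : 0 < t := by linarith
  have hwre : w.re = σ := by simp [hw]
  have hwim : w.im = -t := by simp [hw]
  have e : FE lam lam' alp w = (2 * Real.pi) ^ (-w) * (Gamma w * exp (Real.pi * I * w / 2)) *
      ((exp (2 * Real.pi * I * (-alp * lam)) * lerchSeries (-alp) lam w) +
       exp (-Real.pi * I * w) * (exp (2 * Real.pi * I * (alp * lam')) * lerchSeries alp lam' w)) := by
    have : exp (-Real.pi * I * w / 2) = exp (Real.pi * I * w / 2) * exp (-Real.pi * I * w) := by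
      rw [← exp_add]; congr 1; ring
    unfold FE
    rw [this]; ring
  rw [e, hG, norm_mul, norm_mul]
  have n1 : ‖(2 * Real.pi : ℂ) ^ (-w)‖ ≤ 1 := by
    have : (2 * Real.pi : ℂ) = ((2 * Real.pi : ℝ) : ℂ) := by push_cast; ring
    rw [this, norm_pw w (by positivity), hwre]
    exact Real.rpow_le_one_of_one_le_of_nonpos (by nlinarith [Real.pi_gt_three]) (by linarith)
  have n2 : ‖(Real.sqrt (2 * Real.pi) : ℂ) * exp (((σ - 1/2) * Real.log t : ℝ) +
      (t - t * Real.log t + Real.pi / 4 : ℝ) * I + E)‖ ≤ Real.sqrt (2 * Real.pi) * Real.exp 10 * t ^ 12 := by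
    rw [norm_mul, norm_real, Real.norm_of_nonneg (Real.sqrt_nonneg _), norm_exp, mul_assoc]
    refine mul_le_mul_of_nonneg_left ?_ (Real.sqrt_nonneg _)
    have hEre : E.re ≤ 10 := by
      refine (re_le_norm E).trans (hE.trans ?_)
      rw [div_le_iff₀ ht0]; linarith
    have hre : ((((σ - 1/2) * Real.log t : ℝ) : ℂ) +
      (t - t * Real.log t + Real.pi / 4 : ℝ) * I + E).re = (σ - 1/2) * Real.log t + E.re := by
      simp only [add_re, re_ofReal_mul, ofReal_re, I_re, mul_zero, add_zero]
    rw [hre]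
    have hlogt : 0 ≤ Real.log t := Real.log_nonneg (by linarith)
    have ht12 : t ^ 12 = Real.exp (12 * Real.log t) := by
      have : (12:ℝ) = ((12:ℕ):ℝ) := by norm_num
      rw [this, Real.exp_nat_mul, Real.exp_log ht0]
    rw [ht12, ← Real.exp_add]
    apply Real.exp_le_exp.2
    nlinarith
  have n3 : ‖(exp (2 * Real.pi * I * (-alp * lam)) * lerchSeries (-alp) lam w) +
       exp (-Real.pi * I * w) * (exp (2 * Real.pi * I * (alp * lam')) * lerchSeries alp lam' w)‖ ≤ C1 + C2 := by
    refine (norm_add_le _ _).trans (add_le_add ?_ ?_)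
    · rw [norm_mul, norm_exp_ofReal_mul' (2 * Real.pi * (-alp * lam)) (by push_cast; ring), one_mul]
      exact h1 w (by linarith) (by linarith)
    · rw [norm_mul, norm_mul, norm_exp_ofReal_mul' (2 * Real.pi * (alp * lam')) (c := 2 * Real.pi * I * (alp * lam')) (by push_cast; ring), one_mul]
      have : ‖exp (-Real.pi * I * w)‖ ≤ 1 := by
        rw [norm_exp]
        apply Real.exp_le_one_iff.2
        simp [hwim, hwre]; positivity
      calc _ ≤ 1 * C2 := mul_le_mul this (h2 w (by linarith) (by linarith)) (norm_nonneg _) (by norm_num)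
        _ = C2 := one_mul _
  calc _ ≤ 1 * (Real.sqrt (2 * Real.pi) * Real.exp 10 * t ^ 12) * (C1 + C2) := by gcongr
    _ = _ := by ring

lemma lerch_growth {lam alp : ℝ} (hl0 : 0 < lam) (hl1 : lam ≤ 1) (h0 : 0 < alp) (h1 : alp ≤ 1) {F : ℂ → ℂ}
    (hF : IsLerch lam alp F) : ∃ C, 0 < C ∧ ∀ s : ℂ, -11 ≤ s.re → s.re ≤ 14 → 40 ≤ s.im →
      ‖F s‖ ≤ C * ‖s‖ ^ 12 := by
  have hfr : 0 < 1 - Int.fract lam := by linarith [Int.fract_lt_one lam]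
  obtain ⟨C1, hC1, hg1⟩ := FE_growth hl0 hfr alp
  obtain ⟨C2, hg2⟩ : ∃ C, ∀ s : ℂ, -1/2 ≤ s.re → s.re ≤ 14 → 1 ≤ s.im → ‖F s‖ ≤ C * ‖s‖ ^ 2 := by
    rcases lerch_rep hl0 hl1 h0 hF with ⟨_, h⟩ | ⟨_, h⟩
    · obtain ⟨C, hC⟩ := HH_growth h0
      refine ⟨C, fun s a b c => ?_⟩
      rw [h s (by linarith) (by linarith)]
      exact hC s a b (c.trans (le_abs_self _))
    · obtain ⟨C, hC⟩ := GG_growth (norm_exp_one lam) h0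
      refine ⟨C, fun s a b c => ?_⟩
      rw [h s (by linarith) (by linarith)]
      exact hC s a b (c.trans (le_abs_self _))
  refine ⟨C1 + |C2| + 1, by positivity, fun s a b c => ?_⟩
  have hn : s.im ≤ ‖s‖ := (le_abs_self _).trans (abs_im_le_norm s)
  have hp : 0 ≤ ‖s‖ ^ 12 := by positivity
  rcases le_total (-1/2) s.re with h | h
  · refine (hg2 s h b (by linarith)).trans ?_
    have : ‖s‖ ^ 2 ≤ ‖s‖ ^ 12 := pow_le_pow_right₀ (by linarith) (by norm_num)
    calc C2 * ‖s‖ ^ 2 ≤ |C2| * ‖s‖ ^ 12 := by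
          refine mul_le_mul (le_abs_self _) this (by positivity) (abs_nonneg _)
      _ ≤ _ := by gcongr; linarith
  · have e : s = 1 - (((1 - s.re : ℝ) : ℂ) - (s.im : ℝ) * I) := by
      apply Complex.ext <;> simp
    have := hg1 (1 - s.re) s.im (by linarith) (by linarith) c
    rw [← lerch_FE hl0 hl1 h0 h1 hF (by simp; linarith) (by simp; linarith), ← e] at this
    refine this.trans ?_
    calc C1 * s.im ^ 12 ≤ C1 * ‖s‖ ^ 12 := by gcongr
      _ ≤ _ := by gcongr; linarith [abs_nonneg C2]

end LerchAux

namespace LerchAux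
open Complex MeasureTheory intervalIntegral Metric

/-- phase on the left edge -/
noncomputable def PL (lam alp t : ℝ) : ℂ :=
  (-2 * Real.log (2 * Real.pi * lam) + 1/2 * Real.log (2 * Real.pi) + 3/2 * Real.log t : ℝ) +
  (t * Real.log (2 * Real.pi * lam) + t - t * Real.log t + (Real.pi / 4 - 2 * Real.pi * alp * lam) : ℝ) * I

lemma ofReal_cpow_exp {x : ℝ} (hx : 0 < x) (s : ℂ) : (x : ℂ) ^ s = exp (Real.log x * s) := by
  rw [cpow_def_of_ne_zero (by exact_mod_cast hx.ne'), ofReal_log hx.le]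

lemma norm_one_add_DD_ge {a : ℝ} (ha : 0 < a) (μ : ℝ) {s : ℂ} (hs : 1 + a ≤ s.re) :
    1 - ∑' m, rr a m ^ (1 + a) ≤ ‖1 + DD μ a s‖ := by
  have h1 := norm_DD_le' ha μ hs
  have h2 := norm_sub_norm_le (1 : ℂ) (-DD μ a s)
  rw [norm_one, norm_neg, sub_neg_eq_add] at h2
  linarith

lemma left_asym {lam alp : ℝ} (hl0 : 0 < lam) (hl1 : lam ≤ 1) (h0 : 0 < alp) (h1 : alp ≤ 1) {F : ℂ → ℂ}
    (hF : IsLerch lam alp F) : ∃ C, 0 < C ∧ ∀ t : ℝ, 400 ≤ t → ∃ η : ℂ, ‖η‖ ≤ C / t ∧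
      F ((-1 : ℝ) + t * I) = exp (PL lam alp t) * (1 + DD (-alp) lam (2 + (-t : ℝ) * I)) * (1 + η) := by
  have hfr : 0 < 1 - Int.fract lam := by linarith [Int.fract_lt_one lam]
  set lam' := 1 - Int.fract lam
  obtain ⟨C2, hC2, hB⟩ := series_bound hfr alp
  set q := ∑' m, rr lam m ^ (1 + lam) with hq
  have hq1 : q < 1 := tsum_rr_lt hl0
  set K := C2 * (lam ^ (2:ℝ)) / (1 - q) with hK
  have hK0 : 0 ≤ K := div_nonneg (by positivity) (by linarith)
  refine ⟨800 + 3 * K, by positivity, fun t ht => ?_⟩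
  obtain ⟨E, hE, hG⟩ := gamma_asym (σ := 2) (t := t) (by norm_num) (by norm_num) (by linarith)
  have ht0 : 0 < t := by linarith
  have hw' : (2 : ℂ) + (-t : ℝ) * I = ((2 : ℝ) : ℂ) - t * I := by push_cast; ring
  rw [hw']
  set w : ℂ := ((2 : ℝ) : ℂ) - t * I with hw
  have hwre : w.re = 2 := by simp [hw]
  have hwim : w.im = -t := by simp [hw]
  set A0 : ℂ := exp (2 * Real.pi * I * (-alp * lam)) * (lam : ℂ) ^ (-w) with hA0
  set B : ℂ := exp (2 * Real.pi * I * (alp * lam')) * lerchSeries alp lam' w with hBdef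
  have hA0n : ‖A0‖ = lam ^ (-(2:ℝ)) := by
    rw [hA0, norm_mul, norm_exp_ofReal_mul' (2 * Real.pi * (-alp * lam)) (by push_cast; ring), one_mul,
      norm_pw w hl0, hwre]
  have hDn := norm_one_add_DD_ge hl0 (-alp) (s := w) (by rw [hwre]; linarith)
  set D : ℂ := 1 + DD (-alp) lam w with hD
  have hDpos : 0 < ‖D‖ := by linarith
  have hA0pos : 0 < ‖A0‖ := by rw [hA0n]; positivity
  have hA0ne : A0 ≠ 0 := norm_pos_iff.1 hA0pos
  have hDne : D ≠ 0 := norm_pos_iff.1 hDpos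
  have hBn : ‖B‖ ≤ C2 := by
    rw [hBdef, norm_mul, norm_exp_ofReal_mul' (2 * Real.pi * (alp * lam'))
      (c := 2 * Real.pi * I * (alp * lam')) (by push_cast; ring), one_mul]
    exact hB w (by linarith) (by linarith)
  set b : ℂ := exp (-Real.pi * I * w) * (B / (A0 * D)) with hb
  have hexp : ‖exp (-Real.pi * I * w)‖ ≤ 1 / t := by
    rw [norm_exp]
    have : (-Real.pi * I * w).re = -(Real.pi * t) := by simp [hwim, hwre]
    rw [this, Real.exp_neg, inv_eq_one_div]
    apply one_div_le_one_div_of_le ht0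
    have := Real.add_one_le_exp (Real.pi * t)
    nlinarith [Real.pi_gt_three]
  have hbn : ‖b‖ ≤ K / t := by
    rw [hb, norm_mul, norm_div, norm_mul A0 D, hA0n]
    calc _ ≤ 1 / t * (C2 / (lam ^ (-(2:ℝ)) * (1 - q))) := by
          gcongr
      _ = K / t := by
          rw [hK, Real.rpow_neg hl0.le]
          have : lam ^ (2:ℝ) ≠ 0 := by positivity
          field_simp
  have hE1 : ‖E‖ ≤ 1 := hE.trans (by rw [div_le_one ht0]; linarith)
  have hEn : ‖exp E - 1‖ ≤ 800 / t := by
    refine (norm_exp_sub_one_le hE1).trans ?_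
    calc 2 * ‖E‖ ≤ 2 * (400 / t) := by gcongr
      _ = 800 / t := by ring
  refine ⟨exp E * (1 + b) - 1, ?_, ?_⟩
  · have e : exp E * (1 + b) - 1 = (exp E - 1) + b + (exp E - 1) * b := by ring
    rw [e]
    have h800 : 800 / t ≤ 2 := by rw [div_le_iff₀ ht0]; linarith
    calc _ ≤ ‖exp E - 1‖ + ‖b‖ + ‖exp E - 1‖ * ‖b‖ := by
          refine (norm_add_le _ _).trans (add_le_add (norm_add_le _ _) (norm_mul_le _ _))
      _ ≤ 800 / t + K / t + 2 * (K / t) := by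
          gcongr
          exact hEn.trans h800
      _ = (800 + 3 * K) / t := by ring
  · have es : ((-1 : ℝ) + t * I : ℂ) = 1 - w := by rw [hw]; push_cast; ring
    rw [es, lerch_FE hl0 hl1 h0 h1 hF (by rw [hwre]; norm_num) (by rw [hwim]; linarith)]
    have e : FE lam lam' alp w = (2 * Real.pi) ^ (-w) * (Gamma w * exp (Real.pi * I * w / 2)) *
      ((exp (2 * Real.pi * I * (-alp * lam)) * lerchSeries (-alp) lam w) +
       exp (-Real.pi * I * w) * (exp (2 * Real.pi * I * (alp * lam')) * lerchSeries alp lam' w)) := by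
      have : exp (-Real.pi * I * w / 2) = exp (Real.pi * I * w / 2) * exp (-Real.pi * I * w) := by
        rw [← exp_add]; congr 1; ring
      unfold FE
      rw [this]; ring
    rw [e, hG, lerchSeries_eq hl0 (-alp) (s := w) (by rw [hwre]; norm_num), ← hD, ← hBdef]
    have e2 : exp (2 * Real.pi * I * (-alp * lam)) * ((lam : ℂ) ^ (-w) * D) + exp (-Real.pi * I * w) * B =
        A0 * D * (1 + b) := by
      have e4 : A0 * D * (1 + b) = A0 * D + exp (-Real.pi * I * w) * (A0 * D * (B / (A0 * D))) := by
        rw [hb]; ring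
      rw [e4, mul_div_cancel₀ _ (mul_ne_zero hA0ne hDne), hA0]; ring
    rw [e2]
    have e3 : (2 * Real.pi : ℂ) ^ (-w) * (Real.sqrt (2 * Real.pi) * exp (((2 - 1/2) * Real.log t : ℝ) +
      (t - t * Real.log t + Real.pi / 4 : ℝ) * I)) * A0 = exp (PL lam alp t) := by
      have c1 : (2 * Real.pi : ℂ) = ((2 * Real.pi : ℝ) : ℂ) := by push_cast; ring
      have c2 : ((Real.sqrt (2 * Real.pi) : ℝ) : ℂ) = exp ((1/2 * Real.log (2 * Real.pi) : ℝ)) := by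
        rw [← ofReal_exp, Real.sqrt_eq_rpow, Real.rpow_def_of_pos (by positivity)]
        congr 2; ring
      have c3 : Real.log (2 * Real.pi * lam) = Real.log (2 * Real.pi) + Real.log lam :=
        Real.log_mul (by positivity) hl0.ne'
      rw [c2, hA0, ofReal_cpow_exp hl0, c1, ofReal_cpow_exp (by positivity), ← exp_add, ← exp_add,
        ← exp_add, ← exp_add]
      congr 1
      unfold PL
      rw [c3, hw]
      push_cast
      ring
    rw [← e3, exp_add _ E]
    ring

end LerchAux

namespace LerchAux
open Complex MeasureTheory intervalIntegral Metric

lemma logDeriv_cont {f : ℂ → ℂ} {s : ℂ} (hf : AnalyticAt ℂ f s) (h0 : f s ≠ 0) :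
    ContinuousAt (logDeriv f) s := by
  unfold logDeriv
  exact hf.deriv.continuousAt.div hf.continuousAt h0

lemma vert_edge {f : ℂ → ℂ} {x τ T t0 : ℝ} (κ : ℂ) (h0 : t0 < τ) (hT : τ ≤ T) {ψ : ℝ → ℂ}
    (hψ : ∀ t, t0 < t → exp (ψ t) = f (x + t * I)) (hd : ∀ t, t0 < t → DifferentiableAt ℝ ψ t)
    (hf : ∀ t : ℝ, t0 < t → AnalyticAt ℂ f (x + t * I)) :
    I * ∫ t in τ..T, ((x + t * I : ℂ) - κ) * logDeriv f (x + t * I) =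
      (x + T * I - κ) * ψ T - (x + τ * I - κ) * ψ τ - I * ∫ t in τ..T, ψ t := by
  have hmem : ∀ t ∈ Set.uIcc τ T, t0 < t := by
    intro t ht; rw [Set.uIcc_of_le hT] at ht; linarith [ht.1]
  have hline : ∀ t : ℝ, HasDerivAt (fun t : ℝ => (x + t * I : ℂ)) I t := by
    intro t
    have := ((hasDerivAt_id t).ofReal_comp.mul_const I).const_add (x : ℂ)
    simpa using this
  have hder : ∀ t, t0 < t → HasDerivAt ψ (I * logDeriv f (x + t * I)) t := by
    intro t ht
    have h1 : HasDerivAt (fun t => exp (ψ t)) (exp (ψ t) * deriv ψ t) t := (hd t ht).hasDerivAt.cexp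
    have h2 : HasDerivAt (fun t : ℝ => f (x + t * I)) (deriv f (x + t * I) * I) t :=
      HasDerivAt.comp (h₂ := f) (h := fun t : ℝ => (x + t * I : ℂ)) t (hf t ht).differentiableAt.hasDerivAt (hline t)
    have h3 : (fun t => exp (ψ t)) =ᶠ[nhds t] fun t : ℝ => f (x + t * I) := by
      filter_upwards [Ioi_mem_nhds ht] with u hu using hψ u hu
    have h4 := h1.unique (h2.congr_of_eventuallyEq h3)
    refine (hd t ht).hasDerivAt.congr_deriv ?_
    have hne : f (x + t * I) ≠ 0 := by rw [← hψ t ht]; exact exp_ne_zero _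
    rw [hψ t ht] at h4
    unfold logDeriv
    simp only [Pi.div_apply]
    rw [← mul_div_assoc, eq_div_iff hne]
    linear_combination h4
  have hψc : ContinuousOn ψ (Set.uIcc τ T) := fun t ht => (hd t (hmem t ht)).continuousAt.continuousWithinAt
  have hlc : ContinuousOn (fun t : ℝ => (x + t * I : ℂ) - κ) (Set.uIcc τ T) := by fun_prop
  have hLc : ContinuousOn (fun t : ℝ => logDeriv f (x + t * I)) (Set.uIcc τ T) := by
    intro t ht
    have hne : f (x + t * I) ≠ 0 := by rw [← hψ t (hmem t ht)]; exact exp_ne_zero _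
    exact (ContinuousAt.comp (f := fun t : ℝ => (x + t * I : ℂ)) (g := logDeriv f)
      (logDeriv_cont (hf t (hmem t ht)) hne) (hline t).continuousAt).continuousWithinAt
  have hprod : ∀ t ∈ Set.uIcc τ T, HasDerivAt (fun t : ℝ => ((x + t * I : ℂ) - κ) * ψ t)
      (I * ψ t + ((x + t * I : ℂ) - κ) * (I * logDeriv f (x + t * I))) t := by
    intro t ht
    exact ((hline t).sub_const κ).mul (hder t (hmem t ht))
  have i1 : IntervalIntegrable (fun t => I * ψ t) volume τ T := (continuousOn_const.mul hψc).intervalIntegrable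
  have i2 : IntervalIntegrable (fun t : ℝ => ((x + t * I : ℂ) - κ) * (I * logDeriv f (x + t * I))) volume τ T :=
    (hlc.mul (continuousOn_const.mul hLc)).intervalIntegrable
  have h := integral_eq_sub_of_hasDerivAt hprod (i1.add i2)
  rw [integral_add i1 i2, intervalIntegral.integral_const_mul] at h
  have e : ∫ t in τ..T, ((x + t * I : ℂ) - κ) * (I * logDeriv f (x + t * I)) =
      I * ∫ t in τ..T, ((x + t * I : ℂ) - κ) * logDeriv f (x + t * I) := by
    rw [← intervalIntegral.integral_const_mul]; congr 1; ext t; ring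
  rw [e] at h
  linear_combination h

lemma horiz_edge {f : ℂ → ℂ} {a b y κ : ℝ} (hab : a ≤ b)
    (hf : ∀ x ∈ Set.Icc a b, AnalyticAt ℂ f (x + y * I)) (h0 : ∀ x ∈ Set.Icc a b, f (x + y * I) ≠ 0) :
    (∫ x in a..b, ((x + y * I : ℂ) - κ) * logDeriv f (x + y * I)).im =
      (∫ x in a..b, (x - κ) * (logDeriv f (x + y * I)).im) +
      y * (Real.log ‖f (b + y * I)‖ - Real.log ‖f (a + y * I)‖) := by
  have hline : ∀ x : ℝ, HasDerivAt (fun x : ℝ => (x + y * I : ℂ)) 1 x := by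
    intro x
    have := (hasDerivAt_id x).ofReal_comp.add_const (y * I : ℂ)
    simpa using this
  have hIcc := Set.uIcc_of_le hab
  have hLc : ContinuousOn (fun x : ℝ => logDeriv f (x + y * I)) (Set.uIcc a b) := by
    intro x hx
    rw [hIcc] at hx
    exact (ContinuousAt.comp (f := fun x : ℝ => (x + y * I : ℂ)) (g := logDeriv f)
      (logDeriv_cont (hf x hx) (h0 x hx)) (hline x).continuousAt).continuousWithinAt
  have hder : ∀ x ∈ Set.uIcc a b, HasDerivAt (fun x : ℝ => Real.log ‖f (x + y * I)‖)
      (logDeriv f (x + y * I)).re x := by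
    intro x hx
    rw [hIcc] at hx
    have h2 : HasDerivAt (fun x : ℝ => f (x + y * I)) (deriv f (x + y * I) * 1) x :=
      HasDerivAt.comp (h₂ := f) (h := fun t : ℝ => (t + y * I : ℂ)) x (hf x hx).differentiableAt.hasDerivAt (hline x)
    rw [mul_one] at h2
    have hre : HasDerivAt (fun x : ℝ => (f (x + y * I)).re) (deriv f (x + y * I)).re x :=
      (reCLM.hasFDerivAt.comp_hasDerivAt x h2)
    have him : HasDerivAt (fun x : ℝ => (f (x + y * I)).im) (deriv f (x + y * I)).im x :=
      (imCLM.hasFDerivAt.comp_hasDerivAt x h2)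
    have hsq : HasDerivAt (fun x : ℝ => (f (x + y * I)).re * (f (x + y * I)).re +
      (f (x + y * I)).im * (f (x + y * I)).im) _ x := (hre.mul hre).add (him.mul him)
    have hpos : 0 < (f (x + y * I)).re * (f (x + y * I)).re + (f (x + y * I)).im * (f (x + y * I)).im :=
      normSq_pos.2 (h0 x hx)
    have hl := (hsq.log hpos.ne').const_mul (1/2)
    have e : (fun x : ℝ => Real.log ‖f (x + y * I)‖) = fun x : ℝ => 1/2 * Real.log ((f (x + y * I)).re * (f (x + y * I)).re +
      (f (x + y * I)).im * (f (x + y * I)).im) := by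
      ext x
      rw [← normSq_apply, normSq_eq_norm_sq, Real.log_pow]; push_cast; ring
    rw [e]
    refine hl.congr_deriv ?_
    unfold logDeriv
    simp only [Pi.div_apply, div_re]
    rw [normSq_apply]
    field_simp
    ring
  have hre : ContinuousOn (fun x : ℝ => (logDeriv f (x + y * I)).re) (Set.uIcc a b) := continuous_re.comp_continuousOn hLc
  have him : ContinuousOn (fun x : ℝ => (logDeriv f (x + y * I)).im) (Set.uIcc a b) := continuous_im.comp_continuousOn hLc
  have h1 := integral_eq_sub_of_hasDerivAt hder hre.intervalIntegrable
  have hc : ContinuousOn (fun x : ℝ => ((x + y * I : ℂ) - κ) * logDeriv f (x + y * I)) (Set.uIcc a b) :=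
    ContinuousOn.mul (by fun_prop) hLc
  have h2 := intervalIntegral_im (μ := volume) (f := fun x : ℝ => ((x + y * I : ℂ) - κ) * logDeriv f (x + y * I)) hc.intervalIntegrable
  have i1 : IntervalIntegrable (fun x : ℝ => (x - κ) * (logDeriv f (x + y * I)).im) volume a b :=
    (ContinuousOn.mul (by fun_prop) him).intervalIntegrable
  have i2 : IntervalIntegrable (fun x : ℝ => y * (logDeriv f (x + y * I)).re) volume a b :=
    (continuousOn_const.mul hre).intervalIntegrable
  rw [← h1, ← intervalIntegral.integral_const_mul, ← integral_add i1 i2]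
  refine h2.symm.trans (integral_congr (fun x _ => ?_))
  simp

lemma edge_main {f : ℂ → ℂ} {τ T t0 : ℝ} (h0 : t0 < τ) (hT : τ ≤ T) {ψR ψL : ℝ → ℂ} {U : Set ℂ}
    (hR : ∀ t, t0 < t → exp (ψR t) = f ((2 : ℝ) + t * I)) (hRd : ∀ t, t0 < t → DifferentiableAt ℝ ψR t)
    (hL : ∀ t, t0 < t → exp (ψL t) = f ((-1 : ℝ) + t * I)) (hLd : ∀ t, t0 < t → DifferentiableAt ℝ ψL t)
    (hU : ∀ s : ℂ, t0 < s.im → s ∈ U) (hf : AnalyticOnNhd ℂ f U) (Z : Finset ℂ)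
    (hZ : ∀ ρ ∈ Z, -1 < ρ.re ∧ ρ.re < 2 ∧ τ < ρ.im ∧ ρ.im < T)
    (hZo : ∀ ρ ∈ Z, analyticOrderAt f ρ ≠ ⊤)
    (hZ0 : ∀ s ∈ Set.Icc (-1:ℝ) 2 ×ℂ Set.Icc τ T, f s = 0 → s ∈ Z) :
    2 * Real.pi * ∑ ρ ∈ Z, ((analyticOrderAt f ρ).toNat : ℝ) * (ρ.re - 1/2) =
      (3/2 * ((ψR T).im + (ψL T).im) - ∫ x in (-1:ℝ)..2, (x - 1/2) * (logDeriv f (x + T * I)).im)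
      - (3/2 * ((ψR τ).im + (ψL τ).im) - ∫ x in (-1:ℝ)..2, (x - 1/2) * (logDeriv f (x + τ * I)).im)
      - (∫ t in τ..T, (ψR t).re) + ∫ t in τ..T, (ψL t).re := by
  have hreim : ∀ x y : ℝ, ((x : ℂ) + y * I).im = y := by intro x y; simp
  have hrere : ∀ x y : ℝ, ((x : ℂ) + y * I).re = x := by intro x y; simp
  have hfa : ∀ x t : ℝ, t0 < t → AnalyticAt ℂ f (x + t * I) := fun x t ht => hf _ (hU _ (by rw [hreim]; exact ht))
  have harg := arg_principle (a := -1) (b := 2) (c := τ) (d := T) (by norm_num) hT (U := U) (f := f)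
    (fun s hs => hU s (by have := hs.2.1; linarith [this])) hf Z hZ hZo hZ0 ((1/2 : ℝ) : ℂ)
  unfold bdry at harg
  have vR := vert_edge (x := 2) ((1/2 : ℝ) : ℂ) h0 hT hR hRd (hfa 2)
  have vL := vert_edge (x := -1) ((1/2 : ℝ) : ℂ) h0 hT hL hLd (hfa (-1))
  have hne : ∀ y : ℝ, (y = τ ∨ y = T) → ∀ x ∈ Set.Icc (-1:ℝ) 2, f (x + y * I) ≠ 0 := by
    intro y hy x hx h
    have hz := hZ _ (hZ0 (x + y * I) ⟨by simpa using hx, by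
      rw [Set.mem_preimage, hreim]; rcases hy with rfl | rfl
      · exact ⟨le_rfl, hT⟩
      · exact ⟨hT, le_rfl⟩⟩ h)
    rw [hreim] at hz
    rcases hy with rfl | rfl
    · exact lt_irrefl _ hz.2.2.1
    · exact lt_irrefl _ hz.2.2.2
  have eτ := horiz_edge (κ := 1/2) (by norm_num : (-1:ℝ) ≤ 2) (fun x _ => hfa x τ h0) (hne τ (Or.inl rfl))
  have eT := horiz_edge (κ := 1/2) (by norm_num : (-1:ℝ) ≤ 2) (fun x _ => hfa x T (by linarith)) (hne T (Or.inr rfl))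
  have hnR : ∀ t, t0 < t → Real.log ‖f ((2 : ℝ) + t * I)‖ = (ψR t).re := by
    intro t ht; rw [← hR t ht, norm_exp, Real.log_exp]
  have hnL : ∀ t, t0 < t → Real.log ‖f ((-1 : ℝ) + t * I)‖ = (ψL t).re := by
    intro t ht; rw [← hL t ht, norm_exp, Real.log_exp]
  rw [hnR τ h0, hnL τ h0] at eτ
  rw [hnR T (by linarith), hnL T (by linarith)] at eT
  rw [vR, vL] at harg
  have hmem : ∀ t ∈ Set.uIcc τ T, t0 < t := by
    intro t ht; rw [Set.uIcc_of_le hT] at ht; linarith [ht.1]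
  have cR : ContinuousOn ψR (Set.uIcc τ T) := fun t ht => (hRd t (hmem t ht)).continuousAt.continuousWithinAt
  have cL : ContinuousOn ψL (Set.uIcc τ T) := fun t ht => (hLd t (hmem t ht)).continuousAt.continuousWithinAt
  have iR : ∫ t in τ..T, (ψR t).re = (∫ t in τ..T, ψR t).re :=
    intervalIntegral_re (μ := volume) (f := ψR) cR.intervalIntegrable
  have iL : ∫ t in τ..T, (ψL t).re = (∫ t in τ..T, ψL t).re :=
    intervalIntegral_re (μ := volume) (f := ψL) cL.intervalIntegrable
  have him := congrArg im harg
  have eS : (2 * Real.pi * I * ∑ ρ ∈ Z, ((analyticOrderAt f ρ).toNat : ℂ) * (ρ - ((1/2 : ℝ) : ℂ))).im =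
      2 * Real.pi * ∑ ρ ∈ Z, ((analyticOrderAt f ρ).toNat : ℝ) * (ρ.re - 1/2) := by
    have : (2 * Real.pi * I : ℂ) = ((2 * Real.pi : ℝ) : ℂ) * I := by push_cast; ring
    rw [this, mul_assoc, im_ofReal_mul, I_mul_im, re_sum]
    congr 1
    refine Finset.sum_congr rfl fun ρ _ => ?_
    have : (((analyticOrderAt f ρ).toNat : ℂ)) = (((analyticOrderAt f ρ).toNat : ℝ) : ℂ) := by push_cast; rfl
    rw [this, re_ofReal_mul, sub_re, ofReal_re]
  rw [eS] at him
  rw [← him, iR, iL]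
  simp only [add_im, sub_im, eτ, eT, mul_im, sub_re, add_re, mul_re, ofReal_re, ofReal_im, I_re, I_im]
  ring

end LerchAux

namespace LerchAux
open Complex MeasureTheory intervalIntegral Metric

lemma lerch_anal {lam alp : ℝ} {F : ℂ → ℂ} (hF : IsLerch lam alp F) {s : ℂ} (hs : s ≠ 1) :
    AnalyticAt ℂ F s := by
  have : DifferentiableOn ℂ F {1}ᶜ := fun z hz => (hF.1 z hz).differentiableWithinAt
  exact this.analyticAt (isOpen_compl_singleton.mem_nhds hs)

lemma lerch_right {lam alp : ℝ} (h0 : 0 < alp) {F : ℂ → ℂ} (hF : IsLerch lam alp F) {s : ℂ}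
    (hs : 1 + alp ≤ s.re) : F s ≠ 0 := by
  rw [hF.2 s (by linarith), lerchSeries_eq h0 lam (by linarith)]
  have h1 := norm_DD_lt h0 lam hs
  exact mul_ne_zero (by rw [Ne, cpow_eq_zero_iff]; push Not; intro h; exact absurd h (by exact_mod_cast h0.ne'))
    (slitPlane_ne_zero (one_add_mem h1))

lemma im_ne_one {s : ℂ} (hs : 0 < s.im) : s ≠ 1 := by rintro rfl; simp at hs

lemma lerch_order {lam alp : ℝ} (h0 : 0 < alp) {F : ℂ → ℂ} (hF : IsLerch lam alp F) {s : ℂ}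
    (hs : 0 < s.im) : analyticOrderAt F s ≠ ⊤ := by
  intro h
  rw [analyticOrderAt_eq_top] at h
  have hA : AnalyticOnNhd ℂ F {s : ℂ | 0 < s.im} := fun z hz => lerch_anal hF (im_ne_one hz)
  have := hA.eqOn_zero_of_preconnected_of_eventuallyEq_zero convex_im_pos.isPreconnected hs h
  have h2 := this (x := (1 + alp : ℝ) + (1 : ℝ) * I) (by simp)
  exact lerch_right h0 hF (s := (1 + alp : ℝ) + (1 : ℝ) * I) (by simp) h2

lemma lerch_box {lam alp : ℝ} (h0 : 0 < alp) {F : ℂ → ℂ} (hF : IsLerch lam alp F) {a b c d : ℝ}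
    (hc : 0 < c) : {z ∈ Set.Icc a b ×ℂ Set.Icc c d | F z = 0}.Finite := by
  refine finite_zeros (isCompact_Icc.reProdIm isCompact_Icc) (fun z hz => ?_) (fun z hz => ?_)
  · exact lerch_anal hF (im_ne_one (lt_of_lt_of_le hc hz.2.1))
  · exact lerch_order h0 hF (lt_of_lt_of_le hc hz.2.1)

lemma hline (x t : ℝ) : HasDerivAt (fun t : ℝ => (x + t * I : ℂ)) I t := by
  have := ((hasDerivAt_id t).ofReal_comp.mul_const I).const_add (x : ℂ)
  simpa using this

lemma DDline_diff {a : ℝ} (ha : 0 < a) (μ : ℝ) (t : ℝ) :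
    DifferentiableAt ℝ (fun t : ℝ => DD μ a (2 + t * I)) t := by
  have h1 := hline 2 t
  push_cast at h1
  exact (HasDerivAt.comp (h₂ := DD μ a) (h := fun t : ℝ => (2 + t * I : ℂ)) t
    (DD_diff ha μ (by simp)).hasDerivAt h1).differentiableAt

lemma logDDline_diff {a : ℝ} (ha : 0 < a) (ha1 : a ≤ 1) (μ : ℝ) (t : ℝ) :
    DifferentiableAt ℝ (fun t : ℝ => log (1 + DD μ a (2 + t * I))) t := by
  have h1 := (DDline_diff ha μ t).const_add 1
  exact (h1.hasDerivAt.clog_real (one_add_mem (norm_DD_lt ha μ (by simp; linarith)))).differentiableAt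

lemma psiR {lam alp : ℝ} (h0 : 0 < alp) (h1 : alp ≤ 1) {F : ℂ → ℂ} (hF : IsLerch lam alp F) :
    ∃ (ψ : ℝ → ℂ) (C : ℝ), (∀ t, exp (ψ t) = F ((2 : ℝ) + t * I)) ∧ (∀ t, DifferentiableAt ℝ ψ t) ∧
      (∀ t, |(ψ t).im + t * Real.log alp| ≤ C) ∧
      ∀ τ T, |(∫ t in τ..T, (ψ t).re) + 2 * Real.log alp * (T - τ)| ≤ C := by
  obtain ⟨C, hC⟩ := log_DD_integral h0 h1 lam
  set L : ℝ → ℂ := fun t => log (1 + DD lam alp (2 + t * I)) with hL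
  have hLd : ∀ t, DifferentiableAt ℝ L t := logDDline_diff h0 h1 lam
  have hLc : Continuous L := continuous_iff_continuousAt.2 fun t => (hLd t).continuousAt
  refine ⟨fun t => -(Real.log alp : ℂ) * (2 + t * I) + L t, max C Real.pi, ?_, ?_, ?_, ?_⟩
  · intro t
    have hn := norm_DD_lt h0 lam (s := 2 + t * I) (by simp; linarith)
    rw [exp_add, exp_log (slitPlane_ne_zero (one_add_mem hn)), hF.2 _ (by simp),
      lerchSeries_eq h0 lam (by simp), ofReal_cpow_exp h0]
    push_cast
    congr 2
    ring
  · intro t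
    have h2 := hline 2 t
    push_cast at h2
    exact (h2.differentiableAt.const_mul _).fun_add (hLd t)
  · intro t
    refine le_trans ?_ (le_max_right _ _)
    have : (-(Real.log alp : ℂ) * (2 + t * I) + L t).im + t * Real.log alp = (L t).im := by
      simp; ring
    rw [this, hL, log_im]
    exact abs_arg_le_pi _
  · intro τ T
    refine le_trans ?_ (le_max_left _ _)
    have e : ∀ t : ℝ, (-(Real.log alp : ℂ) * (2 + t * I) + L t).re = -2 * Real.log alp + (L t).re := by
      intro t; simp; ring
    simp only [e]
    have i2 : ∫ t in τ..T, (L t).re = (∫ t in τ..T, L t).re :=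
      intervalIntegral_re (μ := volume) (f := L) (hLc.intervalIntegrable _ _)
    have j1 : IntervalIntegrable (fun t => (L t).re) volume τ T := (continuous_re.comp hLc).intervalIntegrable _ _
    rw [integral_add (by simp) j1, i2]
    simp only [intervalIntegral.integral_const, smul_eq_mul]
    refine le_trans (le_of_eq ?_) ((abs_re_le_norm _).trans (hC τ T))
    congr 1; ring

lemma PL_diff (lam alp : ℝ) {t : ℝ} (ht : 0 < t) : DifferentiableAt ℝ (PL lam alp) t := by
  have h1 : DifferentiableAt ℝ (fun t : ℝ => -2 * Real.log (2 * Real.pi * lam) + 1/2 * Real.log (2 * Real.pi) + 3/2 * Real.log t) t :=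
    ((Real.differentiableAt_log ht.ne').const_mul _).const_add _
  have h2 : DifferentiableAt ℝ (fun t : ℝ => t * Real.log (2 * Real.pi * lam) + t - t * Real.log t + (Real.pi / 4 - 2 * Real.pi * alp * lam)) t := by
    have := Real.differentiableAt_log ht.ne'
    fun_prop (disch := exact ht.ne')
  have h3 := h1.hasDerivAt.ofReal_comp
  have h4 := h2.hasDerivAt.ofReal_comp.mul_const I
  exact (h3.add h4).differentiableAt

lemma psiL {lam alp : ℝ} (hl0 : 0 < lam) (hl1 : lam ≤ 1) (h0 : 0 < alp) (h1 : alp ≤ 1) {F : ℂ → ℂ}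
    (hF : IsLerch lam alp F) :
    ∃ (ψ : ℝ → ℂ) (C t0 : ℝ), 400 ≤ t0 ∧ (∀ t, t0 < t → exp (ψ t) = F ((-1 : ℝ) + t * I)) ∧
      (∀ t, t0 < t → DifferentiableAt ℝ ψ t) ∧
      (∀ t, t0 < t → |(ψ t).im - (t * Real.log (2 * Real.pi * lam) + t - t * Real.log t)| ≤ C) ∧
      ∀ τ T, t0 < τ → τ ≤ T → |(∫ t in τ..T, (ψ t).re) -
        ((-2 * Real.log (2 * Real.pi * lam) + 1/2 * Real.log (2 * Real.pi)) * (T - τ) +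
          3/2 * (T * Real.log T - T - (τ * Real.log τ - τ)))| ≤ C * (1 + Real.log T) := by
  obtain ⟨C1, hC1, hη⟩ := left_asym hl0 hl1 h0 h1 hF
  obtain ⟨C2, hC2⟩ := log_DD_integral hl0 hl1 (-alp)
  set L : ℝ → ℂ := fun t => log (1 + DD (-alp) lam (2 + (-t : ℝ) * I)) with hL
  have hLd : ∀ t, DifferentiableAt ℝ L t := by
    intro t
    exact DifferentiableAt.comp (f := fun t : ℝ => -t) (g := fun t : ℝ => log (1 + DD (-alp) lam (2 + t * I))) t
      (logDDline_diff hl0 hl1 (-alp) (-t)) differentiableAt_id.neg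
  have hn : ∀ t : ℝ, (1 + DD (-alp) lam (2 + (-t : ℝ) * I)) ≠ 0 := fun t =>
    slitPlane_ne_zero (one_add_mem (norm_DD_lt hl0 (-alp) (by simp; linarith)))
  set Q : ℝ → ℂ := fun t => F ((-1 : ℝ) + t * I) / (exp (PL lam alp t) * (1 + DD (-alp) lam (2 + (-t : ℝ) * I))) with hQ
  set t0 := max 400 (2 * C1) with ht0
  have hQ1 : ∀ t, t0 < t → ‖Q t - 1‖ ≤ C1 / t := by
    intro t ht
    have h4 : 400 ≤ t := (le_max_left _ _).trans ht.le
    obtain ⟨η, a, b⟩ := hη t h4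
    have : Q t = 1 + η := by
      rw [hQ]; simp only
      rw [b, mul_div_cancel_left₀ _ (mul_ne_zero (exp_ne_zero _) (hn t))]
    rw [this, add_sub_cancel_left]; exact a
  have hQ2 : ∀ t, t0 < t → ‖Q t - 1‖ ≤ 1/2 := by
    intro t ht
    refine (hQ1 t ht).trans ?_
    have h4 : 2 * C1 ≤ t := (le_max_right _ _).trans ht.le
    rw [div_le_iff₀ (by linarith)]; linarith
  have hQs : ∀ t, t0 < t → Q t ∈ slitPlane := by
    intro t ht
    have := one_add_mem (z := Q t - 1) (by linarith [hQ2 t ht])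
    simpa using this
  have hpos : ∀ t, t0 < t → 0 < t := fun t ht => by
    have := (le_max_left (400:ℝ) (2 * C1)).trans ht.le
    linarith
  have hQd : ∀ t, t0 < t → DifferentiableAt ℝ Q t := by
    intro t ht
    have a1 : DifferentiableAt ℝ (fun t : ℝ => F ((-1 : ℝ) + t * I)) t :=
      (HasDerivAt.comp (h₂ := F) (h := fun t : ℝ => ((-1 : ℝ) + t * I : ℂ)) t
        (hF.1 _ (im_ne_one (by simpa using hpos t ht))).hasDerivAt (hline (-1) t)).differentiableAt
    have a2 : DifferentiableAt ℝ (fun t : ℝ => exp (PL lam alp t)) t := (PL_diff lam alp (hpos t ht)).cexp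
    have a3 : DifferentiableAt ℝ (fun t : ℝ => 1 + DD (-alp) lam (2 + (-t : ℝ) * I)) t :=
      DifferentiableAt.comp (f := fun t : ℝ => -t) (g := fun t : ℝ => 1 + DD (-alp) lam (2 + t * I)) t
        ((DDline_diff hl0 (-alp) (-t)).const_add 1) differentiableAt_id.neg
    have := (a1.hasDerivAt.div (a2.fun_mul a3).hasDerivAt (mul_ne_zero (exp_ne_zero _) (hn t))).differentiableAt
    exact this
  have hlQ : ∀ t, t0 < t → ‖log (Q t)‖ ≤ 3/2 * (C1 / t) := by
    intro t ht
    have := norm_log_one_add_half_le_self (hQ2 t ht)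
    rw [add_sub_cancel] at this
    exact this.trans (by gcongr; exact hQ1 t ht)
  have hlQd : ∀ t, t0 < t → DifferentiableAt ℝ (fun t => log (Q t)) t := fun t ht =>
    ((hQd t ht).hasDerivAt.clog_real (hQs t ht)).differentiableAt
  set k := |Real.pi / 4 - 2 * Real.pi * alp * lam| with hk
  have hk0 : 0 ≤ k := abs_nonneg _
  have hC20 : 0 ≤ C2 := (norm_nonneg _).trans (hC2 0 0)
  refine ⟨fun t => PL lam alp t + L t + log (Q t), k + 2 * Real.pi + C2 + 3/2 * C1, t0, le_max_left _ _, ?_, ?_, ?_, ?_⟩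
  · intro t ht
    rw [exp_add, exp_add, exp_log (slitPlane_ne_zero (hQs t ht)), exp_log (hn t), hQ]
    simp only
    rw [mul_div_cancel₀ _ (mul_ne_zero (exp_ne_zero _) (hn t))]
  · intro t ht
    exact ((PL_diff lam alp (hpos t ht)).fun_add (hLd t)).fun_add (hlQd t ht)
  · intro t ht
    have e : (PL lam alp t + L t + log (Q t)).im - (t * Real.log (2 * Real.pi * lam) + t - t * Real.log t) =
        (Real.pi / 4 - 2 * Real.pi * alp * lam) + (L t).im + (log (Q t)).im := by
      unfold PL
      simp only [add_im, ofReal_im, im_ofReal_mul, I_im]; ring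
    rw [e]
    have b1 : |(L t).im| ≤ Real.pi := by rw [hL, log_im]; exact abs_arg_le_pi _
    have b2 : |(log (Q t)).im| ≤ Real.pi := by rw [log_im]; exact abs_arg_le_pi _
    have := abs_add_three (Real.pi / 4 - 2 * Real.pi * alp * lam) (L t).im (log (Q t)).im
    linarith
  · intro τ T hτ hT
    have hmem : ∀ t ∈ Set.uIcc τ T, t0 < t := by
      intro t ht; rw [Set.uIcc_of_le hT] at ht; linarith [ht.1]
    have hτ0 := hpos τ hτ
    have hT0 : 0 < T := by linarith
    have hτ1 : 1 ≤ τ := by have := (le_max_left (400:ℝ) (2 * C1)).trans hτ.le; linarith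
    have cL : ContinuousOn L (Set.uIcc τ T) := fun t _ => (hLd t).continuousAt.continuousWithinAt
    have cQ : ContinuousOn (fun t => log (Q t)) (Set.uIcc τ T) := fun t ht =>
      (hlQd t (hmem t ht)).continuousAt.continuousWithinAt
    have iL : ∫ t in τ..T, (L t).re = (∫ t in τ..T, L t).re :=
      intervalIntegral_re (μ := volume) (f := L) cL.intervalIntegrable
    have iQ : ∫ t in τ..T, (log (Q t)).re = (∫ t in τ..T, log (Q t)).re :=
      intervalIntegral_re (μ := volume) (f := fun t => log (Q t)) cQ.intervalIntegrable
    have e : ∀ t : ℝ, (PL lam alp t + L t + log (Q t)).re =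
      ((-2 * Real.log (2 * Real.pi * lam) + 1/2 * Real.log (2 * Real.pi)) + 3/2 * Real.log t) + (L t).re + (log (Q t)).re := by
      intro t
      unfold PL
      simp only [add_re, ofReal_re, re_ofReal_mul, I_re]; ring
    simp only [e]
    have j1 : IntervalIntegrable (fun t => (L t).re) volume τ T := (continuous_re.comp_continuousOn cL).intervalIntegrable
    have j2 : IntervalIntegrable (fun t => (log (Q t)).re) volume τ T := (continuous_re.comp_continuousOn cQ).intervalIntegrable
    have j4 : IntervalIntegrable (fun t => 3/2 * Real.log t) volume τ T := (intervalIntegrable_log').const_mul _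
    have j3 : IntervalIntegrable (fun t => ((-2 * Real.log (2 * Real.pi * lam) + 1/2 * Real.log (2 * Real.pi)) + 3/2 * Real.log t)) volume τ T :=
      IntervalIntegrable.add (by simp) j4
    rw [integral_add (j3.add j1) j2, integral_add j3 j1, integral_add (by simp) j4, iL, iQ,
      intervalIntegral.integral_const_mul, integral_log]
    simp only [intervalIntegral.integral_const, smul_eq_mul]
    have b1 : |(∫ t in τ..T, L t).re| ≤ C2 := by
      refine (abs_re_le_norm _).trans ?_
      have : ∫ t in τ..T, L t = ∫ y in (-T)..(-τ), log (1 + DD (-alp) lam (2 + y * I)) := by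
        rw [hL, integral_comp_neg (f := fun y : ℝ => log (1 + DD (-alp) lam (2 + y * I)))]
      rw [this]; exact hC2 _ _
    have b2 : |(∫ t in τ..T, log (Q t)).re| ≤ 3/2 * C1 * Real.log T := by
      refine (abs_re_le_norm _).trans ?_
      have hi : IntervalIntegrable (fun t : ℝ => 3/2 * (C1 / t)) volume τ T := by
        apply ContinuousOn.intervalIntegrable
        intro t ht
        have : t ≠ 0 := (hpos t (hmem t ht)).ne'
        exact (ContinuousAt.continuousWithinAt (by fun_prop (disch := assumption)))
      refine (norm_integral_le_of_norm_le hT (Filter.Eventually.of_forall fun t ht => hlQ t (by linarith [ht.1])) hi).trans ?_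
      have : ∀ t : ℝ, 3/2 * (C1 / t) = 3/2 * C1 * (1 / t) := by intro t; ring
      simp only [this]
      rw [intervalIntegral.integral_const_mul, integral_one_div_of_pos hτ0 hT0, Real.log_div hT0.ne' hτ0.ne']
      have : 0 ≤ Real.log τ := Real.log_nonneg hτ1
      have : 0 ≤ 3/2 * C1 := by positivity
      nlinarith
    have hlT : 0 ≤ Real.log T := Real.log_nonneg (by linarith)
    have hpi := Real.pi_pos
    have := abs_add_le (∫ t in τ..T, L t).re (∫ t in τ..T, log (Q t)).re
    refine le_trans (le_of_eq ?_) (this.trans (le_trans (add_le_add b1 b2) ?_))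
    · congr 1; ring
    · have p1 : 0 ≤ (k + 2 * Real.pi + C2) * Real.log T := by positivity
      nlinarith

end LerchAux

namespace LerchAux
open Complex MeasureTheory intervalIntegral Metric

lemma horiz_T {lam alp : ℝ} (hl0 : 0 < lam) (hl1 : lam ≤ 1) (h0 : 0 < alp) (h1 : alp ≤ 1) {F : ℂ → ℂ}
    (hF : IsLerch lam alp F) : ∃ C, 0 ≤ C ∧ ∀ T : ℝ, 400 ≤ T →
      (∀ s : ℂ, -2 ≤ s.re → s.re ≤ 6 → s.im = T → F s ≠ 0) →
      |∫ x in (-1:ℝ)..2, (x - 1/2) * (logDeriv F (x + T * I)).im| ≤ C * (1 + Real.log T) := by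
  obtain ⟨C, hC0, hC⟩ := lerch_growth hl0 hl1 h0 h1 hF
  set q := ∑' m, rr alp m ^ (1 + alp) with hq
  have hq1 : q < 1 := tsum_rr_lt h0
  have hδ : 0 < 1 - q := by linarith
  refine ⟨500 * (12 + |Real.log (C * 2 ^ 12 / (1 - q))| + 1), by positivity, fun T hT hz => ?_⟩
  set c : ℂ := (2 : ℝ) + T * I with hc
  have hcre : c.re = 2 := by simp [hc]
  have hcim : c.im = T := by simp [hc]
  have hT0 : 0 < T := by linarith
  have hball : ∀ s ∈ closedBall c 11, -11 ≤ s.re ∧ s.re ≤ 14 ∧ 40 ≤ s.im ∧ ‖s‖ ≤ 2 * T := by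
    intro s hs
    rw [mem_closedBall, dist_eq_norm] at hs
    have a1 := (abs_re_le_norm (s - c)).trans hs
    have a2 := (abs_im_le_norm (s - c)).trans hs
    rw [sub_re, hcre, abs_le] at a1
    rw [sub_im, hcim, abs_le] at a2
    have a3 : ‖c‖ ≤ 2 + T := by
      rw [hc]
      refine (norm_add_le _ _).trans ?_
      rw [norm_mul, norm_I, norm_real, norm_real, Real.norm_of_nonneg hT0.le]; norm_num
    have a4 : ‖s‖ ≤ ‖s - c‖ + ‖c‖ := by simpa using norm_add_le (s - c) c
    exact ⟨by linarith [a1.1], by linarith [a1.2], by linarith [a2.1], by linarith⟩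
  have hM : ∀ s ∈ closedBall c 11, ‖F s‖ ≤ C * (2 * T) ^ 12 := by
    intro s hs
    obtain ⟨b1, b2, b3, b4⟩ := hball s hs
    refine (hC s b1 b2 b3).trans ?_
    gcongr
  have hcn : 1 - q ≤ ‖F c‖ := by
    rw [hF.2 c (by rw [hcre]; norm_num), lerchSeries_eq h0 lam (by rw [hcre]; norm_num), norm_mul, norm_pw c h0, hcre]
    have b1 := norm_one_add_DD_ge h0 lam (s := c) (by rw [hcre]; linarith)
    have b2 : 1 ≤ alp ^ (-(2:ℝ)) := Real.one_le_rpow_of_pos_of_le_one_of_nonpos h0 h1 (by norm_num)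
    nlinarith [norm_nonneg (1 + DD lam alp c)]
  have hb := horiz_bound (f := F) (c := c) (κ := 1/2) hδ
    (fun s hs => lerch_anal hF (im_ne_one (by have := (hball s hs).2.2.1; linarith))) hM hcn
    (by
      intro s hs h him
      rw [mem_closedBall, dist_eq_norm] at hs
      have a1 := (abs_re_le_norm (s - c)).trans hs
      rw [sub_re, hcre, abs_le] at a1
      rw [hcim] at him
      exact hz s (by linarith [a1.1]) (by linarith [a1.2]) him h)
    (by
      intro σ hσ
      rw [hcre] at hσ
      rw [abs_le]; constructor <;> linarith [hσ.1, hσ.2])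
  rw [hcre, hcim, show (2:ℝ) - 3 = -1 by norm_num] at hb
  refine hb.trans ?_
  have e : Real.log (C * (2 * T) ^ 12 / (1 - q)) = Real.log (C * 2 ^ 12 / (1 - q)) + 12 * Real.log T := by
    rw [show C * (2 * T) ^ 12 / (1 - q) = (C * 2 ^ 12 / (1 - q)) * T ^ 12 by ring,
      Real.log_mul (by positivity) (by positivity), Real.log_pow]; norm_num
  rw [e]
  have hl : 0 ≤ Real.log T := Real.log_nonneg (by linarith)
  have := le_abs_self (Real.log (C * 2 ^ 12 / (1 - q)))
  have := mul_nonneg (abs_nonneg (Real.log (C * 2 ^ 12 / (1 - q)))) hl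
  nlinarith

lemma exists_generic {O : Set ℝ} (hO : O.Finite) (T : ℝ) : ∃ U, T < U ∧ U < T + 1 ∧ ∀ y ∈ O, T < y → U < y := by
  have h1 : (O ∩ Set.Ioi T).Finite := hO.inter_of_left _
  have h2 : (O ∩ Set.Ioi T)ᶜ ∈ nhds T := h1.isClosed.isOpen_compl.mem_nhds (by simp)
  obtain ⟨ε, hε, hb⟩ := Metric.mem_nhds_iff.1 h2
  have hm : 0 < min ε 1 := lt_min hε one_pos
  refine ⟨T + min ε 1 / 2, by linarith, by linarith [min_le_right ε 1], fun y hy hTy => ?_⟩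
  by_contra h
  push Not at h
  have : y ∈ ball T ε := by
    rw [mem_ball, Real.dist_eq, abs_of_pos (by linarith)]
    linarith [min_le_left ε 1]
  exact hb this ⟨hy, hTy⟩

/-- zeros in the upper half plane -/
def SU (alp : ℝ) (F : ℂ → ℂ) (τ T : ℝ) : Set ℂ :=
  {ρ : ℂ | F ρ = 0 ∧ -1 ≤ ρ.re ∧ ρ.re < 1 + alp ∧ τ < ρ.im ∧ ρ.im ≤ T}

lemma SU_finite {lam alp : ℝ} (h0 : 0 < alp) {F : ℂ → ℂ} (hF : IsLerch lam alp F) {τ T : ℝ} (hτ : 0 < τ) :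
    (SU alp F τ T).Finite := by
  refine (lerch_box h0 hF (a := -1) (b := 1 + alp) (c := τ) (d := T) hτ).subset ?_
  rintro ρ ⟨a, b, c, d, e⟩
  exact ⟨⟨⟨b, c.le⟩, ⟨d.le, e⟩⟩, a⟩

lemma upper_arith {CR CL CH K D L LU a1 a2 a3 a4 HU δ : ℝ} (hCR : 0 ≤ CR) (hCL : 0 ≤ CL) (hCH : 0 ≤ CH) (hL : 0 ≤ L)
    (hLU : LU ≤ 1 + L) (b1 : |a1| ≤ CR) (b2 : |a2| ≤ CL) (b3 : |a3| ≤ CR) (b4 : |a4| ≤ CL * (1 + LU))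
    (b5 : |HU| ≤ CH * (1 + LU)) (b6 : |δ| ≤ |D|) :
    |3/2 * (a1 + a2) - HU - a3 + a4 + K + δ| ≤ (5/2 * CR + 7/2 * CL + 2 * CH + |K| + |D|) * (1 + L) := by
  have hh : 1 + LU ≤ 2 * (1 + L) := by linarith
  have c4 : |a4| ≤ CL * (2 * (1 + L)) := b4.trans (mul_le_mul_of_nonneg_left hh hCL)
  have c5 : |HU| ≤ CH * (2 * (1 + L)) := b5.trans (mul_le_mul_of_nonneg_left hh hCH)
  have p1 : 0 ≤ (5/2 * CR + 3/2 * CL + |K| + |D|) * L := by positivity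
  have hk := abs_le.1 (le_refl |K|)
  rw [abs_le] at b1 b2 b3 c4 c5 b6 ⊢
  constructor <;> linarith

set_option maxHeartbeats 1000000 in
lemma upper {lam alp : ℝ} (hl0 : 0 < lam) (hl1 : lam ≤ 1) (h0 : 0 < alp) (h1 : alp ≤ 1) {F : ℂ → ℂ}
    (hF : IsLerch lam alp F) : ∃ τ1, ∀ τ2, τ1 ≤ τ2 → ∃ τ C, τ2 < τ ∧ ∀ T, τ ≤ T →
      |∑ᶠ ρ ∈ SU alp F τ T, ((analyticOrderAt F ρ).toNat : ℝ) * (ρ.re - 1/2) -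
        T / (4 * Real.pi) * (Real.log alp - Real.log lam)| ≤ C * (1 + Real.log T) := by
  obtain ⟨ψR, CR, hR, hRd, hRi, hRint⟩ := psiR h0 h1 hF
  obtain ⟨ψL, CL, t0, ht0, hL, hLd, hLi, hLint⟩ := psiL hl0 hl1 h0 h1 hF
  obtain ⟨CH, hCH0, hH⟩ := horiz_T hl0 hl1 h0 h1 hF
  refine ⟨t0, fun t1 ht1 => ?_⟩
  have hbox := lerch_box h0 hF (a := -2) (b := 6) (c := t1) (d := t1 + 1) (by linarith)
  obtain ⟨τ, hτ1, hτ2, hτ⟩ := exists_generic (hbox.image im) t1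
  have hτz : ∀ s : ℂ, -2 ≤ s.re → s.re ≤ 6 → s.im = τ → F s ≠ 0 := by
    intro s a b c h
    have := hτ s.im ⟨s, ⟨⟨⟨a, b⟩, ⟨by rw [c]; linarith, by rw [c]; linarith⟩⟩, h⟩, rfl⟩ (by rw [c]; linarith)
    linarith
  have hτ0 : t0 < τ := by linarith
  set ΔL := Real.log alp - Real.log lam with hΔ
  set l2 := Real.log (2 * Real.pi) with hl2
  have hlog : Real.log (2 * Real.pi * lam) = l2 + Real.log lam := Real.log_mul (by positivity) hl0.ne'
  set Xτ := 3/2 * ((ψR τ).im + (ψL τ).im) - ∫ x in (-1:ℝ)..2, (x - 1/2) * (logDeriv F (x + τ * I)).im with hX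
  set K := -Xτ - τ * (2 * Real.log alp - 2 * Real.log (2 * Real.pi * lam) + 1/2 * l2) - 3/2 * (τ * Real.log τ - τ) with hK
  have hCR0 : 0 ≤ CR := (abs_nonneg _).trans (hRi 0)
  have hCL0 : 0 ≤ CL := (abs_nonneg _).trans (hLi τ hτ0)
  refine ⟨τ, (5/2 * CR + 7/2 * CL + 2 * CH + |K| + |ΔL|), hτ1, fun T hT => ?_⟩
  have hboxT := lerch_box h0 hF (a := -2) (b := 6) (c := t1) (d := T + 1) (by linarith)
  obtain ⟨U, hU1, hU2, hU⟩ := exists_generic (hboxT.image im) T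
  have hUz : ∀ s : ℂ, -2 ≤ s.re → s.re ≤ 6 → T < s.im → s.im ≤ U → F s ≠ 0 := by
    intro s a b c d h
    have := hU s.im ⟨s, ⟨⟨⟨a, b⟩, ⟨by linarith, by linarith⟩⟩, h⟩, rfl⟩ c
    linarith
  have hfin := SU_finite (T := T) h0 hF (τ := τ) (by linarith)
  rw [finsum_mem_eq_finite_toFinset_sum _ hfin]
  have hU0 : t0 < U := by linarith
  have main := edge_main (f := F) (U := {s : ℂ | 0 < s.im}) hτ0 (by linarith : τ ≤ U) (fun t _ => hR t) (fun t _ => hRd t) hL hLd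
    (fun s hs => by rw [Set.mem_ofPred_eq]; linarith) (fun z hz => lerch_anal hF (im_ne_one hz)) hfin.toFinset
    (by
      intro ρ hρ
      rw [Set.Finite.mem_toFinset] at hρ
      obtain ⟨a, b, c, d, e⟩ := hρ
      refine ⟨lt_of_le_of_ne b fun h => ?_, by linarith, d, by linarith⟩
      have := hL ρ.im (by linarith)
      rw [show (((-1 : ℝ) : ℂ) + ρ.im * I) = ρ by apply Complex.ext <;> simp [← h], a] at this
      exact exp_ne_zero _ this)
    (by
      intro ρ hρ
      rw [Set.Finite.mem_toFinset] at hρ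
      exact lerch_order h0 hF (by linarith [hρ.2.2.2.1]))
    (by
      rintro s ⟨⟨a, b⟩, ⟨c, d⟩⟩ h
      rw [Set.Finite.mem_toFinset]
      refine ⟨h, a, ?_, ?_, ?_⟩
      · by_contra h'
        exact lerch_right h0 hF (not_lt.1 h') h
      · exact lt_of_le_of_ne c fun h' => hτz s (by linarith) (by linarith) h'.symm h
      · by_contra h'
        exact hUz s (by linarith) (by linarith) (not_le.1 h') d h)
  rw [← hX] at main
  set SS := ∑ ρ ∈ hfin.toFinset, ((analyticOrderAt F ρ).toNat : ℝ) * (ρ.re - 1/2) with hS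
  have b1 := hRi U
  have b2 := hLi U hU0
  have b3 := hRint τ U
  have b4 := hLint τ U hτ0 (by linarith)
  have b5 := hH U (by linarith) (fun s a b c => hUz s a b (by linarith) (by linarith))
  set HU := ∫ x in (-1:ℝ)..2, (x - 1/2) * (logDeriv F (x + U * I)).im with hHU
  set a1 := (ψR U).im + U * Real.log alp with ha1
  set a2 := (ψL U).im - (U * Real.log (2 * Real.pi * lam) + U - U * Real.log U) with ha2
  set a3 := (∫ t in τ..U, (ψR t).re) + 2 * Real.log alp * (U - τ) with ha3
  set a4 := (∫ t in τ..U, (ψL t).re) -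
        ((-2 * Real.log (2 * Real.pi * lam) + 1/2 * l2) * (U - τ) +
          3/2 * (U * Real.log U - U - (τ * Real.log τ - τ))) with ha4
  have key : 2 * Real.pi * SS - 1/2 * T * ΔL = 3/2 * (a1 + a2) - HU - a3 + a4 + K + 1/2 * (U - T) * ΔL := by
    rw [main, ha1, ha2, ha3, ha4, hK, hΔ, hlog]; ring
  have hT1 : 1 ≤ T := by linarith
  have hlT : 0 ≤ Real.log T := Real.log_nonneg hT1
  have hlU : Real.log U ≤ 1 + Real.log T := by
    have : Real.log U ≤ Real.log (2 * T) := Real.log_le_log (by linarith) (by linarith)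
    rw [Real.log_mul (by norm_num) (by linarith)] at this
    have := Real.log_two_lt_d9
    linarith
  have b6 : |1/2 * (U - T) * ΔL| ≤ |ΔL| := by
    rw [abs_mul]
    refine mul_le_of_le_one_left (abs_nonneg _) ?_
    rw [abs_le]; constructor <;> linarith
  have hbd : |2 * Real.pi * SS - 1/2 * T * ΔL| ≤ (5/2 * CR + 7/2 * CL + 2 * CH + |K| + |ΔL|) * (1 + Real.log T) := by
    rw [key]
    exact upper_arith hCR0 hCL0 hCH0 hlT hlU b1 b2 b3 b4 b5 b6
  have hpi := Real.pi_gt_three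
  have e : SS - T / (4 * Real.pi) * ΔL = (2 * Real.pi * SS - 1/2 * T * ΔL) / (2 * Real.pi) := by
    field_simp; ring
  rw [e, abs_div, abs_of_pos (by positivity : 0 < 2 * Real.pi)]
  refine (div_le_self (abs_nonneg _) (by linarith)).trans hbd

end LerchAux

namespace LerchAux
open Complex MeasureTheory intervalIntegral Metric

lemma lerch_order' {lam alp : ℝ} (h0 : 0 < alp) {F : ℂ → ℂ} (hF : IsLerch lam alp F) {s : ℂ}
    (hs : s ≠ 1) : analyticOrderAt F s ≠ ⊤ := by
  intro h
  rw [analyticOrderAt_eq_top] at h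
  have hA : AnalyticOnNhd ℂ F {1}ᶜ := fun z hz => lerch_anal hF hz
  have := hA.eqOn_zero_of_preconnected_of_eventuallyEq_zero
    (isConnected_compl_singleton_of_one_lt_rank (by simp) 1).isPreconnected hs h
  have h2 := this (x := (1 + alp : ℝ) + (1 : ℝ) * I) (by
    intro h
    have := congrArg im h
    simp at this)
  exact lerch_right h0 hF (s := (1 + alp : ℝ) + (1 : ℝ) * I) (by simp) h2

lemma ident_punct {f g : ℂ → ℂ}
    (hf : ∀ s : ℂ, s ≠ 1 → -1 < s.re → DifferentiableAt ℂ f s)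
    (hg : ∀ s : ℂ, s ≠ 1 → -1 < s.re → DifferentiableAt ℂ g s)
    (h : ∀ s : ℂ, 1 < s.re → f s = g s) :
    ∀ s : ℂ, s ≠ 1 → -1 < s.re → f s = g s := by
  have hU : ∀ s : ℂ, 0 < s.im → -1 < s.re → f s = g s :=
    ident_up (fun s a b => hf s (im_ne_one a) b) (fun s a b => hg s (im_ne_one a) b) (fun s _ b => h s b)
  have hne : ∀ s : ℂ, s.im < 0 → s ≠ 1 := by rintro s a rfl; simp at a
  have hne2 : ∀ s : ℂ, s.re < 1 → s ≠ 1 := by rintro s a rfl; simp at a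
  intro s hs1 hs2
  rcases lt_trichotomy s.im 0 with a | a | a
  · refine ident (V := {s : ℂ | s.im < 0} ∩ {s : ℂ | -1 < s.re})
      (W := {s : ℂ | s.im < 0} ∩ {s : ℂ | 1 < s.re})
      ((isOpen_lt continuous_im continuous_const).inter (isOpen_re_gt _))
      ((convex_halfSpace_im_lt 0).inter (convex_re_gt _))
      ((isOpen_lt continuous_im continuous_const).inter (isOpen_re_gt _))
      ⟨⟨2, -1⟩, by simp⟩ ?_ (fun s hs => hf s (hne s hs.1) hs.2) (fun s hs => hg s (hne s hs.1) hs.2)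
      (fun s hs => h s hs.2) s ⟨a, hs2⟩
    rintro z ⟨p, q⟩
    refine ⟨p, ?_⟩
    rw [Set.mem_ofPred_eq] at q ⊢
    linarith
  · rcases lt_trichotomy s.re 1 with b | b | b
    · refine ident (V := {s : ℂ | s.re < 1} ∩ {s : ℂ | -1 < s.re})
        (W := ({s : ℂ | s.re < 1} ∩ {s : ℂ | -1 < s.re}) ∩ {s : ℂ | 0 < s.im})
        ((isOpen_lt continuous_re continuous_const).inter (isOpen_re_gt _))
        ((convex_halfSpace_re_lt 1).inter (convex_re_gt _))
        (((isOpen_lt continuous_re continuous_const).inter (isOpen_re_gt _)).inter isOpen_im_pos)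
        ⟨⟨0, 1⟩, by simp⟩ Set.inter_subset_left (fun s hs => hf s (hne2 s hs.1) hs.2)
        (fun s hs => hg s (hne2 s hs.1) hs.2)
        (fun s hs => hU s hs.2 hs.1.2) s ⟨b, hs2⟩
    · exact absurd (Complex.ext (by simpa using b) (by simpa using a)) hs1
    · exact h s b
  · exact hU s a hs2

lemma near_one {lam alp : ℝ} (hl0 : 0 < lam) (hl1 : lam ≤ 1) (h0 : 0 < alp) (h1 : alp ≤ 1) {F : ℂ → ℂ}
    (hF : IsLerch lam alp F) : ∀ᶠ s in nhdsWithin (1 : ℂ) {1}ᶜ, F s ≠ 0 := by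
  have hre : ∀ᶠ s in nhdsWithin (1 : ℂ) {1}ᶜ, -1 < s.re := by
    refine (continuous_re.continuousAt.eventually (lt_mem_nhds ?_)).filter_mono nhdsWithin_le_nhds
    simp
  rcases eq_or_lt_of_le hl1 with rfl | h
  · have e := ident_punct (f := F) (g := HurwitzZeta.hurwitzZeta (alp : UnitAddCircle)) (fun s a _ => hF.1 s a)
      (fun s a _ => HurwitzZeta.differentiableAt_hurwitzZeta _ a) (by
        intro s hs
        rw [hF.2 s hs, ← (HurwitzZeta.hasSum_hurwitzZeta_of_one_lt_re (a := alp) ⟨h0.le, h1⟩ hs).tsum_eq]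
        unfold lerchSeries
        congr 1
        funext m
        congr 1
        rw [exp_eq_one_iff]
        exact ⟨m, by push_cast; ring⟩)
    have hres := HurwitzZeta.hurwitzZeta_residue_one (alp : UnitAddCircle)
    have := hres.eventually_ne (one_ne_zero)
    filter_upwards [this, hre, self_mem_nhdsWithin] with s a b c
    rw [e s c b]
    exact right_ne_zero_of_mul a
  · have e := ident_punct (f := F) (g := GG (exp (2 * Real.pi * I * lam)) alp) (fun s a _ => hF.1 s a)
      (fun s a b => GG_diff (norm_exp_one _) h0 b) (by
        intro s hs
        rw [hF.2 s hs, GG_eq h0 (exp_ne_one hl0 h) hs])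
    have hA : AnalyticAt ℂ (GG (exp (2 * Real.pi * I * lam)) alp) 1 := by
      have : DifferentiableOn ℂ (GG (exp (2 * Real.pi * I * lam)) alp) {s : ℂ | -1 < s.re} :=
        fun z hz => (GG_diff (norm_exp_one _) h0 hz).differentiableWithinAt
      refine this.analyticAt ((isOpen_re_gt _).mem_nhds ?_)
      rw [Set.mem_ofPred_eq]; simp
    rcases hA.eventually_eq_zero_or_eventually_ne_zero with hz | hz
    · exfalso
      have hz' : ∀ᶠ s in nhdsWithin (1 : ℂ) {1}ᶜ, ∀ᶠ w in nhds s, GG (exp (2 * Real.pi * I * lam)) alp w = 0 :=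
        hz.eventually_nhds.filter_mono nhdsWithin_le_nhds
      obtain ⟨s, a, b, c⟩ := (hz'.and (hre.and self_mem_nhdsWithin)).exists
      refine lerch_order' h0 hF c ?_
      rw [analyticOrderAt_eq_top]
      filter_upwards [a, (isOpen_re_gt (-1)).mem_nhds b, isOpen_compl_singleton.mem_nhds c] with w p q r
      rw [e w r q, p]
    · filter_upwards [hz, hre, self_mem_nhdsWithin] with s a b c
      rw [e s c b]; exact a

lemma mid_finite {lam alp : ℝ} (hl0 : 0 < lam) (hl1 : lam ≤ 1) (h0 : 0 < alp) (h1 : alp ≤ 1) {F : ℂ → ℂ}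
    (hF : IsLerch lam alp F) (c d : ℝ) :
    {z ∈ Set.Icc (-1) (1 + alp) ×ℂ Set.Icc c d | F z = 0}.Finite := by
  by_contra hinf
  obtain ⟨z, hzK, hz⟩ := Set.Infinite.exists_accPt_of_subset_isCompact
    (K := Set.Icc (-1) (1 + alp) ×ℂ Set.Icc c d) hinf
    (isCompact_Icc.reProdIm isCompact_Icc) (fun z hz => hz.1)
  rw [accPt_iff_frequently_nhdsNE] at hz
  have key : ∀ᶠ s in nhdsWithin z {z}ᶜ, F s ≠ 0 := by
    by_cases h : z = 1
    · subst h; exact near_one hl0 hl1 h0 h1 hF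
    · rcases (lerch_anal hF h).eventually_eq_zero_or_eventually_ne_zero with h' | h'
      · exact absurd (analyticOrderAt_eq_top.2 h') (lerch_order' h0 hF h)
      · exact h'
  exact hz (key.mono fun s hs h => hs h.2)

/-- the conjugate function -/
noncomputable def cj (F : ℂ → ℂ) : ℂ → ℂ := fun s => (starRingEnd ℂ) (F ((starRingEnd ℂ) s))

lemma cj_cj (F : ℂ → ℂ) : cj (cj F) = F := by
  funext s; simp [cj]

lemma cj_anal {F : ℂ → ℂ} {z : ℂ} (h : AnalyticAt ℂ F ((starRingEnd ℂ) z)) : AnalyticAt ℂ (cj F) z := by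
  rw [Complex.analyticAt_iff_eventually_differentiableAt] at h ⊢
  have := (continuous_conj.tendsto z).eventually h
  filter_upwards [this] with w hw
  have := hw.conj_conj
  rw [conj_conj] at this
  exact this

lemma cj_order {F : ℂ → ℂ} {z : ℂ} (h : AnalyticAt ℂ F ((starRingEnd ℂ) z)) (ht : analyticOrderAt F ((starRingEnd ℂ) z) ≠ ⊤) :
    analyticOrderAt (cj F) z = analyticOrderAt F ((starRingEnd ℂ) z) := by
  obtain ⟨n, hn⟩ := ENat.ne_top_iff_exists.1 ht
  rw [← hn, (cj_anal h).analyticOrderAt_eq_natCast]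
  obtain ⟨g, hg, hg0, hgz⟩ := h.analyticOrderAt_eq_natCast.1 hn.symm
  refine ⟨cj g, cj_anal hg, by simpa [cj] using hg0, ?_⟩
  have := (continuous_conj.tendsto z).eventually hgz
  filter_upwards [this] with w hw
  simp [cj, hw]

lemma cj_lerch {lam alp : ℝ} (h0 : 0 < alp) {F : ℂ → ℂ} (hF : IsLerch lam alp F) :
    IsLerch (1 - Int.fract lam) alp (cj F) := by
  constructor
  · intro s hs
    have : (starRingEnd ℂ) s ≠ 1 := by
      intro h; apply hs; rw [← conj_conj s, h]; simp
    have := (hF.1 _ this).conj_conj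
    rw [conj_conj] at this
    exact this
  · intro s hs
    have : cj F s = (starRingEnd ℂ) (lerchSeries lam alp ((starRingEnd ℂ) s)) := by
      rw [cj, hF.2 _ (by simpa using hs)]
    rw [this]
    unfold lerchSeries
    rw [conj_tsum]
    congr 1
    funext m
    rw [map_div₀]
    congr 1
    · rw [← exp_conj, exp_eq_exp_iff_exists_int]
      refine ⟨-(1 + ⌊lam⌋) * m, ?_⟩
      have : (lam : ℂ) = (⌊lam⌋ : ℂ) + (Int.fract lam : ℝ) := by
        exact_mod_cast (Int.floor_add_fract lam).symm
      simp only [map_mul, conj_ofReal, conj_I, map_natCast, map_ofNat]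
      push_cast
      rw [this]
      ring
    · have hr : ((m : ℂ) + alp) = ((m + alp : ℝ) : ℂ) := by push_cast; ring
      rw [hr, ← conj_cpow _ _ (by rw [arg_ofReal_of_nonneg (by positivity)]; exact Real.pi_pos.ne), conj_ofReal]

end LerchAux

namespace LerchAux
open Complex MeasureTheory intervalIntegral Metric

lemma split_set {alp : ℝ} {F : ℂ → ℂ} {τa τb T : ℝ} (ha : 0 < τa) (hb : 0 < τb) (hTa : τa ≤ T) (hTb : τb ≤ T) :
    {ρ : ℂ | F ρ = 0 ∧ -1 ≤ ρ.re ∧ ρ.re < 1 + alp ∧ |ρ.im| ≤ T} =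
      (SU alp F τa T ∪ {ρ : ℂ | F ρ = 0 ∧ -1 ≤ ρ.re ∧ ρ.re < 1 + alp ∧ -τb ≤ ρ.im ∧ ρ.im ≤ τa}) ∪
        (starRingEnd ℂ) '' SU alp (cj F) τb T := by
  ext ρ
  constructor
  · rintro ⟨p, q, r, s⟩
    rw [abs_le] at s
    by_cases h1 : τa < ρ.im
    · exact Or.inl (Or.inl ⟨p, q, r, h1, s.2⟩)
    · by_cases h2 : -τb ≤ ρ.im
      · exact Or.inl (Or.inr ⟨p, q, r, h2, not_lt.1 h1⟩)
      · refine Or.inr ⟨(starRingEnd ℂ) ρ, ⟨by simp [cj, p], by simpa using q, by simpa using r, ?_, ?_⟩, by simp⟩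
        · rw [conj_im]; linarith
        · rw [conj_im]; linarith [s.1]
  · rintro ((⟨p, q, r, s, t⟩ | ⟨p, q, r, s, t⟩) | ⟨w, ⟨p, q, r, s, t⟩, rfl⟩)
    · exact ⟨p, q, r, abs_le.2 ⟨by linarith, t⟩⟩
    · exact ⟨p, q, r, abs_le.2 ⟨by linarith, by linarith⟩⟩
    · refine ⟨by simpa [cj] using p, by simpa using q, by simpa using r, ?_⟩
      rw [conj_im, abs_neg, abs_le]
      exact ⟨by linarith, t⟩

lemma zeroOrder_eq {lam alp : ℝ} {F : ℂ → ℂ} (hF : IsLerch lam alp F) {s : ℂ} (hs : s ≠ 1) :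
    zeroOrder F s = (analyticOrderAt F s).toNat := by
  rw [zeroOrder, dif_pos (lerch_anal hF hs)]

lemma final {lam alp : ℝ} (hl0 : 0 < lam) (hl1 : lam ≤ 1) (h0 : 0 < alp) (h1 : alp ≤ 1) {F : ℂ → ℂ}
    (hF : IsLerch lam alp F) :
    (fun T : ℝ =>
        (∑ᶠ ρ ∈ {ρ : ℂ | F ρ = 0 ∧ -1 ≤ ρ.re ∧ ρ.re < 1 + alp ∧ |ρ.im| ≤ T},
          (zeroOrder F ρ : ℝ) * (ρ.re - 1 / 2))
        - T / (2 * Real.pi) * Real.log (alp / Real.sqrt (lam * (1 - Int.fract lam))))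
      =O[Filter.atTop] Real.log := by
  have hl0' : 0 < 1 - Int.fract lam := by linarith [Int.fract_lt_one lam]
  have hl1' : 1 - Int.fract lam ≤ 1 := by linarith [Int.fract_nonneg lam]
  have hF' := cj_lerch h0 hF
  obtain ⟨ta, hta⟩ := upper hl0 hl1 h0 h1 hF
  obtain ⟨tb, htb⟩ := upper hl0' hl1' h0 h1 hF'
  obtain ⟨τa, Ca, hτa, hA⟩ := hta (max ta 0) (le_max_left _ _)
  obtain ⟨τb, Cb, hτb, hB⟩ := htb (max tb 0) (le_max_left _ _)
  have ha0 : 0 < τa := (le_max_right _ _).trans_lt hτa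
  have hb0 : 0 < τb := (le_max_right _ _).trans_lt hτb
  set f : ℂ → ℝ := fun ρ => (zeroOrder F ρ : ℝ) * (ρ.re - 1 / 2) with hf
  set M : Set ℂ := {ρ : ℂ | F ρ = 0 ∧ -1 ≤ ρ.re ∧ ρ.re < 1 + alp ∧ -τb ≤ ρ.im ∧ ρ.im ≤ τa} with hM
  have hMfin : M.Finite := by
    refine (mid_finite hl0 hl1 h0 h1 hF (-τb) τa).subset ?_
    rintro ρ ⟨p, q, r, s, t⟩
    exact ⟨⟨⟨q, r.le⟩, ⟨s, t⟩⟩, p⟩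
  set m := ∑ᶠ ρ ∈ M, f ρ with hm
  have hlog : Real.log (alp / Real.sqrt (lam * (1 - Int.fract lam))) =
      1/2 * (Real.log alp - Real.log lam) + 1/2 * (Real.log alp - Real.log (1 - Int.fract lam)) := by
    rw [Real.log_div h0.ne' (Real.sqrt_pos.2 (mul_pos hl0 hl0')).ne', Real.log_sqrt (mul_pos hl0 hl0').le,
      Real.log_mul hl0.ne' hl0'.ne']
    ring
  refine Asymptotics.IsBigO.of_bound (2 * (|Ca| + |Cb|) + |m|) ?_
  filter_upwards [Filter.eventually_ge_atTop τa, Filter.eventually_ge_atTop τb,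
    Filter.eventually_ge_atTop (Real.exp 1)] with T hTa hTb hTe
  have hTL : 1 ≤ Real.log T := by
    rw [Real.le_log_iff_exp_le ((Real.exp_pos 1).trans_le hTe)]; exact hTe
  have hAf := SU_finite (T := T) h0 hF ha0
  have hBf := SU_finite (T := T) h0 hF' hb0
  have hsplit : ∑ᶠ ρ ∈ {ρ : ℂ | F ρ = 0 ∧ -1 ≤ ρ.re ∧ ρ.re < 1 + alp ∧ |ρ.im| ≤ T}, f ρ =
      (∑ᶠ ρ ∈ SU alp F τa T, ((analyticOrderAt F ρ).toNat : ℝ) * (ρ.re - 1/2) + m) +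
      ∑ᶠ ρ ∈ SU alp (cj F) τb T, ((analyticOrderAt (cj F) ρ).toNat : ℝ) * (ρ.re - 1/2) := by
    rw [split_set ha0 hb0 hTa hTb, finsum_mem_union _ (hAf.union hMfin) (hBf.image _),
      finsum_mem_union _ hAf hMfin, finsum_mem_image (starRingEnd ℂ).injective.injOn]
    · congr 1
      · congr 1
        refine finsum_mem_congr rfl fun ρ hρ => ?_
        rw [hf]; simp only
        rw [zeroOrder_eq hF (im_ne_one (ha0.trans hρ.2.2.2.1))]
      · refine finsum_mem_congr rfl fun ρ hρ => ?_
        have hne : (starRingEnd ℂ) ρ ≠ 1 := by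
          intro h
          have h2 := congrArg im h
          have h3 := hρ.2.2.2.1
          simp only [conj_im, one_im] at h2
          linarith
        rw [hf]; simp only
        rw [zeroOrder_eq hF hne, cj_order (lerch_anal hF hne) (lerch_order' h0 hF hne), conj_re]
    · rw [Set.disjoint_left]
      rintro ρ hρ hρ'
      exact absurd hρ.2.2.2.1 (not_lt.2 hρ'.2.2.2.2)
    · rw [Set.disjoint_left]
      rintro ρ hρ ⟨w, hw, rfl⟩
      have h3 := hw.2.2.2.1
      rcases hρ with hρ | hρ
      · have := hρ.2.2.2.1
        rw [conj_im] at this; linarith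
      · have := hρ.2.2.2.1
        rw [conj_im] at this; linarith
  change ‖(∑ᶠ ρ ∈ {ρ : ℂ | F ρ = 0 ∧ -1 ≤ ρ.re ∧ ρ.re < 1 + alp ∧ |ρ.im| ≤ T}, f ρ) -
    T / (2 * Real.pi) * Real.log (alp / Real.sqrt (lam * (1 - Int.fract lam)))‖ ≤ _
  rw [hsplit, hlog, Real.norm_eq_abs, Real.norm_eq_abs, abs_of_pos (by linarith : 0 < Real.log T)]
  have bA := hA T hTa
  have bB := hB T hTb
  set SA := ∑ᶠ ρ ∈ SU alp F τa T, ((analyticOrderAt F ρ).toNat : ℝ) * (ρ.re - 1/2)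
  set SB := ∑ᶠ ρ ∈ SU alp (cj F) τb T, ((analyticOrderAt (cj F) ρ).toNat : ℝ) * (ρ.re - 1/2)
  have e : SA + m + SB - T / (2 * Real.pi) * (1/2 * (Real.log alp - Real.log lam) + 1/2 * (Real.log alp - Real.log (1 - Int.fract lam)))
      = (SA - T / (4 * Real.pi) * (Real.log alp - Real.log lam)) +
        (SB - T / (4 * Real.pi) * (Real.log alp - Real.log (1 - Int.fract lam))) + m := by
    have := Real.pi_ne_zero
    field_simp; ring
  rw [e]
  refine (abs_add_three _ _ _).trans ?_
  have cA : Ca * (1 + Real.log T) ≤ |Ca| * (2 * Real.log T) :=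
    mul_le_mul (le_abs_self _) (by linarith) (by linarith) (abs_nonneg _)
  have cB : Cb * (1 + Real.log T) ≤ |Cb| * (2 * Real.log T) :=
    mul_le_mul (le_abs_self _) (by linarith) (by linarith) (abs_nonneg _)
  have cm : |m| * 1 ≤ |m| * Real.log T := mul_le_mul_of_nonneg_left hTL (abs_nonneg _)
  linarith

end LerchAux

/-- asymptotics for the sum of `β - 1/2` over the nontrivial zeros with
`|γ| ≤ T`. -/
theorem lerch_sum_of_zeros_both_halfplanes (lam alp : ℝ) (hlam0 : 0 < lam) (hlam1 : lam ≤ 1)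
    (halp0 : 0 < alp) (halp1 : alp ≤ 1) (F : ℂ → ℂ) (hF : IsLerch lam alp F) :
    (fun T : ℝ =>
        (∑ᶠ ρ ∈ {ρ : ℂ | F ρ = 0 ∧ -1 ≤ ρ.re ∧ ρ.re < 1 + alp ∧ |ρ.im| ≤ T},
          (zeroOrder F ρ : ℝ) * (ρ.re - 1 / 2))
        - T / (2 * Real.pi) * Real.log (alp / Real.sqrt (lam * (1 - Int.fract lam))))
      =O[Filter.atTop] Real.log := by
  exact LerchAux.final hlam0 hlam1 halp0 halp1 hF
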